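/- arXiv:0905.1045 — 9 statements merged into one kernel-verified Lean document; each statement's English description precedes it below -/
import Mathlib

section
/- Let Σ = {a_1, …, a_m} with pairwise distinct symbols a_i, and let G be a context-free grammar in Chomsky normal form over Σ such that every variable of G is useful and L(G) ⊆ a_1^* a_2^* ⋯ a_m^*. Then for each variable A of G there exists an index l with 1 ≤ l ≤ m such that for all terminal strings u, v with A ⇒* u A v one has u ∈ a_l^*; moreover, if there exists at least one such derivation A ⇒* u A v with u ≠ ε, then this index l is unique. Symmetrically, there exists an index r with 1 ≤ r ≤ m such that for all terminal strings u, v with A ⇒* u A v one has v ∈ a_r^*, and r is unique if some such derivation has v ≠ ε. -/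
/-- A context-free grammar is in Chomsky normal form if every rule has the form
`A → B C` (two nonterminals) or `A → a` (a single terminal). -/
def ContextFreeGrammar.IsCNF {T : Type} (g : ContextFreeGrammar T) : Prop :=
  ∀ r ∈ g.rules,
    (∃ B C : g.NT, r.output = [Symbol.nonterminal B, Symbol.nonterminal C]) ∨
    (∃ t : T, r.output = [Symbol.terminal t])

/-- A variable `A` is useful: `S ⇒* u A w` and `A ⇒* v` for some terminal strings. -/
def ContextFreeGrammar.IsUseful {T : Type} (g : ContextFreeGrammar T) (A : g.NT) : Prop :=
  (∃ u w : List T,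
    g.Derives [Symbol.nonterminal g.initial]
      (u.map Symbol.terminal ++ [Symbol.nonterminal A] ++ w.map Symbol.terminal)) ∧
  (∃ v : List T, g.Derives [Symbol.nonterminal A] (v.map Symbol.terminal))

/-- The letter-bounded language `a_1^* a_2^* ⋯ a_m^*`. -/
def letterBounded {T : Type} {m : ℕ} (a : Fin m → T) : Language T :=
  { z | ∃ k : Fin m → ℕ, z = (List.ofFn fun i : Fin m => List.replicate (k i) (a i)).flatten }

theorem letterBounded_sandwich {T : Type} {m : ℕ} (a : Fin m → T) (ha : Function.Injective a)
    {z : List T} (hz : z ∈ letterBounded a) :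
    (∀ c ∈ z, ∃ i, c = a i) ∧ ∀ c d : T, [c, d, c].Sublist z → c = d := by
  obtain ⟨k, rfl⟩ := hz
  have key : (List.ofFn fun i : Fin m => List.replicate (k i) (a i)).flatten
      = ((List.ofFn fun i : Fin m => List.replicate (k i) i).flatten).map a := by
    rw [List.map_flatten, List.map_ofFn]
    congr 2
    funext i
    simp
  have hs : ((List.ofFn fun i : Fin m => List.replicate (k i) i).flatten).Pairwise (· ≤ ·) := by
    rw [List.pairwise_flatten]
    constructor
    · intro l hl
      rw [List.mem_ofFn] at hl
      obtain ⟨i, rfl⟩ := hl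
      simp [List.pairwise_replicate]
    · rw [List.pairwise_ofFn]
      intro i j hij x hx y hy
      rw [List.eq_of_mem_replicate hx, List.eq_of_mem_replicate hy]
      exact hij.le
  rw [key]
  constructor
  · intro c hc
    obtain ⟨i, -, rfl⟩ := List.mem_map.1 hc
    exact ⟨i, rfl⟩
  · intro c d h
    obtain ⟨l, hl, he⟩ := List.sublist_map_iff.1 h
    have hp := hs.sublist hl
    match l, he, hp with
    | [x, y, w], he, hp =>
      simp only [List.map_cons, List.map_nil, List.cons.injEq, and_true] at he
      obtain ⟨h1, h2, h3⟩ := he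
      have hxw : x = w := ha (h1.symm.trans h3)
      subst hxw
      simp at hp
      have : x = y := le_antisymm hp.1 hp.2
      rw [h1, h2, this]
    | _ :: _ :: _ :: _ :: _, he, _ => simp at he

theorem derives_context {T : Type} (g : ContextFreeGrammar T) {s : List (Symbol T g.NT)}
    {A : g.NT} {u v : List T} {w : List (Symbol T g.NT)}
    (h1 : g.Derives s (u.map Symbol.terminal ++ [Symbol.nonterminal A] ++ v.map Symbol.terminal))
    (h2 : g.Derives [Symbol.nonterminal A] w) :
    g.Derives s (u.map Symbol.terminal ++ w ++ v.map Symbol.terminal) :=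
  h1.trans ((h2.append_left _).append_right _)

theorem derives_comp {T : Type} (g : ContextFreeGrammar T) {s : List (Symbol T g.NT)}
    {A : g.NT} {u v u' v' : List T}
    (h1 : g.Derives s (u.map Symbol.terminal ++ [Symbol.nonterminal A] ++ v.map Symbol.terminal))
    (h2 : g.Derives [Symbol.nonterminal A]
      (u'.map Symbol.terminal ++ [Symbol.nonterminal A] ++ v'.map Symbol.terminal)) :
    g.Derives s ((u ++ u').map Symbol.terminal ++ [Symbol.nonterminal A] ++
      (v' ++ v).map Symbol.terminal) := by
  have := derives_context g h1 h2
  simpa using this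

theorem triple_sublist {T : Type} {c d : T} {u u' : List T} (hc : c ∈ u) (hd : d ∈ u') :
    [c, d, c].Sublist (u ++ u' ++ u) := by
  have h1 := List.singleton_sublist.2 hc
  have h2 := List.singleton_sublist.2 hd
  simpa using (h1.append h2).append h1

theorem loop_letters {T : Type} {m : ℕ} (a : Fin m → T) (ha : Function.Injective a)
    (g : ContextFreeGrammar T) (huseful : ∀ A : g.NT, g.IsUseful A)
    (hbound : g.language ≤ letterBounded a) (A : g.NT) {u v u' v' : List T}
    (h1 : g.Derives [Symbol.nonterminal A]
      (u.map Symbol.terminal ++ [Symbol.nonterminal A] ++ v.map Symbol.terminal))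
    (h2 : g.Derives [Symbol.nonterminal A]
      (u'.map Symbol.terminal ++ [Symbol.nonterminal A] ++ v'.map Symbol.terminal)) :
    (∀ c ∈ u, ∃ i, c = a i) ∧ (∀ c ∈ v, ∃ i, c = a i) ∧
    (∀ c ∈ u, ∀ d ∈ u', c = d) ∧ (∀ c ∈ v, ∀ d ∈ v', c = d) := by
  obtain ⟨⟨x, y, hxy⟩, ⟨w, hw⟩⟩ := huseful A
  have h := derives_context g (derives_comp g (derives_comp g (derives_comp g hxy h1) h2) h1) hw
  have hz : (x ++ u ++ u' ++ u) ++ w ++ (v ++ (v' ++ (v ++ y))) ∈ g.language := by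
    rw [ContextFreeGrammar.mem_language_iff]
    simpa using h
  obtain ⟨r1, r2⟩ := letterBounded_sandwich a ha (hbound hz)
  refine ⟨fun c hc => r1 c (by simp [hc]), fun c hc => r1 c (by simp [hc]), ?_, ?_⟩
  · intro c hc d hd
    refine r2 c d ((triple_sublist hc hd).trans ?_)
    have : (x ++ u ++ u' ++ u) ++ w ++ (v ++ (v' ++ (v ++ y))) =
      x ++ (u ++ u' ++ u) ++ (w ++ (v ++ (v' ++ (v ++ y)))) := by simp
    rw [this]
    exact (List.sublist_append_right _ _).trans (List.sublist_append_left _ _)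
  · intro c hc d hd
    refine r2 c d ((triple_sublist hc hd).trans ?_)
    have : (x ++ u ++ u' ++ u) ++ w ++ (v ++ (v' ++ (v ++ y))) =
      ((x ++ u ++ u' ++ u) ++ w) ++ (v ++ v' ++ v) ++ y := by simp
    rw [this]
    exact (List.sublist_append_right _ _).trans (List.sublist_append_left _ _)

theorem stmt_0 {T : Type} {m : ℕ} (hm : 0 < m) (a : Fin m → T) (ha : Function.Injective a)
    (g : ContextFreeGrammar T) (hCNF : g.IsCNF) (huseful : ∀ A : g.NT, g.IsUseful A)
    (hbound : g.language ≤ letterBounded a) (A : g.NT) :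
    (∃ l : Fin m,
      (∀ u v : List T,
        g.Derives [Symbol.nonterminal A]
          (u.map Symbol.terminal ++ [Symbol.nonterminal A] ++ v.map Symbol.terminal) →
        ∀ c ∈ u, c = a l) ∧
      ((∃ u v : List T, u ≠ [] ∧
          g.Derives [Symbol.nonterminal A]
            (u.map Symbol.terminal ++ [Symbol.nonterminal A] ++ v.map Symbol.terminal)) →
        ∀ l' : Fin m,
          (∀ u v : List T,
            g.Derives [Symbol.nonterminal A]
              (u.map Symbol.terminal ++ [Symbol.nonterminal A] ++ v.map Symbol.terminal) →
            ∀ c ∈ u, c = a l') →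
          l' = l)) ∧
    (∃ r : Fin m,
      (∀ u v : List T,
        g.Derives [Symbol.nonterminal A]
          (u.map Symbol.terminal ++ [Symbol.nonterminal A] ++ v.map Symbol.terminal) →
        ∀ c ∈ v, c = a r) ∧
      ((∃ u v : List T, v ≠ [] ∧
          g.Derives [Symbol.nonterminal A]
            (u.map Symbol.terminal ++ [Symbol.nonterminal A] ++ v.map Symbol.terminal)) →
        ∀ r' : Fin m,
          (∀ u v : List T,
            g.Derives [Symbol.nonterminal A]
              (u.map Symbol.terminal ++ [Symbol.nonterminal A] ++ v.map Symbol.terminal) →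
            ∀ c ∈ v, c = a r') →
          r' = r)) := by
  constructor
  · by_cases hex : ∃ u v : List T, u ≠ [] ∧ g.Derives [Symbol.nonterminal A]
          (u.map Symbol.terminal ++ [Symbol.nonterminal A] ++ v.map Symbol.terminal)
    · obtain ⟨u, v, hne, h⟩ := hex
      obtain ⟨c, hc⟩ := List.exists_mem_of_ne_nil _ hne
      obtain ⟨l, rfl⟩ := (loop_letters a ha g huseful hbound A h h).1 c hc
      refine ⟨l, fun u' v' h' d hd => ?_, fun _ l' hl' => ha (hl' u v h _ hc).symm⟩
      exact ((loop_letters a ha g huseful hbound A h h').2.2.1 _ hc d hd).symm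
    · refine ⟨⟨0, hm⟩, fun u v h c hc => ?_, fun h => absurd h hex⟩
      exact absurd ⟨u, v, List.ne_nil_of_mem hc, h⟩ hex
  · by_cases hex : ∃ u v : List T, v ≠ [] ∧ g.Derives [Symbol.nonterminal A]
          (u.map Symbol.terminal ++ [Symbol.nonterminal A] ++ v.map Symbol.terminal)
    · obtain ⟨u, v, hne, h⟩ := hex
      obtain ⟨c, hc⟩ := List.exists_mem_of_ne_nil _ hne
      obtain ⟨l, rfl⟩ := (loop_letters a ha g huseful hbound A h h).2.1 c hc
      refine ⟨l, fun u' v' h' d hd => ?_, fun _ l' hl' => ha (hl' u v h _ hc).symm⟩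
      exact ((loop_letters a ha g huseful hbound A h h').2.2.2 _ hc d hd).symm
    · refine ⟨⟨0, hm⟩, fun u v h c hc => ?_, fun h => absurd h hex⟩
      exact absurd ⟨u, v, List.ne_nil_of_mem hc, h⟩ hex
end

section
/- Let Σ = {a_1, …, a_m} with pairwise distinct symbols a_i, and let G be a context-free grammar in Chomsky normal form over Σ such that every variable of G is useful and L(G) ⊆ a_1^* a_2^* ⋯ a_m^*. Let A and B be variables of G admitting derivations A ⇒* u A v with u ∈ a_{l_A}^+ and v ∈ a_{r_A}^+, and B ⇒* u' B v' with u' ∈ a_{l_B}^+ and v' ∈ a_{r_B}^+, for indices l_A, r_A, l_B, r_B ∈ {1, …, m}. Then: (i) if A ⇒* α B β for some sentential forms α, β, then l_A ≤ l_B ≤ r_B ≤ r_A; and (ii) if S ⇒* α A β B γ for some sentential forms α, β, γ (i.e., A occurs to the left of B in a sentential form derivable from the start symbol), then l_A ≤ r_A ≤ l_B ≤ r_B. -/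
/-- `A ⇒* u A v` where `u ∈ a_l^+` and `v ∈ a_r^+`. -/
def hasBorder {T : Type} {m : ℕ} (a : Fin m → T) (g : ContextFreeGrammar T) (A : g.NT)
    (l r : Fin m) : Prop :=
  ∃ u v : List T, u ≠ [] ∧ v ≠ [] ∧ (∀ c ∈ u, c = a l) ∧ (∀ c ∈ v, c = a r) ∧
    g.Derives [Symbol.nonterminal A]
      (u.map Symbol.terminal ++ [Symbol.nonterminal A] ++ v.map Symbol.terminal)

theorem aux_exists_word {T : Type} (g : ContextFreeGrammar T)
    (huseful : ∀ A : g.NT, g.IsUseful A) (s : List (Symbol T g.NT)) :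
    ∃ w : List T, g.Derives s (w.map Symbol.terminal) ∧
      ∀ l : List T, (l.map Symbol.terminal).Sublist s → l.Sublist w := by
  induction s with
  | nil =>
    refine ⟨[], ContextFreeGrammar.Derives.refl _, ?_⟩
    intro l hl
    simpa using hl
  | cons c s ih =>
    obtain ⟨w, hw, hl⟩ := ih
    cases c with
    | terminal t =>
      refine ⟨t :: w, by simpa using hw.append_left [Symbol.terminal t], ?_⟩
      intro l h
      cases l with
      | nil => simp
      | cons x l =>
        rw [List.map_cons, List.sublist_cons_iff] at h
        rcases h with h | ⟨r, h1, h2⟩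
        · exact (hl (x :: l) (by simpa using h)).cons t
        · simp only [List.cons.injEq, Symbol.terminal.injEq] at h1
          obtain ⟨rfl, rfl⟩ := h1
          exact (hl l h2).cons_cons x
    | nonterminal N =>
      obtain ⟨v, hv⟩ := (huseful N).2
      refine ⟨v ++ w, ?_, ?_⟩
      · rw [List.map_append]
        exact (hv.append_right s).trans (hw.append_left _)
      · intro l h
        rw [List.sublist_cons_iff] at h
        rcases h with h | ⟨r, h1, h2⟩
        · exact (hl l h).trans (List.sublist_append_right v w)
        · cases l <;> simp at h1

theorem aux_pairwise {T : Type} {m : ℕ} (a : Fin m → T) (ha : Function.Injective a)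
    (z : List T) (hz : z ∈ letterBounded a) :
    z.Pairwise (fun c d => ∀ i j, c = a i → d = a j → i ≤ j) := by
  obtain ⟨k, rfl⟩ := hz
  rw [List.pairwise_flatten]
  constructor
  · intro l hl
    rw [List.mem_ofFn] at hl
    obtain ⟨i, rfl⟩ := hl
    apply List.pairwise_replicate.2
    right
    intro x y hx hy
    exact (ha (hx.symm.trans hy)).le
  · rw [List.pairwise_ofFn]
    intro i j hij c hc d hd x y hx hy
    have h1 := List.eq_of_mem_replicate hc
    have h2 := List.eq_of_mem_replicate hd
    have e1 : i = x := ha (h1.symm.trans hx)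
    have e2 : j = y := ha (h2.symm.trans hy)
    subst e1 e2
    exact hij.le

theorem aux_four {T : Type} {m : ℕ} (a : Fin m → T) (ha : Function.Injective a)
    (g : ContextFreeGrammar T) (huseful : ∀ A : g.NT, g.IsUseful A)
    (hbound : g.language ≤ letterBounded a) (s : List (Symbol T g.NT))
    (hs : g.Derives [Symbol.nonterminal g.initial] s) (i j k l : Fin m)
    (h : ([a i, a j, a k, a l].map Symbol.terminal).Sublist s) :
    i ≤ j ∧ j ≤ k ∧ k ≤ l := by
  obtain ⟨w, hw, hl⟩ := aux_exists_word g huseful s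
  have hp := (aux_pairwise a ha w (hbound (hs.trans hw))).sublist (hl _ h)
  simp only [List.pairwise_cons, List.mem_cons] at hp
  obtain ⟨h1, h2, h3, -⟩ := hp
  exact ⟨h1 _ (Or.inl rfl) _ _ rfl rfl, h2 _ (Or.inl rfl) _ _ rfl rfl,
    h3 _ (Or.inl rfl) _ _ rfl rfl⟩

theorem aux_single {T N : Type} (u : List T) (c : T) (hu : u ≠ []) (h : ∀ d ∈ u, d = c) :
    [(Symbol.terminal c : Symbol T N)].Sublist (u.map Symbol.terminal) := by
  cases u with
  | nil => exact absurd rfl hu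
  | cons x u =>
    rw [List.singleton_sublist, ← h x (by simp)]
    simp

theorem aux_ctx {T : Type} (g : ContextFreeGrammar T) {x y z : List (Symbol T g.NT)} {A : g.NT}
    {p q : List (Symbol T g.NT)}
    (h : g.Derives x (p ++ [Symbol.nonterminal A] ++ q))
    (h' : g.Derives [Symbol.nonterminal A] y) (hz : p ++ y ++ q = z) : g.Derives x z := by
  subst hz
  exact h.trans ((h'.append_left p).append_right q)

theorem stmt_1 {T : Type} {m : ℕ} (hm : 0 < m) (a : Fin m → T) (ha : Function.Injective a)
    (g : ContextFreeGrammar T) (hCNF : g.IsCNF) (huseful : ∀ A : g.NT, g.IsUseful A)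
    (hbound : g.language ≤ letterBounded a)
    (A B : g.NT) (lA rA lB rB : Fin m)
    (hA : hasBorder a g A lA rA) (hB : hasBorder a g B lB rB) :
    (∀ α β : List (Symbol T g.NT),
      g.Derives [Symbol.nonterminal A] (α ++ [Symbol.nonterminal B] ++ β) →
      lA ≤ lB ∧ lB ≤ rB ∧ rB ≤ rA) ∧
    (∀ α β γ : List (Symbol T g.NT),
      g.Derives [Symbol.nonterminal g.initial]
        (α ++ [Symbol.nonterminal A] ++ β ++ [Symbol.nonterminal B] ++ γ) →
      lA ≤ rA ∧ rA ≤ lB ∧ lB ≤ rB) := by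
  obtain ⟨u, v, hu, hv, hu', hv', hd⟩ := hA
  obtain ⟨x, y, hx, hy, hx', hy', he⟩ := hB
  have su := aux_single (N := g.NT) u _ hu hu'
  have sv := aux_single (N := g.NT) v _ hv hv'
  have sx := aux_single (N := g.NT) x _ hx hx'
  have sy := aux_single (N := g.NT) y _ hy hy'
  constructor
  · intro α β h
    obtain ⟨p, q, hS⟩ := (huseful A).1
    have h1 := aux_ctx g hS hd rfl
    have h2 := aux_ctx g
      (p := p.map Symbol.terminal ++ u.map Symbol.terminal)
      (q := v.map Symbol.terminal ++ q.map Symbol.terminal) (by simpa using h1) h rfl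
    have h3 := aux_ctx g
      (p := p.map Symbol.terminal ++ u.map Symbol.terminal ++ α)
      (q := β ++ (v.map Symbol.terminal ++ q.map Symbol.terminal)) (by simpa using h2) he rfl
    refine aux_four a ha g huseful hbound _ h3 lA lB rB rA ?_
    have := ((((List.nil_sublist (p.map Symbol.terminal)).append su).append
      (List.nil_sublist α)).append ((sx.append
      (List.nil_sublist [Symbol.nonterminal B])).append sy)).append
      ((List.nil_sublist β).append (sv.append (List.nil_sublist (q.map Symbol.terminal))))
    simpa using this
  · intro α β γ h
    have h1 := aux_ctx g (p := α) (q := β ++ [Symbol.nonterminal B] ++ γ)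
      (by simpa using h) hd rfl
    have h2 := aux_ctx g
      (p := α ++ (u.map Symbol.terminal ++ [Symbol.nonterminal A] ++ v.map Symbol.terminal) ++ β)
      (q := γ) (by simpa using h1) he rfl
    refine aux_four a ha g huseful hbound _ h2 lA rA lB rB ?_
    have := ((((List.nil_sublist α).append ((su.append
      (List.nil_sublist [Symbol.nonterminal A])).append sv)).append
      (List.nil_sublist β)).append ((sx.append
      (List.nil_sublist [Symbol.nonterminal B])).append sy)).append (List.nil_sublist γ)
    simpa using this
end

section
/- Let G be a context-free grammar in Chomsky normal form with exactly h variables, and let z ∈ L(G) be a terminal string with |z| > 2^{h-1}. Then there exist a decomposition z = u v w x y with 0 < |v x| < 2^h and a variable A of G such that S ⇒* u A y, A ⇒* v A x, and A ⇒* w; in particular u w y ∈ L(G). -/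
/-- `CTree g n A w`: there is a parse tree of height `n` (leaves have height `0`). -/
inductive CTree {T : Type} (g : ContextFreeGrammar T) : ℕ → g.NT → List T → Prop
  | leaf (A : g.NT) (t : T) (h : (⟨A, [Symbol.terminal t]⟩ : ContextFreeRule T g.NT) ∈ g.rules) :
      CTree g 0 A [t]
  | node (A B C : g.NT) (m n : ℕ) (u v : List T)
      (h : (⟨A, [Symbol.nonterminal B, Symbol.nonterminal C]⟩ : ContextFreeRule T g.NT) ∈ g.rules)
      (hB : CTree g m B u) (hC : CTree g n C v) : CTree g (max m n + 1) A (u ++ v)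

/-- Parse forests for sentential forms. -/
inductive CForest {T : Type} (g : ContextFreeGrammar T) : List (Symbol T g.NT) → List T → Prop
  | nil : CForest g [] []
  | term (t : T) (s : List (Symbol T g.NT)) (w : List T) (h : CForest g s w) :
      CForest g (Symbol.terminal t :: s) (t :: w)
  | nonterm (A : g.NT) (n : ℕ) (u : List T) (s : List (Symbol T g.NT)) (w : List T)
      (hA : CTree g n A u) (h : CForest g s w) :
      CForest g (Symbol.nonterminal A :: s) (u ++ w)

theorem CForest.of_terminals {T : Type} (g : ContextFreeGrammar T) (w : List T) :
    CForest g (w.map Symbol.terminal) w := by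
  induction w with
  | nil => exact .nil
  | cons t w ih => exact .term t _ _ ih

theorem CForest.of_rewrites {T : Type} {g : ContextFreeGrammar T} (hCNF : g.IsCNF)
    {r : ContextFreeRule T g.NT} (hr : r ∈ g.rules) {a b : List (Symbol T g.NT)}
    (h : r.Rewrites a b) : ∀ w, CForest g b w → CForest g a w := by
  induction h with
  | head s =>
    intro w hw
    obtain ⟨A, out⟩ := r
    rcases hCNF _ hr with ⟨B, C, ho⟩ | ⟨t, ho⟩
    · simp only at ho
      subst ho
      simp only [List.cons_append, List.nil_append] at hw
      cases hw with
      | nonterm _ m u _ w' hB h =>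
        cases h with
        | nonterm _ n v _ w'' hC h =>
          rw [← List.append_assoc]
          exact .nonterm _ _ _ _ _ (.node _ _ _ _ _ _ _ hr hB hC) h
    · simp only at ho
      subst ho
      simp only [List.cons_append, List.nil_append] at hw
      cases hw with
      | term _ _ w' h =>
        exact .nonterm A 0 [t] _ _ (.leaf _ _ hr) h
  | cons x hrs ih =>
    intro w hw
    cases hw with
    | term t _ w' h => exact .term _ _ _ (ih _ h)
    | nonterm A n u _ w' hA h => exact .nonterm _ _ _ _ _ hA (ih _ h)

theorem CForest.of_derives {T : Type} {g : ContextFreeGrammar T} (hCNF : g.IsCNF)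
    {a : List (Symbol T g.NT)} {w : List T} (h : g.Derives a (w.map Symbol.terminal)) :
    CForest g a w := by
  induction h using Relation.ReflTransGen.head_induction_on with
  | refl => exact CForest.of_terminals g w
  | head h _ ih =>
    obtain ⟨r, hr, hrw⟩ := h
    exact CForest.of_rewrites hCNF hr hrw _ ih

theorem CTree.of_derives {T : Type} {g : ContextFreeGrammar T} (hCNF : g.IsCNF)
    {A : g.NT} {w : List T} (h : g.Derives [Symbol.nonterminal A] (w.map Symbol.terminal)) :
    ∃ n, CTree g n A w := by
  have hf := CForest.of_derives hCNF h
  clear h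
  cases hf with
  | nonterm _ n u _ w' hA hf' =>
    cases hf'
    exact ⟨n, by simpa using hA⟩

theorem CTree.length_pos {T : Type} {g : ContextFreeGrammar T} {n : ℕ} {A : g.NT} {w : List T}
    (h : CTree g n A w) : 0 < w.length := by
  induction h with
  | leaf => simp
  | node A B C m n u v h hB hC ihB ihC => simp only [List.length_append]; omega

theorem CTree.length_le {T : Type} {g : ContextFreeGrammar T} {n : ℕ} {A : g.NT} {w : List T}
    (h : CTree g n A w) : w.length ≤ 2 ^ n := by
  induction h with
  | leaf => simp
  | node A B C m n u v h hB hC ihB ihC =>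
    simp only [List.length_append, pow_succ]
    have h1 : 2 ^ m ≤ 2 ^ max m n := Nat.pow_le_pow_right (by norm_num) (le_max_left _ _)
    have h2 : 2 ^ n ≤ 2 ^ max m n := Nat.pow_le_pow_right (by norm_num) (le_max_right _ _)
    omega

theorem derives_rule {T : Type} {g : ContextFreeGrammar T} {A : g.NT} {o : List (Symbol T g.NT)}
    (h : (⟨A, o⟩ : ContextFreeRule T g.NT) ∈ g.rules) : g.Derives [Symbol.nonterminal A] o :=
  ContextFreeGrammar.Produces.single ⟨_, h, ContextFreeRule.Rewrites.input_output⟩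

theorem CTree.derives {T : Type} {g : ContextFreeGrammar T} {n : ℕ} {A : g.NT} {w : List T}
    (h : CTree g n A w) : g.Derives [Symbol.nonterminal A] (w.map Symbol.terminal) := by
  induction h with
  | leaf A t h => exact derives_rule h
  | node A B C m n u v h hB hC ihB ihC =>
    rw [List.map_append]
    exact (derives_rule h).trans ((ihB.append_right [Symbol.nonterminal C]).trans
      (ihC.append_left _))

/-- `CCtx g A z B w s`: `A` derives `v B x` with `z = v w x`; nonempty if `s`. -/
def CCtx {T : Type} (g : ContextFreeGrammar T) (A : g.NT) (z : List T) (B : g.NT) (w : List T)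
    (s : Prop) : Prop :=
  ∃ v x : List T, z = v ++ w ++ x ∧ (s → 0 < (v ++ x).length) ∧
    g.Derives [Symbol.nonterminal A]
      (v.map Symbol.terminal ++ [Symbol.nonterminal B] ++ x.map Symbol.terminal)

theorem CCtx.refl {T : Type} {g : ContextFreeGrammar T} (A : g.NT) (z : List T) (s : Prop)
    (hs : ¬ s) : CCtx g A z A z s :=
  ⟨[], [], by simp, fun h => absurd h hs, by simpa using ContextFreeGrammar.Derives.refl _⟩

theorem CCtx.trans {T : Type} {g : ContextFreeGrammar T} {A B C : g.NT} {z w w' : List T}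
    {s s' : Prop} (h : CCtx g A z B w True) (h' : CCtx g B w C w' s) : CCtx g A z C w' s' := by
  obtain ⟨v, x, rfl, hp, hd⟩ := h
  obtain ⟨v', x', rfl, -, hd'⟩ := h'
  refine ⟨v ++ v', x' ++ x, by simp, fun _ => ?_, ?_⟩
  · have := hp trivial
    simp only [List.length_append] at this ⊢
    omega
  · have := hd.trans ((hd'.append_left (v.map Symbol.terminal)).append_right
      (x.map Symbol.terminal))
    simpa using this

/-- From a tree of height `n` we obtain a chain of nested subtrees of heights `0, …, n`. -/
theorem CTree.chain {T : Type} {g : ContextFreeGrammar T} {n : ℕ} {A : g.NT} {z : List T}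
    (h : CTree g n A z) :
    ∃ (B : ℕ → g.NT) (wd : ℕ → List T), B n = A ∧ wd n = z ∧
      (∀ i ≤ n, CTree g i (B i) (wd i)) ∧
      ∀ i j, i ≤ j → j ≤ n → CCtx g (B j) (wd j) (B i) (wd i) (i < j) := by
  -- extending a chain by one step
  have ext : ∀ (k : ℕ) (A D : g.NT) (z w : List T), CTree g (k + 1) A z → CCtx g A z D w True →
      (∃ (B : ℕ → g.NT) (wd : ℕ → List T), B k = D ∧ wd k = w ∧
      (∀ i ≤ k, CTree g i (B i) (wd i)) ∧
      ∀ i j, i ≤ j → j ≤ k → CCtx g (B j) (wd j) (B i) (wd i) (i < j)) →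
      ∃ (B : ℕ → g.NT) (wd : ℕ → List T), B (k + 1) = A ∧ wd (k + 1) = z ∧
      (∀ i ≤ k + 1, CTree g i (B i) (wd i)) ∧
      ∀ i j, i ≤ j → j ≤ k + 1 → CCtx g (B j) (wd j) (B i) (wd i) (i < j) := by
    rintro k A D z w hA hc ⟨B, wd, rfl, rfl, ht, hcc⟩
    refine ⟨fun i => if i = k + 1 then A else B i, fun i => if i = k + 1 then z else wd i,
      by simp, by simp, ?_, ?_⟩
    · intro i hi
      by_cases h : i = k + 1
      · subst h; simpa using hA
      · simpa [h] using ht i (by omega)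
    · intro i j hij hj
      by_cases h : j = k + 1
      · by_cases h' : i = k + 1
        · subst h; subst h'
          exact CCtx.refl _ _ _ (by omega)
        · simp only [h, h', if_true, if_false]
          exact hc.trans (hcc i k (by omega) le_rfl)
      · have h' : i ≠ k + 1 := by omega
        simp only [h, h', if_false]
        exact hcc i j hij (by omega)
  induction h with
  | leaf A t h =>
    refine ⟨fun _ => A, fun _ => [t], rfl, rfl, ?_, ?_⟩
    · intro i hi
      obtain rfl : i = 0 := by omega
      exact .leaf A t h
    · intro i j hij hj
      exact CCtx.refl _ _ _ (by omega)
  | node A B C m n u v h hB hC ihB ihC =>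
    have hA := CTree.node A B C m n u v h hB hC
    rcases le_total n m with hmn | hmn
    · rw [max_eq_left hmn] at hA ⊢
      refine ext m A B _ u hA ⟨[], v, by simp, fun _ => by simpa using hC.length_pos, ?_⟩ ihB
      have := (derives_rule h).trans (hC.derives.append_left [Symbol.nonterminal B])
      simpa using this
    · rw [max_eq_right hmn] at hA ⊢
      refine ext n A C _ v hA ⟨u, [], by simp, fun _ => by simpa using hB.length_pos, ?_⟩ ihC
      have := (derives_rule h).trans (hB.derives.append_right [Symbol.nonterminal C])
      simpa using this

theorem stmt_2 {T : Type} (g : ContextFreeGrammar T) [Fintype g.NT] (hCNF : g.IsCNF)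
    (z : List T) (hz : z ∈ g.language)
    (hlen : 2 ^ (Fintype.card g.NT - 1) < z.length) :
    ∃ (u v w x y : List T) (A : g.NT),
      z = u ++ v ++ w ++ x ++ y ∧
      0 < (v ++ x).length ∧ (v ++ x).length < 2 ^ (Fintype.card g.NT) ∧
      g.Derives [Symbol.nonterminal g.initial]
        (u.map Symbol.terminal ++ [Symbol.nonterminal A] ++ y.map Symbol.terminal) ∧
      g.Derives [Symbol.nonterminal A]
        (v.map Symbol.terminal ++ [Symbol.nonterminal A] ++ x.map Symbol.terminal) ∧
      g.Derives [Symbol.nonterminal A] (w.map Symbol.terminal) ∧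
      (u ++ w ++ y) ∈ g.language := by
  obtain ⟨n, ht⟩ := CTree.of_derives hCNF hz
  have hn : Fintype.card g.NT ≤ n := by
    have h1 := lt_of_lt_of_le hlen ht.length_le
    have h2 := (Nat.pow_lt_pow_iff_right (by norm_num : 1 < 2)).1 h1
    omega
  obtain ⟨B, wd, hBn, hwn, hT, hC⟩ := ht.chain
  have key : ∃ i j : ℕ, i < j ∧ j ≤ Fintype.card g.NT ∧ B i = B j := by
    obtain ⟨a, b, hab, he⟩ := Fintype.exists_ne_map_eq_of_card_lt
      (fun i : Fin (Fintype.card g.NT + 1) => B i) (by simp)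
    rcases lt_or_gt_of_ne hab with h | h
    · exact ⟨a, b, h, by omega, he⟩
    · exact ⟨b, a, h, by omega, he.symm⟩
  obtain ⟨i, j, hij, hj, he⟩ := key
  obtain ⟨u, y, hz', -, hd1⟩ := hC j n (by omega) le_rfl
  obtain ⟨v, x, hw', hpos, hd2⟩ := hC i j hij.le (by omega)
  have hTi := hT i (by omega)
  rw [hBn] at hd1
  rw [hwn] at hz'
  rw [he] at hTi hd2
  refine ⟨u, v, wd i, x, y, B j, ?_, hpos hij, ?_, hd1, hd2, hTi.derives, ?_⟩
  · rw [hz', hw']; simp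
  · have h1 := (hT j (by omega)).length_le
    have h2 : 2 ^ j ≤ 2 ^ Fintype.card g.NT := Nat.pow_le_pow_right (by norm_num) hj
    have h3 := hTi.length_pos
    rw [hw'] at h1
    simp only [List.length_append] at h1 ⊢
    omega
  · rw [ContextFreeGrammar.mem_language_iff]
    have := hd1.trans ((hTi.derives.append_left (u.map Symbol.terminal)).append_right
      (y.map Symbol.terminal))
    simpa using this
end

section
/- Let Σ = {a_1, …, a_m} with pairwise distinct symbols a_i, and let G be a context-free grammar in Chomsky normal form over Σ with exactly h variables, every variable useful, and L(G) ⊆ a_1^* ⋯ a_m^*. Then for every z ∈ L(G) with |z| > 2^{h-1} there exist an integer k > 0 and strings z_0, z_1, …, z_k ∈ L(G) with z_k = z and 0 < |z_0| ≤ 2^{h-1}, such that for each i ∈ {1, …, k} there are a variable A_i of G, terminal strings u, w, y, v_i, x_i with z_{i-1} = u w y, z_i = u v_i w x_i y, 0 < |v_i x_i| < 2^h, S ⇒* u A_i y, A_i ⇒* v_i A_i x_i, and A_i ⇒* w; moreover there exist indices l_i ≤ r_i in {1, …, m} with v_i ∈ a_{l_i}^*, x_i ∈ a_{r_i}^*,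 such that l_i = r_i whenever v_i = ε or x_i = ε, and (l_1, r_1) ≤ (l_2, r_2) ≤ ⋯ ≤ (l_k, r_k) in the border order. -/
/-- The border order on pairs of indices:
`(l, r) ≤ (l', r')` iff `l < l'`, or `l = l'` and `r ≥ r'`. -/
def borderLE {m : ℕ} (p q : Fin m × Fin m) : Prop :=
  p.1 < q.1 ∨ (p.1 = q.1 ∧ q.2 ≤ p.2)


namespace Bd

/-- Derivation `A ⇒* v B x`. -/
def DC {T : Type} (g : ContextFreeGrammar T) (A : g.NT) (v : List T) (B : g.NT) (x : List T) : Prop :=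
  g.Derives [Symbol.nonterminal A]
    (v.map Symbol.terminal ++ [Symbol.nonterminal B] ++ x.map Symbol.terminal)

/-- Derivation `A ⇒* w`. -/
def DW {T : Type} (g : ContextFreeGrammar T) (A : g.NT) (w : List T) : Prop :=
  g.Derives [Symbol.nonterminal A] (w.map Symbol.terminal)

section der
variable {T : Type} {g : ContextFreeGrammar T}

lemma DC.refl (A : g.NT) : DC g A [] A [] := by
  simpa [DC] using ContextFreeGrammar.Derives.refl _

lemma DC.trans {A B C : g.NT} {v x v' x' : List T} (h : DC g A v B x) (h' : DC g B v' C x') :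
    DC g A (v ++ v') C (x' ++ x) := by
  have := (h'.append_left (v.map Symbol.terminal)).append_right (x.map Symbol.terminal)
  have := ContextFreeGrammar.Derives.trans h this
  simpa [DC] using this

lemma DC.word {A B : g.NT} {v x w : List T} (h : DC g A v B x) (h' : DW g B w) :
    DW g A (v ++ w ++ x) := by
  have := (h'.append_left (v.map Symbol.terminal)).append_right (x.map Symbol.terminal)
  have := ContextFreeGrammar.Derives.trans h this
  simpa [DW] using this

lemma der_rule {A : g.NT} {o : List (Symbol T g.NT)} (h : (⟨A, o⟩ : ContextFreeRule T g.NT) ∈ g.rules) :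
    g.Derives [Symbol.nonterminal A] o :=
  ContextFreeGrammar.Produces.single ⟨_, h, ContextFreeRule.Rewrites.input_output⟩

lemma DC.ofL {A B C : g.NT} {w : List T}
    (h : (⟨A, [Symbol.nonterminal B, Symbol.nonterminal C]⟩ : ContextFreeRule T g.NT) ∈ g.rules)
    (hw : DW g B w) : DC g A w C [] := by
  have h1 := hw.append_right [Symbol.nonterminal C]
  have := ContextFreeGrammar.Derives.trans (der_rule h) h1
  simpa [DC] using this

lemma DC.ofR {A B C : g.NT} {w : List T}
    (h : (⟨A, [Symbol.nonterminal B, Symbol.nonterminal C]⟩ : ContextFreeRule T g.NT) ∈ g.rules)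
    (hw : DW g C w) : DC g A [] B w := by
  have h1 := hw.append_left [Symbol.nonterminal B]
  have := ContextFreeGrammar.Derives.trans (der_rule h) h1
  simpa [DC] using this

end der

/-- Parse trees. -/
inductive PT (N T : Type) : Type
  | leaf : N → T → PT N T
  | node : N → PT N T → PT N T → PT N T

/-- Context frames: `fl A t` has left sibling `t`, `fr A t` has right sibling `t`. -/
inductive Frame (N T : Type) : Type
  | fl : N → PT N T → Frame N T
  | fr : N → PT N T → Frame N T

section tree
variable {N T : Type}

def PT.root : PT N T → N
  | .leaf A _ => A
  | .node A _ _ => A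

def PT.yield : PT N T → List T
  | .leaf _ t => [t]
  | .node _ l r => l.yield ++ r.yield

def PT.vars : PT N T → Set N
  | .leaf A _ => {A}
  | .node A l r => insert A (l.vars ∪ r.vars)

def Frame.lab : Frame N T → N
  | .fl A _ => A
  | .fr A _ => A

def Frame.sib : Frame N T → PT N T
  | .fl _ t => t
  | .fr _ t => t

def Frame.lv : Frame N T → List T
  | .fl _ t => t.yield
  | .fr _ _ => []

def Frame.rv : Frame N T → List T
  | .fl _ _ => []
  | .fr _ t => t.yield

def lv : List (Frame N T) → List T
  | [] => []
  | f :: c => f.lv ++ lv c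

def rv : List (Frame N T) → List T
  | [] => []
  | f :: c => rv c ++ f.rv

def cvars : List (Frame N T) → Set N
  | [] => ∅
  | f :: c => insert f.lab (f.sib.vars ∪ cvars c)

def fill : List (Frame N T) → PT N T → PT N T
  | [], s => s
  | .fl A t :: c, s => .node A t (fill c s)
  | .fr A t :: c, s => .node A (fill c s) t

@[simp] lemma lv_append (c d : List (Frame N T)) : lv (c ++ d) = lv c ++ lv d := by
  induction c with
  | nil => rfl
  | cons f c ih => simp [lv, ih]

@[simp] lemma rv_append (c d : List (Frame N T)) : rv (c ++ d) = rv d ++ rv c := by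
  induction c with
  | nil => simp [rv]
  | cons f c ih => simp [rv, ih]

@[simp] lemma cvars_append (c d : List (Frame N T)) : cvars (c ++ d) = cvars c ∪ cvars d := by
  induction c with
  | nil => simp [cvars]
  | cons f c ih => simp [cvars, ih, Set.union_assoc, Set.insert_union]

@[simp] lemma fill_append (c d : List (Frame N T)) (s : PT N T) :
    fill (c ++ d) s = fill c (fill d s) := by
  induction c with
  | nil => rfl
  | cons f c ih => cases f <;> simp [fill, ih]

@[simp] lemma yield_fill (c : List (Frame N T)) (s : PT N T) :
    (fill c s).yield = lv c ++ s.yield ++ rv c := by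
  induction c with
  | nil => simp [fill, lv, rv]
  | cons f c ih => cases f <;> simp [fill, ih, PT.yield, lv, rv, Frame.lv, Frame.rv]

@[simp] lemma vars_fill (c : List (Frame N T)) (s : PT N T) :
    (fill c s).vars = cvars c ∪ s.vars := by
  induction c with
  | nil => simp [fill, cvars]
  | cons f c ih =>
    cases f <;> simp [fill, ih, PT.vars, cvars, Frame.lab, Frame.sib] <;>
    · ext; simp; tauto

lemma root_mem_vars (t : PT N T) : t.root ∈ t.vars := by
  cases t <;> simp [PT.root, PT.vars]

lemma yield_ne (t : PT N T) : t.yield ≠ [] := by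
  induction t with
  | leaf => simp [PT.yield]
  | node A l r h1 h2 => simp [PT.yield, h1]

/-- A variable of a tree can be exposed. -/
lemma exists_fill {t : PT N T} {D : N} (h : D ∈ t.vars) :
    ∃ c s, t = fill c s ∧ s.root = D := by
  induction t with
  | leaf A a =>
    simp [PT.vars] at h
    exact ⟨[], _, rfl, by simp [PT.root, h]⟩
  | node A l r h1 h2 =>
    simp [PT.vars] at h
    rcases h with h | h | h
    · exact ⟨[], _, rfl, by simp [PT.root, h]⟩
    · obtain ⟨c, s, hc, hs⟩ := h1 h
      exact ⟨.fr A r :: c, s, by simp [fill, hc], hs⟩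
    · obtain ⟨c, s, hc, hs⟩ := h2 h
      exact ⟨.fl A l :: c, s, by simp [fill, hc], hs⟩

lemma mem_cvars {c : List (Frame N T)} {D : N} (h : D ∈ cvars c) :
    ∃ c1 f c2, c = c1 ++ f :: c2 ∧ (f.lab = D ∨ D ∈ f.sib.vars) := by
  induction c with
  | nil => simp [cvars] at h
  | cons f c ih =>
    simp [cvars] at h
    rcases h with h | h | h
    · exact ⟨[], f, c, rfl, Or.inl h.symm⟩
    · exact ⟨[], f, c, rfl, Or.inr h⟩
    · obtain ⟨c1, f', c2, h1, h2⟩ := ih h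
      exact ⟨f :: c1, f', c2, by simp [h1], h2⟩

lemma head_mem_cvars {f : Frame N T} {c : List (Frame N T)} (h : f ∈ c) : f.lab ∈ cvars c := by
  induction c with
  | nil => simp at h
  | cons f' c ih =>
    simp at h
    rcases h with h | h
    · simp [cvars, h]
    · simp [cvars, ih h]

lemma lvrv_ne {c : List (Frame N T)} (h : c ≠ []) : lv c ++ rv c ≠ [] := by
  cases c with
  | nil => simp at h
  | cons f c => cases f <;> simp [lv, rv, Frame.lv, Frame.rv, yield_ne]

/-- Repetition-free trees with path variables in `F`. -/
def RF [DecidableEq N] : Finset N → PT N T → Prop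
  | F, .leaf A _ => A ∈ F
  | F, .node A l r => A ∈ F ∧ RF (F \ {A}) l ∧ RF (F \ {A}) r

variable [DecidableEq N]

lemma RF.root {F : Finset N} {t : PT N T} (h : RF F t) : t.root ∈ F := by
  cases t with
  | leaf => exact h
  | node => exact h.1

lemma RF.mono {F G : Finset N} {t : PT N T} (h : RF F t) (hFG : F ⊆ G) : RF G t := by
  induction t generalizing F G with
  | leaf => exact hFG h
  | node A l r h1 h2 =>
    exact ⟨hFG h.1, h1 h.2.1 (Finset.sdiff_subset_sdiff hFG le_rfl),
      h2 h.2.2 (Finset.sdiff_subset_sdiff hFG le_rfl)⟩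

lemma RF.avoid {F K : Finset N} {t : PT N T} (h : RF F t) (hK : ∀ A ∈ t.vars, A ∉ K) :
    RF (F \ K) t := by
  induction t generalizing F with
  | leaf A a => exact Finset.mem_sdiff.2 ⟨h, hK _ (by simp [PT.vars])⟩
  | node A l r h1 h2 =>
    refine ⟨Finset.mem_sdiff.2 ⟨h.1, hK _ (by simp [PT.vars])⟩, ?_, ?_⟩
    · exact (h1 h.2.1 (fun B hB => hK _ (by simp [PT.vars, hB]))).mono (by
        intro x; simp; tauto)
    · exact (h2 h.2.2 (fun B hB => hK _ (by simp [PT.vars, hB]))).mono (by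
        intro x; simp; tauto)

lemma RF.card {F : Finset N} {t : PT N T} (h : RF F t) : t.yield.length ≤ 2 ^ (F.card - 1) := by
  induction t generalizing F with
  | leaf A a => simpa [PT.yield] using Nat.one_le_two_pow
  | node A l r h1 h2 =>
    have e1 := h1 h.2.1
    have e2 := h2 h.2.2
    have hc : (F \ {A}).card = F.card - 1 := by
      rw [Finset.card_sdiff_of_subset (by simpa using h.1)]; simp
    have hp : 0 < (F \ {A}).card := Finset.card_pos.2 ⟨_, h.2.1.root⟩
    rw [hc] at e1 e2 hp
    have : F.card - 1 = (F.card - 1 - 1) + 1 := by omega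
    rw [this, pow_succ]
    simp [PT.yield]
    omega

lemma RF.expose {F : Finset N} {t : PT N T} {D : N} (h : RF F t) (hD : D ∈ t.vars) :
    ∃ c s, t = fill c s ∧ s.root = D ∧ (c.map Frame.lab).Nodup ∧
      (∀ f ∈ c, f.lab ≠ D ∧ f.lab ∈ F ∧ RF F f.sib) := by
  induction t generalizing F with
  | leaf A a =>
    simp [PT.vars] at hD
    exact ⟨[], _, rfl, by simp [PT.root, hD], by simp, by simp⟩
  | node A l r h1 h2 =>
    by_cases hA : D = A
    · exact ⟨[], _, rfl, by simp [PT.root, hA], by simp, by simp⟩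
    simp [PT.vars, hA] at hD
    have hs : F \ {A} ⊆ F := Finset.sdiff_subset
    rcases hD with hD | hD
    · obtain ⟨c, s, hc, hr, hn, hf⟩ := h1 h.2.1 hD
      refine ⟨.fr A r :: c, s, by simp [fill, hc], hr, ?_, ?_⟩
      · simp only [List.map_cons, List.nodup_cons, hn, and_true]
        intro hm
        obtain ⟨f, hfc, hfe⟩ := List.mem_map.1 hm
        have := (hf f hfc).2.1
        rw [hfe] at this
        simp [Frame.lab] at this
      · intro f hfm
        simp at hfm
        rcases hfm with rfl | hfm
        · exact ⟨fun e => hA e.symm, h.1, h.2.2.mono hs⟩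
        · exact ⟨(hf f hfm).1, hs (hf f hfm).2.1, (hf f hfm).2.2.mono hs⟩
    · obtain ⟨c, s, hc, hr, hn, hf⟩ := h2 h.2.2 hD
      refine ⟨.fl A l :: c, s, by simp [fill, hc], hr, ?_, ?_⟩
      · simp only [List.map_cons, List.nodup_cons, hn, and_true]
        intro hm
        obtain ⟨f, hfc, hfe⟩ := List.mem_map.1 hm
        have := (hf f hfc).2.1
        rw [hfe] at this
        simp [Frame.lab] at this
      · intro f hfm
        simp at hfm
        rcases hfm with rfl | hfm
        · exact ⟨fun e => hA e.symm, h.1, h.2.1.mono hs⟩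
        · exact ⟨(hf f hfm).1, hs (hf f hfm).2.1, (hf f hfm).2.2.mono hs⟩

/-- Extraction of an elementary cycle. -/
lemma extract [Fintype N] (t : PT N T) (h : ¬ RF Finset.univ t) :
    ∃ c p s, t = fill c (fill p s) ∧ p ≠ [] ∧ (fill p s).root = s.root ∧
      (p.map Frame.lab).Nodup ∧ (∀ f ∈ p, RF Finset.univ f.sib) ∧
      (fill p s).yield.length ≤ 2 ^ Fintype.card N := by
  induction t with
  | leaf A a => simp [RF] at h
  | node A l r h1 h2 =>
    by_cases hl : RF Finset.univ l
    swap
    · obtain ⟨c, p, s, e, h'⟩ := h1 hl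
      exact ⟨.fr A r :: c, p, s, by simp [fill, e], h'⟩
    by_cases hr : RF Finset.univ r
    swap
    · obtain ⟨c, p, s, e, h'⟩ := h2 hr
      exact ⟨.fl A l :: c, p, s, by simp [fill, e], h'⟩
    have hpos : 0 < Fintype.card N := Fintype.card_pos_iff.2 ⟨A⟩
    have hlen : (PT.node A l r).yield.length ≤ 2 ^ Fintype.card N := by
      have e1 := hl.card
      have e2 := hr.card
      rw [Finset.card_univ] at e1 e2
      have : Fintype.card N = (Fintype.card N - 1) + 1 := by omega
      rw [this, pow_succ]
      simp only [PT.yield, List.length_append]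
      omega
    have hA : A ∈ l.vars ∨ A ∈ r.vars := by
      by_contra hcon
      push Not at hcon
      apply h
      refine ⟨by simp, hl.avoid ?_, hr.avoid ?_⟩
      · intro B hB; simp; rintro rfl; exact hcon.1 hB
      · intro B hB; simp; rintro rfl; exact hcon.2 hB
    rcases hA with hA | hA
    · obtain ⟨c, s, hc, hrt, hn, hf⟩ := hl.expose hA
      have e : PT.node A l r = fill (.fr A r :: c) s := by simp [fill, hc]
      refine ⟨[], .fr A r :: c, s, e, by simp, by rw [hrt]; rfl, ?_, ?_, e ▸ hlen⟩
      · simp only [List.map_cons, List.nodup_cons, hn, and_true]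
        intro hm
        obtain ⟨f, hfc, hfe⟩ := List.mem_map.1 hm
        exact (hf f hfc).1 hfe
      · intro f hfm
        simp at hfm
        rcases hfm with rfl | hfm
        · exact hr
        · exact (hf f hfm).2.2
    · obtain ⟨c, s, hc, hrt, hn, hf⟩ := hr.expose hA
      have e : PT.node A l r = fill (.fl A l :: c) s := by simp [fill, hc]
      refine ⟨[], .fl A l :: c, s, e, by simp, by rw [hrt]; rfl, ?_, ?_, e ▸ hlen⟩
      · simp only [List.map_cons, List.nodup_cons, hn, and_true]
        intro hm
        obtain ⟨f, hfc, hfe⟩ := List.mem_map.1 hm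
        exact (hf f hfc).1 hfe
      · intro f hfm
        simp at hfm
        rcases hfm with rfl | hfm
        · exact hl
        · exact (hf f hfm).2.2

end tree

section gram
variable {T : Type} {g : ContextFreeGrammar T}

def Valid (g : ContextFreeGrammar T) : PT g.NT T → Prop
  | .leaf A t => (⟨A, [Symbol.terminal t]⟩ : ContextFreeRule T g.NT) ∈ g.rules
  | .node A l r => (⟨A, [Symbol.nonterminal l.root, Symbol.nonterminal r.root]⟩ :
      ContextFreeRule T g.NT) ∈ g.rules ∧ Valid g l ∧ Valid g r

def VC (g : ContextFreeGrammar T) : g.NT → List (Frame g.NT T) → g.NT → Prop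
  | A, [], B => A = B
  | A, .fl A' t :: c, B => A' = A ∧ Valid g t ∧ ∃ B',
      (⟨A, [Symbol.nonterminal t.root, Symbol.nonterminal B']⟩ :
        ContextFreeRule T g.NT) ∈ g.rules ∧ VC g B' c B
  | A, .fr A' t :: c, B => A' = A ∧ Valid g t ∧ ∃ B',
      (⟨A, [Symbol.nonterminal B', Symbol.nonterminal t.root]⟩ :
        ContextFreeRule T g.NT) ∈ g.rules ∧ VC g B' c B

lemma VC.fill {A : g.NT} {c : List (Frame g.NT T)} {s : PT g.NT T}
    (h : VC g A c s.root) (hs : Valid g s) : Valid g (fill c s) ∧ (fill c s).root = A := by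
  induction c generalizing A with
  | nil => exact ⟨hs, h.symm⟩
  | cons f c ih =>
    cases f with
    | fl A' t =>
      obtain ⟨rfl, ht, B', hr, hc⟩ := h
      obtain ⟨h1, h2⟩ := ih hc
      exact ⟨⟨by rw [h2]; exact hr, ht, h1⟩, rfl⟩
    | fr A' t =>
      obtain ⟨rfl, ht, B', hr, hc⟩ := h
      obtain ⟨h1, h2⟩ := ih hc
      exact ⟨⟨by rw [h2]; exact hr, h1, ht⟩, rfl⟩

lemma Valid.unfill {c : List (Frame g.NT T)} {s : PT g.NT T}
    (h : Valid g (Bd.fill c s)) : VC g (Bd.fill c s).root c s.root ∧ Valid g s := by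
  induction c with
  | nil => exact ⟨rfl, h⟩
  | cons f c ih =>
    cases f with
    | fl A' t =>
      obtain ⟨hr, h1, h2⟩ := h
      obtain ⟨h3, h4⟩ := ih h2
      exact ⟨⟨rfl, h1, _, hr, h3⟩, h4⟩
    | fr A' t =>
      obtain ⟨hr, h1, h2⟩ := h
      obtain ⟨h3, h4⟩ := ih h1
      exact ⟨⟨rfl, h2, _, hr, h3⟩, h4⟩

lemma vc_append {A B : g.NT} {c d : List (Frame g.NT T)} :
    VC g A (c ++ d) B ↔ ∃ C, VC g A c C ∧ VC g C d B := by
  induction c generalizing A with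
  | nil => simp [VC]
  | cons f c ih =>
    cases f <;> simp only [List.cons_append, VC, ih] <;> grind

lemma Valid.dw {t : PT g.NT T} (h : Valid g t) : DW g t.root t.yield := by
  induction t with
  | leaf A t => exact der_rule h
  | node A l r h1 h2 =>
    obtain ⟨hr, hl, hr'⟩ := h
    have := (DC.ofL hr (h1 hl)).word (h2 hr')
    simpa [PT.yield, PT.root] using this

lemma VC.cons {A B : g.NT} {f : Frame g.NT T} {c : List (Frame g.NT T)} (h : VC g A (f :: c) B) :
    f.lab = A ∧ Valid g f.sib ∧ ∃ B', DC g A f.lv B' f.rv ∧ VC g B' c B := by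
  cases f with
  | fl A' t =>
    obtain ⟨rfl, h1, B', h2, h3⟩ := h
    exact ⟨rfl, h1, B', DC.ofL h2 h1.dw, h3⟩
  | fr A' t =>
    obtain ⟨rfl, h1, B', h2, h3⟩ := h
    exact ⟨rfl, h1, B', DC.ofR h2 h1.dw, h3⟩

lemma VC.dc {A B : g.NT} {c : List (Frame g.NT T)} (h : VC g A c B) : DC g A (lv c) B (rv c) := by
  induction c generalizing A with
  | nil => cases h; exact DC.refl _
  | cons f c ih =>
    obtain ⟨_, _, B', h1, h2⟩ := h.cons
    exact h1.trans (ih h2)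

/-- Generation of a word by a sentential form through trees. -/
def Gn (g : ContextFreeGrammar T) : List (Symbol T g.NT) → List T → Prop
  | [], z => z = []
  | .terminal t :: α, z => ∃ z', z = t :: z' ∧ Gn g α z'
  | .nonterminal A :: α, z => ∃ (t : PT g.NT T) (z' : List T), Valid g t ∧ t.root = A ∧
      z = t.yield ++ z' ∧ Gn g α z'

lemma gn_append {α β : List (Symbol T g.NT)} {z : List T} :
    Gn g (α ++ β) z ↔ ∃ z1 z2, z = z1 ++ z2 ∧ Gn g α z1 ∧ Gn g β z2 := by
  induction α generalizing z with
  | nil => simp [Gn]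
  | cons s α ih =>
    cases s with
    | terminal t =>
      simp only [List.cons_append, Gn, ih]
      constructor
      · rintro ⟨_, rfl, z1, z2, rfl, h1, h2⟩
        exact ⟨t :: z1, z2, rfl, ⟨z1, rfl, h1⟩, h2⟩
      · rintro ⟨_, z2, rfl, ⟨z1, rfl, h1⟩, h2⟩
        exact ⟨_, rfl, z1, z2, rfl, h1, h2⟩
    | nonterminal A =>
      simp only [List.cons_append, Gn, ih]
      constructor
      · rintro ⟨t, _, ht, hr, rfl, z1, z2, rfl, h1, h2⟩
        exact ⟨t.yield ++ z1, z2, by simp, ⟨t, z1, ht, hr, rfl, h1⟩, h2⟩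
      · rintro ⟨_, z2, rfl, ⟨t, z1, ht, hr, rfl, h1⟩, h2⟩
        exact ⟨t, z1 ++ z2, ht, hr, by simp, z1, z2, rfl, h1, h2⟩

lemma gn_term (z : List T) : Gn g (z.map Symbol.terminal) z := by
  induction z with
  | nil => rfl
  | cons t z ih => exact ⟨z, rfl, ih⟩

lemma gn_step (hC : g.IsCNF) {α β : List (Symbol T g.NT)} {z : List T} (h : g.Produces α β)
    (hz : Gn g β z) : Gn g α z := by
  obtain ⟨r, hr, hrw⟩ := h
  obtain ⟨p, q, rfl, rfl⟩ := hrw.exists_parts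
  obtain ⟨z1, z2, rfl, h1, h2⟩ := gn_append.1 hz
  obtain ⟨z1, z3, rfl, h1, h3⟩ := gn_append.1 h1
  refine gn_append.2 ⟨_, _, rfl, gn_append.2 ⟨_, _, rfl, h1, ?_⟩, h2⟩
  obtain ⟨A, o⟩ := r
  rcases hC _ hr with ⟨B, C, ho⟩ | ⟨t, ho⟩
  · simp only at ho
    subst ho
    obtain ⟨tB, _, hB, rfl, rfl, tC, _, hC', rfl, rfl, rfl⟩ := h3
    exact ⟨.node A tB tC, [], ⟨hr, hB, hC'⟩, rfl, by simp [PT.yield], rfl⟩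
  · simp only at ho
    subst ho
    obtain ⟨_, rfl, rfl⟩ := h3
    exact ⟨.leaf A t, [], hr, rfl, by simp [PT.yield], rfl⟩

lemma DW.tree (hC : g.IsCNF) {A : g.NT} {z : List T} (h : DW g A z) :
    ∃ t, Valid g t ∧ t.root = A ∧ t.yield = z := by
  have : Gn g [Symbol.nonterminal A] z := by
    unfold DW at h
    generalize [Symbol.nonterminal A] = α at h
    induction h using Relation.ReflTransGen.head_induction_on with
    | refl => exact gn_term z
    | head h1 _ ih => exact gn_step hC h1 ih
  obtain ⟨t, _, ht, hr, rfl, rfl⟩ := this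
  exact ⟨t, ht, hr, by simp⟩

/-- Bounded words: sorted in the index order. -/
def Srt {m : ℕ} (a : Fin m → T) (z : List T) : Prop :=
  ∃ w : List (Fin m), w.Pairwise (· ≤ ·) ∧ z = w.map a

variable {m : ℕ} {a : Fin m → T}

lemma Srt.sub {z z' : List T} (h : Srt a z) (hs : z'.Sublist z) : Srt a z' := by
  obtain ⟨w, hw, rfl⟩ := h
  obtain ⟨w', h1, rfl⟩ := List.sublist_map_iff.1 hs
  exact ⟨w', hw.sublist h1, rfl⟩

lemma Srt.ofBounded {z : List T} (h : z ∈ letterBounded a) : Srt a z := by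
  obtain ⟨k, rfl⟩ := h
  refine ⟨(List.ofFn fun i : Fin m => List.replicate (k i) i).flatten, ?_, ?_⟩
  · rw [List.pairwise_flatten]
    constructor
    · intro l hl
      obtain ⟨i, rfl⟩ := List.mem_ofFn.1 hl
      simp [List.pairwise_replicate]
    · rw [List.pairwise_ofFn]
      intro i j hij x hx y hy
      rw [List.eq_of_mem_replicate hx, List.eq_of_mem_replicate hy]
      exact hij.le
  · rw [List.map_flatten, List.map_ofFn]
    congr 2
    funext i
    simp

lemma Srt.unique (ha : Function.Injective a) {z z' : List T} (h : Srt a z) (h' : Srt a z')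
    (hp : z.Perm z') : z = z' := by
  obtain ⟨w, hw, rfl⟩ := h
  obtain ⟨w', hw', rfl⟩ := h'
  have : w.Perm w' := (List.map_perm_map_iff ha).1 hp
  rw [this.eq_of_pairwise (fun a b _ _ h1 h2 => le_antisymm h1 h2) hw hw']

lemma Srt.pair {c d : T} (h : Srt a [c, d]) : ∃ i j, i ≤ j ∧ c = a i ∧ d = a j := by
  obtain ⟨w, hw, h⟩ := h
  match w, hw, h with
  | [i, j], hw, h => simp at h hw; exact ⟨i, j, hw, h.1, h.2⟩

lemma Srt.le (ha : Function.Injective a) {i j : Fin m} (h : Srt a [a i, a j]) : i ≤ j := by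
  obtain ⟨i', j', h, h1, h2⟩ := h.pair
  rw [ha h1, ha h2]; exact h

/-- Standing assumptions on the grammar. -/
structure Hyp (g : ContextFreeGrammar T) (a : Fin m → T) : Prop where
  ha : Function.Injective a
  hC : g.IsCNF
  hu : ∀ A : g.NT, g.IsUseful A
  hb : ∀ z ∈ g.language, Srt a z

lemma Hyp.srt (H : Hyp g a) {A : g.NT} {w : List T} (h : DW g A w) : Srt a w := by
  obtain ⟨u, y, huy⟩ := (H.hu A).1
  have h1 : DC g g.initial u A y := huy
  refine (H.hb _ (h1.word h)).sub ?_
  exact (List.sublist_append_right u w).trans (List.sublist_append_left _ y)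

lemma Hyp.cyc (H : Hyp g a) {A : g.NT} {v x : List T} (h : DC g A v A x) :
    Srt a ((v ++ v) ++ (x ++ x)) := by
  obtain ⟨w, hw⟩ := (H.hu A).2
  refine (H.srt ((h.trans h).word hw)).sub ?_
  exact List.Sublist.append (List.sublist_append_left _ _) (List.Sublist.refl _)

lemma sub2 {v x : List T} {c d : T} (hc : c ∈ v) (hd : d ∈ x) : [c, d].Sublist (v ++ x) :=
  List.Sublist.append (l₁ := [c]) (List.singleton_sublist.2 hc) (List.singleton_sublist.2 hd)

lemma Hyp.vv (H : Hyp g a) {A : g.NT} {v x : List T} (h : DC g A v A x) {i j : Fin m}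
    (hi : a i ∈ v) (hj : a j ∈ v) : i = j := by
  have h1 := (H.cyc h).sub (List.sublist_append_left _ _)
  exact le_antisymm ((h1.sub (sub2 hi hj)).le H.ha) ((h1.sub (sub2 hj hi)).le H.ha)

lemma Hyp.xx (H : Hyp g a) {A : g.NT} {v x : List T} (h : DC g A v A x) {i j : Fin m}
    (hi : a i ∈ x) (hj : a j ∈ x) : i = j := by
  have h1 := (H.cyc h).sub (List.sublist_append_right _ _)
  exact le_antisymm ((h1.sub (sub2 hi hj)).le H.ha) ((h1.sub (sub2 hj hi)).le H.ha)

lemma Hyp.vx (H : Hyp g a) {A : g.NT} {v x : List T} (h : DC g A v A x) {i j : Fin m}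
    (hi : a i ∈ v) (hj : a j ∈ x) : i ≤ j := by
  refine ((H.cyc h).sub ?_).le H.ha
  exact sub2 (List.mem_append_left _ hi) (List.mem_append_left _ hj)

lemma Hyp.v (H : Hyp g a) {A : g.NT} {v x : List T} (h : DC g A v A x) {c : T}
    (hc : c ∈ v) : ∃ i, c = a i := by
  have h1 := (H.cyc h).sub (List.sublist_append_left _ _)
  obtain ⟨i, _, _, h, _⟩ := (h1.sub (sub2 hc hc)).pair
  exact ⟨i, h⟩

lemma Hyp.x (H : Hyp g a) {A : g.NT} {v x : List T} (h : DC g A v A x) {c : T}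
    (hc : c ∈ x) : ∃ i, c = a i := by
  have h1 := (H.cyc h).sub (List.sublist_append_right _ _)
  obtain ⟨i, _, _, h, _⟩ := (h1.sub (sub2 hc hc)).pair
  exact ⟨i, h⟩

/-- The pair of border indices of a cycle. -/
def HP (a : Fin m → T) (v x : List T) (l r : Fin m) : Prop :=
  l ≤ r ∧ (∀ c ∈ v, c = a l) ∧ (∀ c ∈ x, c = a r) ∧ ((v = [] ∨ x = []) → l = r)

lemma Hyp.hp (H : Hyp g a) {A : g.NT} {v x : List T} (h : DC g A v A x) (hne : v ++ x ≠ []) :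
    ∃ l r, HP a v x l r := by
  have hv : ∀ l, a l ∈ v → ∀ c ∈ v, c = a l := by
    intro l hl c hc
    obtain ⟨i, rfl⟩ := H.v h hc
    rw [H.vv h hc hl]
  have hx : ∀ l, a l ∈ x → ∀ c ∈ x, c = a l := by
    intro l hl c hc
    obtain ⟨i, rfl⟩ := H.x h hc
    rw [H.xx h hc hl]
  rcases List.eq_nil_or_concat' v with rfl | ⟨v', c, rfl⟩
  · rcases List.eq_nil_or_concat' x with rfl | ⟨x', d, rfl⟩
    · simp at hne
    · obtain ⟨r, rfl⟩ := H.x h (c := d) (by simp)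
      exact ⟨r, r, le_rfl, by simp, hx r (by simp), fun _ => rfl⟩
  · obtain ⟨l, rfl⟩ := H.v h (c := c) (by simp)
    rcases List.eq_nil_or_concat' x with rfl | ⟨x', d, rfl⟩
    · exact ⟨l, l, le_rfl, hv l (by simp), by simp, fun _ => rfl⟩
    · obtain ⟨r, rfl⟩ := H.x h (c := d) (by simp)
      exact ⟨l, r, H.vx h (by simp) (by simp), hv l (by simp), hx r (by simp), by simp⟩

lemma HP.lmem {v x : List T} {l r : Fin m} (h : HP a v x l r) (hv : v ≠ []) : a l ∈ v := by
  obtain ⟨c, hc⟩ := List.exists_mem_of_ne_nil _ hv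
  rw [← h.2.1 c hc]; exact hc

lemma HP.rmem {v x : List T} {l r : Fin m} (h : HP a v x l r) (hv : x ≠ []) : a r ∈ x := by
  obtain ⟨c, hc⟩ := List.exists_mem_of_ne_nil _ hv
  rw [← h.2.2.1 c hc]; exact hc

/-- Inserting a cycle in a side tree of a cycle. -/
lemma side {A D : g.NT} {c1 c2 : List (Frame g.NT T)} {f : Frame g.NT T}
    (hp : VC g A (c1 ++ f :: c2) A) (hD : D ∈ f.sib.vars) {v' x' : List T} (h : DC g D v' D x') :
    (∃ V X, DC g A V A X ∧ (∀ c ∈ v', c ∈ V) ∧ (∀ c ∈ x', c ∈ V) ∧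
      ∃ c ∈ V, c ∈ lv (c1 ++ f :: c2)) ∨
    (∃ V X, DC g A V A X ∧ (∀ c ∈ v', c ∈ X) ∧ (∀ c ∈ x', c ∈ X) ∧
      ∃ c ∈ X, c ∈ rv (c1 ++ f :: c2)) := by
  obtain ⟨C, h1, h2⟩ := vc_append.1 hp
  obtain ⟨d, s, hd, hs⟩ := exists_fill hD
  have hsv : Valid g f.sib := h2.cons.2.1
  rw [hd] at hsv
  obtain ⟨h3, h4⟩ := hsv.unfill
  rw [hs] at h3
  have h5 := h4.dw
  rw [hs] at h5
  have h6 := (h3.dc.trans h).word h5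
  rw [← hd] at h6
  obtain ⟨c0, hc0⟩ := List.exists_mem_of_ne_nil _ (yield_ne s)
  cases f with
  | fl A' t =>
    simp only [Frame.sib] at hd
    obtain ⟨rfl, _, B', hr, hB'⟩ := h2
    left
    refine ⟨_, _, h1.dc.trans ((DC.ofL hr h6).trans hB'.dc), ?_, ?_, c0, ?_, ?_⟩
    · intro c hc; simp [hc]
    · intro c hc; simp [hc]
    · simp [hc0]
    · simp [lv, Frame.lv, hd, hc0]
  | fr A' t =>
    simp only [Frame.sib] at hd
    obtain ⟨rfl, _, B', hr, hB'⟩ := h2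
    right
    refine ⟨_, _, h1.dc.trans ((DC.ofR hr h6).trans hB'.dc), ?_, ?_, c0, ?_, ?_⟩
    · intro c hc; simp [hc]
    · intro c hc; simp [hc]
    · simp [hc0]
    · simp [rv, Frame.rv, hd, hc0]

def Conn (g : ContextFreeGrammar T) (A B : g.NT) : Prop := ∃ v x, DC g A v B x

lemma Conn.trans {A B C : g.NT} (h : Conn g A B) (h' : Conn g B C) : Conn g A C := by
  obtain ⟨v, x, h⟩ := h
  obtain ⟨v', x', h'⟩ := h'
  exact ⟨_, _, h.trans h'⟩

def Bi (g : ContextFreeGrammar T) (a : Fin m → T) (A : g.NT) : Prop :=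
  ∃ v x i j, DC g A v A x ∧ a i ∈ v ∧ a j ∈ x ∧ i ≠ j

lemma Bi.conn {A D : g.NT} (h : Bi g a A) (h1 : Conn g A D) (h2 : Conn g D A) : Bi g a D := by
  obtain ⟨v, x, i, j, hA, hi, hj, hne⟩ := h
  obtain ⟨v1, x1, h1⟩ := h1
  obtain ⟨v2, x2, h2⟩ := h2
  exact ⟨_, _, i, j, h2.trans (hA.trans h1), by simp [hi], by simp [hj], hne⟩

open Classical in
noncomputable def K [Fintype g.NT] (A : g.NT) : Finset g.NT :=
  Finset.univ.filter fun B => Conn g A B ∧ Conn g B A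

lemma mem_K [Fintype g.NT] {A B : g.NT} : B ∈ K A ↔ Conn g A B ∧ Conn g B A := by
  simp [K]

lemma K_eq [Fintype g.NT] {A B : g.NT} (h : B ∈ K A) : K B = K A := by
  rw [mem_K] at h
  ext C
  rw [mem_K, mem_K]
  exact ⟨fun ⟨h1, h2⟩ => ⟨h.1.trans h1, h2.trans h.2⟩, fun ⟨h1, h2⟩ => ⟨h.2.trans h1, h2.trans h.1⟩⟩

lemma path_mem_K [Fintype g.NT] {A : g.NT} {c1 c2 : List (Frame g.NT T)} {f : Frame g.NT T}
    (hp : VC g A (c1 ++ f :: c2) A) : f.lab ∈ K A := by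
  obtain ⟨C, h1, h2⟩ := vc_append.1 hp
  rw [h2.cons.1, mem_K]
  exact ⟨⟨_, _, h1.dc⟩, ⟨_, _, h2.dc⟩⟩

lemma Hyp.avoid [Fintype g.NT] (H : Hyp g a) {A : g.NT} {c1 c2 : List (Frame g.NT T)}
    {f : Frame g.NT T} (hp : VC g A (c1 ++ f :: c2) A) (hA : Bi g a A) :
    ∀ D ∈ f.sib.vars, D ∉ K A := by
  intro D hD hK
  rw [mem_K] at hK
  obtain ⟨v, x, i, j, hc, hi, hj, hne⟩ := hA.conn hK.1 hK.2
  rcases side hp hD hc with ⟨V, X, h, h1, h2, _⟩ | ⟨V, X, h, h1, h2, _⟩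
  · exact hne (H.vv h (h1 _ hi) (h2 _ hj))
  · exact hne (H.xx h (h1 _ hi) (h2 _ hj))

lemma sum_bound {N : Type} (c : List (Frame N T)) (p q : ℕ)
    (h : ∀ f ∈ c, f.sib.yield.length * p ≤ q) :
    (lv c ++ rv c).length * p ≤ c.length * q := by
  induction c with
  | nil => simp [lv, rv]
  | cons f c ih =>
    have h1 := ih (fun f hf => h f (by simp [hf]))
    have h2 := h f (by simp)
    have h3 : (lv (f :: c) ++ rv (f :: c)).length = f.sib.yield.length + (lv c ++ rv c).length := by
      cases f <;> simp [lv, rv, Frame.lv, Frame.rv, Frame.sib] <;> omega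
    rw [h3, List.length_cons]
    nlinarith

lemma Hyp.elem [Fintype g.NT] [DecidableEq g.NT] (H : Hyp g a) {A : g.NT}
    {p : List (Frame g.NT T)} (hp : VC g A p A) (hA : Bi g a A) (hn : (p.map Frame.lab).Nodup)
    (hR : ∀ f ∈ p, RF Finset.univ f.sib) :
    (lv p ++ rv p).length * 2 ^ ((K A).card + 1) ≤ (K A).card * 2 ^ Fintype.card g.NT := by
  refine (sum_bound p _ (2 ^ Fintype.card g.NT) ?_).trans (Nat.mul_le_mul_right _ ?_)
  · intro f hf
    obtain ⟨c1, c2, rfl⟩ := List.append_of_mem hf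
    have h1 := (hR f hf).avoid (H.avoid hp hA)
    have h2 := h1.card
    have hpos : 0 < (Finset.univ \ K A).card := Finset.card_pos.2 ⟨_, h1.root⟩
    have h3 : (Finset.univ \ K A).card = Fintype.card g.NT - (K A).card := by
      rw [Finset.card_sdiff_of_subset (Finset.subset_univ _), Finset.card_univ]
    rw [h3] at h2 hpos
    have : Fintype.card g.NT = (Fintype.card g.NT - (K A).card - 1) + ((K A).card + 1) := by omega
    calc _ ≤ _ := Nat.mul_le_mul_right _ h2
      _ = _ := by rw [← pow_add, ← this]
  · have h1 : (p.map Frame.lab).toFinset ⊆ K A := by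
      intro B hB
      rw [List.mem_toFinset, List.mem_map] at hB
      obtain ⟨f, hf, rfl⟩ := hB
      obtain ⟨c1, c2, rfl⟩ := List.append_of_mem hf
      exact path_mem_K hp
    have h2 := Finset.card_le_card h1
    rw [List.toFinset_card_of_nodup hn] at h2
    simpa using h2

/-- A pump: a cycle context with its pair of indices. -/
structure Pump (g : ContextFreeGrammar T) (m : ℕ) where
  A : g.NT
  p : List (Frame g.NT T)
  l : Fin m
  r : Fin m

def Pump.cnt (e : Pump g m) : Multiset T := ((lv e.p ++ rv e.p : List T) : Multiset T)

def Pump.sz (e : Pump g m) : ℕ := (lv e.p ++ rv e.p).length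

def ble (e f : Pump g m) : Prop := borderLE (e.l, e.r) (f.l, f.r)

lemma ble.trans {e f k : Pump g m} (h : ble e f) (h' : ble f k) : ble e k := by
  unfold ble borderLE at *
  simp only at *
  omega

lemma ble.total {e f : Pump g m} (h : ¬ ble e f) : ble f e := by
  unfold ble borderLE at *
  simp only at *
  omega

def AV : List (Pump g m) → Set g.NT
  | [] => ∅
  | e :: es => cvars e.p ∪ AV es

def tot : List (Pump g m) → Multiset T
  | [] => 0
  | e :: es => e.cnt + tot es

def VL : Set g.NT → List (Pump g m) → Prop
  | _, [] => True
  | W, e :: es => e.A ∈ W ∧ VL (W ∪ cvars e.p) es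

@[simp] lemma AV_append (p q : List (Pump g m)) : AV (p ++ q) = AV p ∪ AV q := by
  induction p with
  | nil => simp [AV]
  | cons e p ih => simp [AV, ih, Set.union_assoc]

@[simp] lemma tot_append (p q : List (Pump g m)) : tot (p ++ q) = tot p + tot q := by
  induction p with
  | nil => simp [tot]
  | cons e p ih => simp [tot, ih, add_assoc]

lemma VL_append {W : Set g.NT} {p q : List (Pump g m)} :
    VL W (p ++ q) ↔ VL W p ∧ VL (W ∪ AV p) q := by
  induction p generalizing W with
  | nil => simp [VL, AV]
  | cons e p ih => simp [VL, ih, AV, Set.union_assoc, and_assoc]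

lemma VL.mono {W W' : Set g.NT} {p : List (Pump g m)} (h : VL W p) (hW : W ⊆ W') : VL W' p := by
  induction p generalizing W W' with
  | nil => trivial
  | cons e p ih => exact ⟨hW h.1, ih h.2 (Set.union_subset_union_left _ hW)⟩

structure PG [Fintype g.NT] (a : Fin m → T) (e : Pump g m) : Prop where
  vc : VC g e.A e.p e.A
  ne : e.p ≠ []
  hp : HP a (lv e.p) (rv e.p) e.l e.r
  sz : e.sz < 2 ^ Fintype.card g.NT
  el : Bi g a e.A → (lv e.p = [] ∨ rv e.p = []) →
    e.sz * 2 ^ ((K e.A).card + 1) ≤ (K e.A).card * 2 ^ Fintype.card g.NT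

set_option maxHeartbeats 2000000 in
lemma merge [Fintype g.NT] (H : Hyp g a) {c b : Pump g m} (hc : PG a c) (hb : PG a b)
    (hD : b.A ∈ cvars c.p) (hn : ¬ ble c b) :
    ∃ b' : Pump g m, b'.A = c.A ∧ VC g b'.A b'.p b'.A ∧ b'.p ≠ [] ∧
      HP a (lv b'.p) (rv b'.p) b'.l b'.r ∧ ble b' b ∧ cvars b'.p = cvars c.p ∪ cvars b.p ∧
      b'.cnt = c.cnt + b.cnt ∧ Bi g a c.A ∧ b.A ∈ K c.A ∧ (lv c.p = [] ∨ rv c.p = []) ∧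
      lv b'.p ≠ [] ∧ rv b'.p ≠ [] := by
  obtain ⟨c1, f, c2, hcp, hf⟩ := mem_cvars hD
  have hcv := hc.vc
  have hbne := lvrv_ne hb.ne
  have hcne := lvrv_ne hc.ne
  rw [hcp] at hcv
  have hchp := hc.hp
  have hbhp := hb.hp
  have c4 := hchp.2.2.2
  have b4 := hbhp.2.2.2
  have c0 := hchp.1
  have b0 := hbhp.1
  rcases hf with hf | hf
  swap
  · exfalso
    apply hn
    rcases side hcv hf hb.vc.dc with ⟨V, X, h, h1, h2, k, hk1, hk2⟩ | ⟨V, X, h, h1, h2, k, hk1, hk2⟩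
    · rw [← hcp] at hk2
      rw [hchp.2.1 _ hk2] at hk1
      have e1 : lv b.p ≠ [] → b.l = c.l := fun e => H.vv h (h1 _ (hbhp.lmem e)) hk1
      have e2 : rv b.p ≠ [] → b.r = c.l := fun e => H.vv h (h2 _ (hbhp.rmem e)) hk1
      unfold ble borderLE
      simp only
      by_cases q1 : lv b.p = [] <;> by_cases q2 : rv b.p = [] <;> simp_all
    · rw [← hcp] at hk2
      rw [hchp.2.2.1 _ hk2] at hk1
      have e1 : lv b.p ≠ [] → b.l = c.r := fun e => H.xx h (h1 _ (hbhp.lmem e)) hk1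
      have e2 : rv b.p ≠ [] → b.r = c.r := fun e => H.xx h (h2 _ (hbhp.rmem e)) hk1
      have e3 : b.l = c.r ∧ b.r = c.r := by
        by_cases q1 : lv b.p = [] <;> by_cases q2 : rv b.p = [] <;> simp_all
      unfold ble borderLE
      simp only [e3]
      omega
  · obtain ⟨C, h1, h2⟩ := vc_append.1 hcv
    have hC : C = b.A := by rw [← hf]; exact h2.cons.1.symm
    subst hC
    set p' := c1 ++ (b.p ++ f :: c2) with hp'
    have hvc : VC g c.A p' c.A := vc_append.2 ⟨_, h1, vc_append.2 ⟨_, hb.vc, h2⟩⟩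
    have hpne : p' ≠ [] := by simp [hp']
    obtain ⟨l, r, hlr⟩ := H.hp hvc.dc (lvrv_ne hpne)
    have subv : ∀ k ∈ lv c.p, k ∈ lv p' := by
      intro k hk; rw [hcp] at hk; simp [hp'] at hk ⊢; tauto
    have subx : ∀ k ∈ rv c.p, k ∈ rv p' := by
      intro k hk; rw [hcp] at hk; simp [hp'] at hk ⊢; tauto
    have F1 : lv c.p ≠ [] → c.l = l := fun e => H.ha (hlr.2.1 _ (subv _ (hchp.lmem e)))
    have F2 : lv b.p ≠ [] → b.l = l := fun e =>
      H.ha (hlr.2.1 _ (by simp [hp', hbhp.lmem e]))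
    have F3 : rv c.p ≠ [] → c.r = r := fun e => H.ha (hlr.2.2.1 _ (subx _ (hchp.rmem e)))
    have F4 : rv b.p ≠ [] → b.r = r := fun e =>
      H.ha (hlr.2.2.1 _ (by simp [hp', hbhp.rmem e]))
    have F5 := hlr.1
    have key : (lv c.p = [] ∨ rv c.p = []) ∧ l ≠ r ∧ borderLE (l, r) (b.l, b.r) := by
      unfold ble borderLE at hn
      unfold borderLE
      simp only at hn ⊢
      by_cases q1 : lv b.p = [] <;> by_cases q2 : rv b.p = [] <;>
      by_cases q3 : lv c.p = [] <;> by_cases q4 : rv c.p = [] <;>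
      simp only [q1, q2, q3, q4, ne_eq, not_true_eq_false, not_false_eq_true, true_or, or_true,
        forall_const, List.append_nil, false_or, or_self, true_and, false_and, IsEmpty.forall_iff]
        at F1 F2 F3 F4 b4 c4 hbne hcne ⊢ <;> omega
    have n1 : lv p' ≠ [] := fun e => key.2.1 (hlr.2.2.2 (Or.inl e))
    have n2 : rv p' ≠ [] := fun e => key.2.1 (hlr.2.2.2 (Or.inr e))
    refine ⟨⟨c.A, p', l, r⟩, rfl, hvc, hpne, hlr, key.2.2, ?_, ?_, ?_, ?_, key.1, n1, n2⟩
    · simp only [hp', hcp, cvars_append]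
      ac_rfl
    · simp only [Pump.cnt, hp', hcp, lv_append, rv_append, ← Multiset.coe_add]
      abel
    · exact ⟨_, _, l, r, hvc.dc, hlr.lmem n1, hlr.rmem n2, key.2.1⟩
    · rw [← hf]; exact path_mem_K hcv

lemma sq_lt (j : ℕ) : j * j < 2 ^ (j + 1) := by
  induction j with
  | zero => simp
  | succ n ih =>
    rcases Nat.lt_or_ge n 3 with h | h
    · interval_cases n <;> simp
    · rw [pow_succ]; nlinarith

set_option maxHeartbeats 2000000 in
lemma ins [Fintype g.NT] [DecidableEq g.NT] (H : Hyp g a) (W : Set g.NT) (p : List (Pump g m)) :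
    ∀ (b : Pump g m) (s : List (Pump g m)) (R : Finset g.NT), VL W (p ++ b :: s) →
      (p ++ s).Pairwise ble → (∀ e ∈ p ++ s, PG a e) → PG a b → (∀ e ∈ s, ble b e) →
      R ⊆ K b.A → b.A ∈ R → (∀ B ∈ R, B ≠ b.A → B ∉ W ∪ AV p) →
      (Bi g a b.A → b.sz * 2 ^ ((K b.A).card + 1) ≤
        R.card * ((K b.A).card * 2 ^ Fintype.card g.NT)) →
      ∃ es : List (Pump g m), VL W es ∧ es.Pairwise ble ∧ (∀ e ∈ es, PG a e) ∧
        AV es = AV p ∪ cvars b.p ∪ AV s ∧ tot es = tot p + b.cnt + tot s := by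
  induction p using List.reverseRecOn with
  | nil =>
    intro b s R h1 h2 h3 h4 h5 _ _ _ _
    refine ⟨b :: s, h1, ?_, ?_, by simp [AV], by simp [tot]⟩
    · exact List.pairwise_cons.2 ⟨h5, h2⟩
    · intro e he
      rcases List.mem_cons.1 he with rfl | he
      · exact h4
      · exact h3 e he
  | append_singleton p c ih =>
    intro b s R h1 h2 h3 h4 h5 h6 h7 h8 h9
    by_cases hcb : ble c b
    · refine ⟨p ++ [c] ++ b :: s, h1, ?_, ?_, by simp [AV, Set.union_assoc],
        by simp [tot, add_assoc]⟩
      · rw [List.pairwise_append] at h2 ⊢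
        refine ⟨h2.1, List.pairwise_cons.2 ⟨h5, h2.2.1⟩, ?_⟩
        intro x hx y hy
        rcases List.mem_cons.1 hy with rfl | hy
        · rcases List.mem_append.1 hx with hx | hx
          · exact ((List.pairwise_append.1 h2.1).2.2 x hx c (by simp)).trans hcb
          · rw [List.mem_singleton.1 hx]; exact hcb
        · exact h2.2.2 x hx y hy
      · intro e he
        simp only [List.mem_append, List.mem_cons] at he h3
        rcases he with he | rfl | he
        · exact h3 e (Or.inl he)
        · exact h4
        · exact h3 e (Or.inr he)
    have hcG : PG a c := h3 c (by simp)
    have hbc := hcb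
    replace hbc := ble.total hbc
    rw [VL_append, VL_append] at h1
    obtain ⟨⟨v1, v2⟩, v3, v4⟩ := h1
    have v2' : c.A ∈ W ∪ AV p := v2.1
    simp only [AV_append, AV, Set.union_empty] at v3 v4 h8
    by_cases hA : b.A ∈ W ∪ AV p
    · obtain ⟨es, e1, e2, e3, e4, e5⟩ := ih b (c :: s) R
        (by
          rw [VL_append]
          refine ⟨v1, hA, Or.inl v2', v4.mono ?_⟩
          intro x hx
          simp only [Set.mem_union] at hx ⊢
          tauto)
        (by simpa using h2) (by simpa using h3) h4
        (by
          intro e he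
          rcases List.mem_cons.1 he with rfl | he
          · exact hbc
          · exact h5 e he)
        h6 h7
        (by
          intro B hB hne hm
          apply h8 B hB hne
          simp only [Set.mem_union] at hm ⊢
          tauto)
        h9
      refine ⟨es, e1, e2, e3, ?_, ?_⟩
      · rw [e4]; simp only [AV, AV_append, Set.union_empty]
        ac_rfl
      · rw [e5]; simp only [tot, tot_append]; abel
    · have hD : b.A ∈ cvars c.p := by
        simp only [Set.mem_union] at v3 hA
        tauto
      obtain ⟨b', m1, m2, m3, m4, m5, m6, m7, m8, m9, m10, m11, m12⟩ := merge H hcG h4 hD hcb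
      have hK : K b.A = K c.A := K_eq m9
      have hRc : c.A ∉ R := by
        intro hm
        by_cases he : c.A = b.A
        · exact hA (he ▸ v2')
        · apply h8 _ hm he
          simp only [Set.mem_union] at v2' ⊢
          tauto
      have hsz : b'.sz = c.sz + b.sz := by
        have := congrArg Multiset.card m7
        simp [Pump.cnt, Pump.sz] at this ⊢
        omega
      have hcK : c.A ∈ K c.A := mem_K.2 ⟨⟨_, _, DC.refl _⟩, ⟨_, _, DC.refl _⟩⟩
      have hsub : insert c.A R ⊆ K b'.A := by
        rw [m1]
        exact Finset.insert_subset hcK (hK ▸ h6)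
      have hcard : (insert c.A R).card = R.card + 1 := Finset.card_insert_of_notMem hRc
      have hbound : b'.sz * 2 ^ ((K b'.A).card + 1) ≤
          (insert c.A R).card * ((K b'.A).card * 2 ^ Fintype.card g.NT) := by
        have q1 := hcG.el m8 m10
        have q2 := h9 (m8.conn (mem_K.1 m9).1 (mem_K.1 m9).2)
        rw [hK] at q2
        rw [m1, hsz, hcard]
        nlinarith
      have hG : PG a b' := by
        refine ⟨m2, m3, m4, ?_, fun _ h => (h.elim m11 m12).elim⟩
        have q1 := Finset.card_le_card hsub
        have q2 := sq_lt (K b'.A).card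
        have q3 : b'.sz * 2 ^ ((K b'.A).card + 1) <
            2 ^ Fintype.card g.NT * 2 ^ ((K b'.A).card + 1) := by
          calc _ ≤ _ := hbound
            _ ≤ (K b'.A).card * ((K b'.A).card * 2 ^ Fintype.card g.NT) :=
                Nat.mul_le_mul_right _ q1
            _ = ((K b'.A).card * (K b'.A).card) * 2 ^ Fintype.card g.NT := by ring
            _ < 2 ^ ((K b'.A).card + 1) * 2 ^ Fintype.card g.NT :=
                Nat.mul_lt_mul_of_pos_right q2 (by positivity)
            _ = _ := by ring
        exact lt_of_mul_lt_mul_right q3 (Nat.zero_le _)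
      obtain ⟨es, e1, e2, e3, e4, e5⟩ := ih b' s (insert c.A R)
        (by
          rw [VL_append]
          refine ⟨v1, m1 ▸ v2', v4.mono ?_⟩
          rw [m6]
          intro x hx
          simp only [Set.mem_union] at hx ⊢
          tauto)
        (h2.sublist (by simp)) (fun e he => h3 e (by simp at he ⊢; tauto)) hG
        (fun e he => m5.trans (h5 e he)) hsub (by rw [m1]; simp)
        (by
          intro B hB hne hm
          rw [m1] at hne
          have hB' : B ∈ R := (Finset.mem_insert.1 hB).resolve_left hne
          by_cases he : B = b.A
          · exact hA (he ▸ hm)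
          · apply h8 B hB' he
            simp only [Set.mem_union] at hm ⊢
            tauto)
        (fun _ => hbound)
      refine ⟨es, e1, e2, e3, ?_, ?_⟩
      · rw [e4, m6]; simp only [AV, AV_append, Set.union_empty]
        ac_rfl
      · rw [e5, m7]; simp only [tot, tot_append]; abel

def Good (g : ContextFreeGrammar T) (z : List T) (W : Set g.NT) : Prop :=
  ∃ t : PT g.NT T, Valid g t ∧ t.root = g.initial ∧ t.yield = z ∧ t.vars = W

lemma Good.mem {z : List T} {W : Set g.NT} (h : Good g z W) : z ∈ g.language := by
  obtain ⟨t, h1, h2, rfl, _⟩ := h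
  have := h1.dw
  rw [h2] at this
  exact this

set_option maxHeartbeats 2000000 in
lemma decomp [Fintype g.NT] [DecidableEq g.NT] (H : Hyp g a) (n : ℕ) :
    ∀ (z : List T) (W : Set g.NT), z.length = n → Good g z W →
    ∃ z0 W0, ∃ es : List (Pump g m), Good g z0 W0 ∧ 0 < z0.length ∧
      z0.length ≤ 2 ^ (Fintype.card g.NT - 1) ∧
      VL W0 es ∧ es.Pairwise ble ∧ (∀ e ∈ es, PG a e) ∧ W ⊆ W0 ∪ AV es ∧
      (z : Multiset T) = (z0 : Multiset T) + tot es := by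
  induction n using Nat.strong_induction_on with
  | _ n ih =>
    intro z W hn hG
    obtain ⟨t, t1, t2, rfl, rfl⟩ := id hG
    by_cases hR : RF Finset.univ t
    · refine ⟨t.yield, t.vars, [], hG, List.length_pos_iff.2 (yield_ne t), ?_, trivial,
        List.Pairwise.nil, by simp, by simp, by simp [tot]⟩
      simpa using hR.card
    · obtain ⟨c, p, s, rfl, hpne, hrt, hnd, hRF, hlen⟩ := extract t hR
      obtain ⟨u1, u2⟩ := t1.unfill
      obtain ⟨u3, u4⟩ := u2.unfill
      rw [hrt] at u1 u3
      rw [t2] at u1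
      obtain ⟨u5, u6⟩ := u1.fill u4
      have hne := lvrv_ne hpne
      have hpl : 0 < (lv p ++ rv p).length := List.length_pos_iff.2 hne
      have hsl : 0 < s.yield.length := List.length_pos_iff.2 (yield_ne s)
      obtain ⟨z0, W0, es, i1, i0, i2, i3, i4, i5, i6, i7⟩ := ih (fill c s).yield.length (by
        rw [← hn]; simp at hpl ⊢; omega) _ _ rfl ⟨_, u5, u6, rfl, rfl⟩
      obtain ⟨l, r, hlr⟩ := H.hp u3.dc hne
      let b : Pump g m := ⟨s.root, p, l, r⟩
      have hbG : PG a b := by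
        refine ⟨u3, hpne, hlr, ?_, fun h _ => H.elem u3 h hnd hRF⟩
        simp [Pump.sz, b] at hlen ⊢
        omega
      obtain ⟨es', e1, e2, e3, e4, e5⟩ := ins H W0 es b [] {s.root}
        (by
          rw [VL_append]
          refine ⟨i3, i6 ?_, trivial⟩
          simp only [vars_fill]
          exact Or.inr (root_mem_vars s))
        (by simpa using i4) (by simpa using i5) hbG (by simp)
        (by
          simp only [Finset.singleton_subset_iff]
          exact mem_K.2 ⟨⟨_, _, DC.refl _⟩, ⟨_, _, DC.refl _⟩⟩)
        (by simp [b]) (by simp [b])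
        (fun h => by
          rw [Finset.card_singleton, one_mul]; exact H.elem u3 h hnd hRF)
      refine ⟨z0, W0, es', i1, i0, i2, e1, e2, e3, ?_, ?_⟩
      · rw [e4]
        intro x hx
        simp only [vars_fill, Set.mem_union, AV] at hx ⊢
        have := @i6 x
        simp only [vars_fill, Set.mem_union] at this
        simp only [b]
        tauto
      · rw [e5, ← add_assoc, ← add_assoc, ← i7]
        simp only [tot, yield_fill, ← Multiset.coe_add, Pump.cnt, b]
        abel

/-- One pumping step. -/
def Step (g : ContextFreeGrammar T) [Fintype g.NT] (a : Fin m → T) (z z' : List T) (l r : Fin m) :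
    Prop :=
  ∃ (A : g.NT) (u w y v x : List T),
        z = u ++ w ++ y ∧
        z' = u ++ v ++ w ++ x ++ y ∧
        0 < (v ++ x).length ∧ (v ++ x).length < 2 ^ (Fintype.card g.NT) ∧
        g.Derives [Symbol.nonterminal g.initial]
          (u.map Symbol.terminal ++ [Symbol.nonterminal A] ++ y.map Symbol.terminal) ∧
        g.Derives [Symbol.nonterminal A]
          (v.map Symbol.terminal ++ [Symbol.nonterminal A] ++ x.map Symbol.terminal) ∧
        g.Derives [Symbol.nonterminal A] (w.map Symbol.terminal) ∧
        l ≤ r ∧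
        (∀ c ∈ v, c = a l) ∧ (∀ c ∈ x, c = a r) ∧
        ((v = [] ∨ x = []) → l = r)

lemma Good.step [Fintype g.NT] {z : List T} {W : Set g.NT} (h : Good g z W) {e : Pump g m}
    (he : PG a e) (hA : e.A ∈ W) :
    ∃ z', Good g z' (W ∪ cvars e.p) ∧ Step g a z z' e.l e.r ∧
      (z' : Multiset T) = (z : Multiset T) + e.cnt := by
  obtain ⟨t, t1, t2, rfl, rfl⟩ := h
  obtain ⟨c, s, rfl, hs⟩ := exists_fill hA
  obtain ⟨u1, u2⟩ := t1.unfill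
  rw [hs, t2] at u1
  have h0 := he.vc
  have h1 : VC g g.initial (c ++ e.p) s.root := vc_append.2 ⟨_, u1, hs ▸ h0⟩
  obtain ⟨u3, u4⟩ := h1.fill u2
  have u5 := u2.dw
  rw [hs] at u5
  refine ⟨_, ⟨_, u3, u4, rfl, ?_⟩, ⟨e.A, lv c, s.yield, rv c, lv e.p, rv e.p, ?_, ?_,
    List.length_pos_iff.2 (lvrv_ne he.ne), he.sz, u1.dc, he.vc.dc, u5, he.hp⟩, ?_⟩
  · simp only [vars_fill, cvars_append]; ext; simp; tauto
  · simp
  · simp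
  · simp only [yield_fill, lv_append, rv_append, Pump.cnt, ← Multiset.coe_add]
    abel

lemma seq [Fintype g.NT] (es : List (Pump g m)) : ∀ (z : List T) (W : Set g.NT), Good g z W →
    VL W es → (∀ e ∈ es, PG a e) →
    ∃ zs : Fin (es.length + 1) → List T, zs 0 = z ∧ (∀ i, zs i ∈ g.language) ∧
      (∀ i : Fin es.length, Step g a (zs i.castSucc) (zs i.succ) (es.get i).l (es.get i).r) ∧
      (zs (Fin.last _) : Multiset T) = (z : Multiset T) + tot es := by
  induction es with
  | nil =>
    intro z W h _ _
    exact ⟨fun _ => z, rfl, fun _ => h.mem, fun i => i.elim0, by simp [tot]⟩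
  | cons e es ih =>
    intro z W h hv hG
    obtain ⟨z', h1, h2, h3⟩ := h.step (hG e (by simp)) hv.1
    obtain ⟨zs, k1, k2, k3, k4⟩ := ih z' _ h1 hv.2 (fun e he => hG e (by simp [he]))
    refine ⟨Fin.cons z zs, rfl, ?_, ?_, ?_⟩
    · intro i
      refine Fin.cases h.mem (fun i => ?_) i
      exact k2 i
    · intro i
      refine Fin.cases ?_ (fun i => ?_) i
      · change Step g a z (zs 0) e.l e.r
        rw [k1]; exact h2
      · exact k3 i
    · change ((zs (Fin.last _) : List T) : Multiset T) = _
      rw [k4, h3, tot, add_assoc]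

end gram
end Bd

theorem stmt_3 {T : Type} {m : ℕ} (hm : 0 < m) (a : Fin m → T) (ha : Function.Injective a)
    (g : ContextFreeGrammar T) [Fintype g.NT] (hCNF : g.IsCNF)
    (huseful : ∀ A : g.NT, g.IsUseful A) (hbound : g.language ≤ letterBounded a)
    (z : List T) (hz : z ∈ g.language)
    (hlen : 2 ^ (Fintype.card g.NT - 1) < z.length) :
    ∃ k : ℕ, 0 < k ∧
    ∃ (zs : Fin (k + 1) → List T) (l r : Fin k → Fin m),
      zs (Fin.last k) = z ∧
      (∀ i : Fin (k + 1), zs i ∈ g.language) ∧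
      0 < (zs 0).length ∧ (zs 0).length ≤ 2 ^ (Fintype.card g.NT - 1) ∧
      (∀ i : Fin k, ∃ (A : g.NT) (u w y v x : List T),
        zs i.castSucc = u ++ w ++ y ∧
        zs i.succ = u ++ v ++ w ++ x ++ y ∧
        0 < (v ++ x).length ∧ (v ++ x).length < 2 ^ (Fintype.card g.NT) ∧
        g.Derives [Symbol.nonterminal g.initial]
          (u.map Symbol.terminal ++ [Symbol.nonterminal A] ++ y.map Symbol.terminal) ∧
        g.Derives [Symbol.nonterminal A]
          (v.map Symbol.terminal ++ [Symbol.nonterminal A] ++ x.map Symbol.terminal) ∧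
        g.Derives [Symbol.nonterminal A] (w.map Symbol.terminal) ∧
        l i ≤ r i ∧
        (∀ c ∈ v, c = a (l i)) ∧ (∀ c ∈ x, c = a (r i)) ∧
        ((v = [] ∨ x = []) → l i = r i)) ∧
      (∀ i j : Fin k, i ≤ j → borderLE (l i, r i) (l j, r j)) := by
  classical
  have H : Bd.Hyp g a := ⟨ha, hCNF, huseful, fun z hz => Bd.Srt.ofBounded (hbound hz)⟩
  obtain ⟨t, t1, t2, t3⟩ := Bd.DW.tree hCNF (A := g.initial) (z := z) hz
  obtain ⟨z0, W0, es, i1, i0, i2, i3, i4, i5, _, i7⟩ :=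
    Bd.decomp H z.length z t.vars rfl ⟨t, t1, t2, t3, rfl⟩
  obtain ⟨zs, k1, k2, k3, k4⟩ := Bd.seq es z0 W0 i1 i3 i5
  have hlast : zs (Fin.last _) = z := by
    refine Bd.Srt.unique ha (H.hb _ (k2 _)) (H.hb _ hz) ?_
    rw [← Multiset.coe_eq_coe, k4, i7]
  refine ⟨es.length, ?_, zs, fun i => (es.get i).l, fun i => (es.get i).r, hlast, k2, ?_, ?_, k3, ?_⟩
  · rw [List.length_pos_iff]
    rintro rfl
    have : z0 = z := by rw [← k1, ← hlast]; rfl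
    rw [this] at i2
    omega
  · rw [k1]; exact i0
  · rw [k1]; exact i2
  · intro i j hij
    rcases hij.lt_or_eq with h | rfl
    · exact List.pairwise_iff_get.1 i4 i j h
    · exact Or.inr ⟨rfl, le_rfl⟩
end

section
/- Let m ≥ 2 and let a_1, …, a_m be pairwise distinct symbols. For every integer n ≥ 1, the language L̃_n = { a_1^{2^n + n_1} a_2^{n_1 + n_2} ⋯ a_{m-1}^{n_{m-2} + n_{m-1}} a_m^{n_{m-1}} : n_1 ≥ 1, …, n_{m-1} ≥ 1 } is generated by a context-free grammar in Chomsky normal form with at most n + 4m − 3 variables. -/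
/-- The language `L̃_n = { a_1^{2^n + n_1} a_2^{n_1 + n_2} ⋯ a_{m-1}^{n_{m-2}+n_{m-1}}
a_m^{n_{m-1}} : n_1 ≥ 1, …, n_{m-1} ≥ 1 }`, encoded via a function `f : ℕ → ℕ` with
`f 0 = 2^n`, `f j = n_j ≥ 1` for `1 ≤ j ≤ m-1`, and `f m = 0`; the block of the letter
`a_{i+1}` (for `0 ≤ i ≤ m-1`) has length `f i + f (i+1)`. -/
def LtildeLang {T : Type} (m n : ℕ) (a : Fin m → T) : Language T :=
  { z | ∃ f : ℕ → ℕ, f 0 = 2 ^ n ∧ (∀ j : ℕ, 1 ≤ j → j ≤ m - 1 → 1 ≤ f j) ∧ f m = 0 ∧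
      z = (List.ofFn fun i : Fin m =>
            List.replicate (f i.val + f (i.val + 1)) (a i)).flatten }

namespace Ltilde

open Symbol

/-- Nonterminals: a chain `X_0, …, X_{n+k}` (with `X_0` producing `a_1`), and for each `i < k`
the letter variable for `a_{i+2}`, the pair variable `P_i` and the auxiliary variable `Q_i`. -/
abbrev NTy (k n : ℕ) : Type := Fin (n + k + 1) ⊕ (Fin 3 × Fin k)

/-- Letter variables. -/
def lt (k n : ℕ) (i : Fin (k + 1)) : NTy k n :=
  Fin.cases (motive := fun _ => NTy k n) (Sum.inl 0) (fun i => Sum.inr (0, i)) i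

/-- The second variable in the chain rules. -/
def second (k n : ℕ) (j : Fin (n + k)) : NTy k n :=
  if h : j.val < n then Sum.inl j.castSucc else Sum.inr (1, ⟨j.val - n, by omega⟩)

/-- A binary rule. -/
def bin {T N : Type} (A B C : N) : ContextFreeRule T N := ⟨A, [nonterminal B, nonterminal C]⟩

/-- The rules of the grammar. -/
def ruleSet {T : Type} (k n : ℕ) (b : ℕ → T) : Set (ContextFreeRule T (NTy k n)) :=
  Set.range (fun i : Fin (k + 1) => ⟨lt k n i, [terminal (b i)]⟩) ∪
  Set.range (fun j : Fin (n + k) => bin (Sum.inl j.succ) (Sum.inl j.castSucc) (second k n j)) ∪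
  Set.range (fun i : Fin k => bin (Sum.inr (1, i)) (lt k n i.castSucc) (lt k n i.succ)) ∪
  Set.range (fun i : Fin k => bin (Sum.inr (1, i)) (lt k n i.castSucc) (Sum.inr (2, i))) ∪
  Set.range (fun i : Fin k => bin (Sum.inr (2, i)) (Sum.inr (1, i)) (lt k n i.succ))

lemma ruleSet_finite {T : Type} (k n : ℕ) (b : ℕ → T) : (ruleSet k n b).Finite := by
  unfold ruleSet
  exact ((((Set.finite_range _).union (Set.finite_range _)).union (Set.finite_range _)).union
    (Set.finite_range _)).union (Set.finite_range _)

/-- The grammar. -/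
noncomputable def G {T : Type} (k n : ℕ) (b : ℕ → T) : ContextFreeGrammar T where
  NT := NTy k n
  initial := Sum.inl (Fin.last _)
  rules := (ruleSet_finite k n b).toFinset

/-- Words of the chain after the power part. -/
def PW {T : Type} (n : ℕ) (b : ℕ → T) : ℕ → List T → Prop
  | 0, w => w = List.replicate (2 ^ n) (b 0)
  | i + 1, w => ∃ u c, PW n b i u ∧ 1 ≤ c ∧
      w = u ++ (List.replicate c (b i) ++ List.replicate c (b (i + 1)))

/-- Words of the chain. -/
def CL {T : Type} (n : ℕ) (b : ℕ → T) (j : ℕ) (w : List T) : Prop :=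
  if j < n then w = List.replicate (2 ^ j) (b 0) else PW n b (j - n) w

lemma CL_le {T : Type} {n : ℕ} {b : ℕ → T} {j : ℕ} (h : j ≤ n) (w : List T) :
    CL n b j w ↔ w = List.replicate (2 ^ j) (b 0) := by
  unfold CL
  split_ifs with h1
  · rfl
  · obtain rfl : j = n := by omega
    simp [PW]

/-- Semantics of nonterminals. -/
def Sem {T : Type} (k n : ℕ) (b : ℕ → T) : NTy k n → List T → Prop
  | Sum.inl j, w => CL n b j w
  | Sum.inr (0, i), w => w = [b (i + 1)]
  | Sum.inr (1, i), w => ∃ c, 1 ≤ c ∧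
      w = List.replicate c (b i) ++ List.replicate c (b (i + 1))
  | Sum.inr (2, i), w => ∃ c, 1 ≤ c ∧
      w = List.replicate c (b i) ++ List.replicate (c + 1) (b (i + 1))

lemma Sem_lt {T : Type} (k n : ℕ) (b : ℕ → T) (i : Fin (k + 1)) (w : List T) :
    Sem k n b (lt k n i) w ↔ w = [b i] := by
  refine Fin.cases ?_ (fun i => ?_) i
  · simp only [lt, Fin.cases_zero, Sem]
    rw [CL_le (by simp)]
    simp
  · simp [lt, Sem]

/-- Semantics of symbols. -/
def SS {T : Type} (k n : ℕ) (b : ℕ → T) : Symbol T (NTy k n) → Language T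
  | terminal t => {[t]}
  | nonterminal A => {w | Sem k n b A w}

lemma CL_step {T : Type} (k n : ℕ) (b : ℕ → T) (j : Fin (n + k)) (w : List T) :
    CL n b (j + 1) w ↔ ∃ u v, CL n b j u ∧ Sem k n b (second k n j) v ∧ w = u ++ v := by
  unfold second
  split_ifs with h
  · simp only [Sem, Fin.val_castSucc]
    rw [CL_le (by omega)]
    simp only [CL_le h.le]
    constructor
    · rintro rfl
      exact ⟨_, _, rfl, rfl, by rw [← List.replicate_add]; congr 1; ring⟩
    · rintro ⟨_, _, rfl, rfl, rfl⟩
      rw [← List.replicate_add]; congr 1; ring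
  · have e : j.val + 1 - n = (j.val - n) + 1 := by omega
    have h2 : ¬ j.val + 1 < n := by omega
    simp only [CL, h, h2, if_false, e, PW, Sem]
    constructor
    · rintro ⟨u, c, hu, hc, rfl⟩
      exact ⟨u, _, hu, ⟨c, hc, rfl⟩, rfl⟩
    · rintro ⟨u, _, hu, ⟨c, hc, rfl⟩, rfl⟩
      exact ⟨u, c, hu, hc, rfl⟩

lemma rep_succ {T : Type} (c : ℕ) (x : T) :
    List.replicate (c + 1) x = List.replicate c x ++ [x] := by
  rw [List.replicate_add]; rfl

lemma sound_bin {T : Type} {k n : ℕ} {b : ℕ → T} {A B C : NTy k n}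
    (h : ∀ u v, Sem k n b B u → Sem k n b C v → Sem k n b A (u ++ v)) :
    (((bin A B C : ContextFreeRule T (NTy k n)).output).map (SS k n b)).prod ≤
      SS k n b (nonterminal A) := by
  intro w hw
  simp only [bin, List.map_cons, List.map_nil, List.prod_cons, List.prod_nil, mul_one] at hw
  obtain ⟨u, hu, v, hv, rfl⟩ := Language.mem_mul.1 hw
  exact h u v hu hv

lemma sound_rule {T : Type} (k n : ℕ) (b : ℕ → T) (r : ContextFreeRule T (NTy k n))
    (hr : r ∈ ruleSet k n b) :
    (r.output.map (SS k n b)).prod ≤ SS k n b (nonterminal r.input) := by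
  rcases hr with (((⟨i, rfl⟩ | ⟨j, rfl⟩) | ⟨i, rfl⟩) | ⟨i, rfl⟩) | ⟨i, rfl⟩
  · simp only [List.map_cons, List.map_nil, List.prod_cons, List.prod_nil, mul_one]
    intro w hw
    exact (Sem_lt k n b i w).2 hw
  · refine sound_bin fun u v hu hv => ?_
    simp only [Sem, Fin.val_succ]
    exact (CL_step k n b j _).2 ⟨u, v, hu, hv, rfl⟩
  · refine sound_bin fun u v hu hv => ?_
    rw [Sem_lt] at hu hv
    subst hu hv
    exact ⟨1, le_rfl, by simp⟩
  · refine sound_bin fun u v hu hv => ?_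
    rw [Sem_lt] at hu
    obtain ⟨c, hc, rfl⟩ := hv
    subst hu
    exact ⟨c + 1, by omega, by simp [List.replicate_succ]⟩
  · refine sound_bin fun u v hu hv => ?_
    rw [Sem_lt] at hv
    obtain ⟨c, hc, rfl⟩ := hu
    subst hv
    exact ⟨c, hc, by rw [rep_succ]; simp⟩

lemma sound_ctx {T : Type} (k n : ℕ) (b : ℕ → T) (p q o : List (Symbol T (NTy k n)))
    (A : NTy k n) (h : (o.map (SS k n b)).prod ≤ SS k n b (nonterminal A)) :
    ((p ++ o ++ q).map (SS k n b)).prod ≤ ((p ++ [nonterminal A] ++ q).map (SS k n b)).prod := by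
  simp only [List.map_append, List.prod_append, List.map_cons, List.map_nil, List.prod_cons,
    List.prod_nil, mul_one]
  exact mul_le_mul' (mul_le_mul' le_rfl h) le_rfl

lemma sound {T : Type} (k n : ℕ) (b : ℕ → T) (u v : List (Symbol T (NTy k n)))
    (h : (G k n b).Derives u v) : (v.map (SS k n b)).prod ≤ (u.map (SS k n b)).prod := by
  induction h with
  | refl => exact le_rfl
  | tail _ h ih =>
    refine le_trans ?_ ih
    obtain ⟨r, hr, hrw⟩ := h
    obtain ⟨p, q, rfl, rfl⟩ := hrw.exists_parts
    have := sound_rule k n b r ((ruleSet_finite k n b).mem_toFinset.1 hr)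
    exact sound_ctx k n b p q r.output r.input this

lemma word_mem {T : Type} (k n : ℕ) (b : ℕ → T) (w : List T) :
    w ∈ ((w.map terminal).map (SS k n b)).prod := by
  induction w with
  | nil => simp
  | cons x w ih =>
    simp only [List.map_cons, List.prod_cons]
    exact Language.mem_mul.2 ⟨[x], rfl, w, ih, rfl⟩

/-- Derivability of a word from a nonterminal. -/
def D {T : Type} (k n : ℕ) (b : ℕ → T) (A : NTy k n) (w : List T) : Prop :=
  (G k n b).Derives [nonterminal A] (w.map terminal)

lemma D_bin {T : Type} {k n : ℕ} {b : ℕ → T} {A B C : NTy k n} {u v : List T}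
    (h : bin A B C ∈ ruleSet k n b) (hu : D k n b B u) (hv : D k n b C v) :
    D k n b A (u ++ v) := by
  have h1 : (G k n b).Produces [nonterminal A] [nonterminal B, nonterminal C] :=
    ⟨bin A B C, (ruleSet_finite k n b).mem_toFinset.2 h, ContextFreeRule.Rewrites.input_output⟩
  refine h1.trans_derives ?_
  have h2 := ContextFreeGrammar.Derives.append_right hu [nonterminal C]
  have h3 := ContextFreeGrammar.Derives.append_left hv (u.map terminal)
  rw [List.map_append]
  exact h2.trans h3

lemma D_lt {T : Type} (k n : ℕ) (b : ℕ → T) (i : Fin (k + 1)) : D k n b (lt k n i) [b i] := by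
  refine ContextFreeGrammar.Produces.single ⟨⟨lt k n i, [terminal (b i)]⟩,
    (ruleSet_finite k n b).mem_toFinset.2 ?_, ContextFreeRule.Rewrites.input_output⟩
  exact Or.inl (Or.inl (Or.inl (Or.inl ⟨i, rfl⟩)))

lemma D_pair {T : Type} (k n : ℕ) (b : ℕ → T) (i : Fin k) (c : ℕ) :
    D k n b (Sum.inr (1, i))
      (List.replicate (c + 1) (b i) ++ List.replicate (c + 1) (b (i + 1))) := by
  induction c with
  | zero =>
    have := D_bin (Or.inl (Or.inl (Or.inr ⟨i, rfl⟩))) (D_lt k n b i.castSucc) (D_lt k n b i.succ)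
    simpa using this
  | succ c ih =>
    have h1 := D_bin (Or.inr ⟨i, rfl⟩) ih (D_lt k n b i.succ)
    have h2 := D_bin (Or.inl (Or.inr ⟨i, rfl⟩)) (D_lt k n b i.castSucc) h1
    rw [rep_succ (c + 1) (b (i + 1)), List.replicate_succ (n := c + 1)]
    simpa using h2

lemma D_chain {T : Type} (k n : ℕ) (b : ℕ → T) (j : ℕ) (hj : j < n + k + 1) (w : List T)
    (h : CL n b j w) : D k n b (Sum.inl ⟨j, hj⟩) w := by
  induction j generalizing w with
  | zero =>
    rw [CL_le (by omega)] at h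
    subst h
    exact D_lt k n b 0
  | succ j ih =>
    have hj' : j < n + k := by omega
    obtain ⟨u, v, hu, hv, rfl⟩ := (CL_step k n b ⟨j, hj'⟩ w).1 h
    refine D_bin (B := Sum.inl ⟨j, by omega⟩)
      (Or.inl (Or.inl (Or.inl (Or.inr ⟨⟨j, hj'⟩, rfl⟩)))) (ih (by omega) u hu) ?_
    unfold second at hv ⊢
    split_ifs at hv ⊢ with h1
    · exact ih (by omega) v hv
    · obtain ⟨c, hc, rfl⟩ := hv
      obtain ⟨c, rfl⟩ : ∃ d, c = d + 1 := ⟨c - 1, by omega⟩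
      exact D_pair k n b _ c

lemma G_lang {T : Type} (k n : ℕ) (b : ℕ → T) (w : List T) :
    w ∈ (G k n b).language ↔ PW n b k w := by
  have e : CL n b (n + k) w ↔ PW n b k w := by simp [CL]
  rw [← e]
  constructor
  · intro h
    have := sound k n b [nonterminal (Sum.inl (Fin.last _))] _ h (word_mem k n b w)
    simp only [List.map_cons, List.map_nil, List.prod_cons, List.prod_nil, mul_one] at this
    exact this
  · intro h
    exact D_chain k n b (n + k) (by omega) w h

lemma PW_iff {T : Type} (n : ℕ) (b : ℕ → T) (i : ℕ) (w : List T) :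
    PW n b i w ↔ ∃ f : ℕ → ℕ, f 0 = 2 ^ n ∧ (∀ j, 1 ≤ j → j ≤ i → 1 ≤ f j) ∧
      w = (List.range i).flatMap (fun j => List.replicate (f j + f (j + 1)) (b j)) ++
        List.replicate (f i) (b i) := by
  induction i generalizing w with
  | zero =>
    constructor
    · intro h
      exact ⟨fun _ => 2 ^ n, rfl, fun j h1 h2 => by omega, by simpa [PW] using h⟩
    · rintro ⟨f, h0, -, rfl⟩
      simp [PW, h0]
  | succ i ih =>
    simp only [PW]
    constructor
    · rintro ⟨u, c, hu, hc, rfl⟩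
      obtain ⟨f, h0, h1, rfl⟩ := (ih u).1 hu
      refine ⟨fun j => if j ≤ i then f j else c, by simp [h0], ?_, ?_⟩
      · intro j hj1 hj2
        dsimp only
        split_ifs with h
        · exact h1 j hj1 h
        · exact hc
      · have e : (List.range i).flatMap (fun j => List.replicate
            ((if j ≤ i then f j else c) + (if j + 1 ≤ i then f (j + 1) else c)) (b j)) =
            (List.range i).flatMap (fun j => List.replicate (f j + f (j + 1)) (b j)) := by
          refine List.flatMap_congr fun j hj => ?_
          have := List.mem_range.1 hj
          rw [if_pos (by omega), if_pos (by omega)]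
        rw [List.range_succ, List.flatMap_append, e]
        simp [← List.append_assoc]
        rw [List.append_assoc, List.replicate_add]
    · rintro ⟨f, h0, h1, rfl⟩
      refine ⟨_, f (i + 1), (ih _).2 ⟨f, h0, fun j a c => h1 j a (by omega), rfl⟩,
        h1 _ (by omega) le_rfl, ?_⟩
      rw [List.range_succ, List.flatMap_append]
      simp [← List.append_assoc]
      rw [List.append_assoc, List.replicate_add]

end Ltilde

theorem stmt_7 {T : Type} {m : ℕ} (hm : 2 ≤ m) (a : Fin m → T) (ha : Function.Injective a)
    (n : ℕ) (hn : 1 ≤ n) :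
    ∃ (g : ContextFreeGrammar T) (_ : Fintype g.NT),
      g.IsCNF ∧
      g.language = LtildeLang m n a ∧
      Fintype.card g.NT ≤ n + 4 * m - 3 := by
  obtain ⟨k, rfl⟩ : ∃ k, m = k + 1 := ⟨m - 1, by omega⟩
  let b : ℕ → T := fun j => if h : j < k + 1 then a ⟨j, h⟩ else a 0
  refine ⟨Ltilde.G k n b, inferInstanceAs (Fintype (Ltilde.NTy k n)), ?_, ?_, ?_⟩
  · intro r hr
    have hr' := (Ltilde.ruleSet_finite k n b).mem_toFinset.1 hr
    rcases hr' with (((⟨i, rfl⟩ | ⟨j, rfl⟩) | ⟨i, rfl⟩) | ⟨i, rfl⟩) | ⟨i, rfl⟩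
    · exact Or.inr ⟨_, rfl⟩
    all_goals exact Or.inl ⟨_, _, rfl⟩
  · have key : ∀ f : ℕ → ℕ, f (k + 1) = 0 →
        (List.ofFn fun i : Fin (k + 1) =>
            List.replicate (f i.val + f (i.val + 1)) (a i)).flatten =
        (List.range k).flatMap (fun j => List.replicate (f j + f (j + 1)) (b j)) ++
        List.replicate (f k) (b k) := by
      intro f hf
      have e : (List.ofFn fun i : Fin (k + 1) =>
            List.replicate (f i.val + f (i.val + 1)) (a i)) =
          (List.range (k + 1)).map (fun j => List.replicate (f j + f (j + 1)) (b j)) := by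
        refine List.ext_getElem (by simp) fun i h1 h2 => ?_
        have h3 : i < k + 1 := by simpa using h1
        rw [List.getElem_ofFn, List.getElem_map, List.getElem_range]
        simp only [b, dif_pos h3]
      rw [e, List.range_succ]
      simp [hf, List.flatMap]
    ext w
    rw [Ltilde.G_lang, Ltilde.PW_iff]
    constructor
    · rintro ⟨f, h0, h1, rfl⟩
      refine ⟨fun j => if j ≤ k then f j else 0, by simp [h0], ?_, by simp, ?_⟩
      · intro j hj1 hj2
        have : j ≤ k := by omega
        simpa [this] using h1 j hj1 this
      · refine Eq.trans ?_ (key (fun j => if j ≤ k then f j else 0) (by simp)).symm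
        congr 1
        · refine List.flatMap_congr fun j hj => ?_
          have := List.mem_range.1 hj
          rw [if_pos (by omega), if_pos (by omega)]
        · simp
    · rintro ⟨f, h0, h1, h2, rfl⟩
      exact ⟨f, h0, fun j a c => h1 j a (by omega), key f h2⟩
  · change Fintype.card (Ltilde.NTy k n) ≤ _
    simp only [Fintype.card_sum, Fintype.card_prod, Fintype.card_fin]
    omega
end

section
/- Let m ≥ 2 and let a_1, …, a_m be pairwise distinct symbols, and consider the language L = { a_1^{n_1} a_2^{n_1 + n_2} ⋯ a_{m-1}^{n_{m-2} + n_{m-1}} a_m^{n_{m-1}} : n_1 ≥ 1, …, n_{m-1} ≥ 1 }. Then every context-free grammar G with L(G) = L has rank at least m − 1; that is, there exists a sentential form α derivable from the start symbol of G (S ⇒* α) that contains at least m − 1 occurrences of nonterminals. -/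
/-- The language `L = { a_1^{n_1} a_2^{n_1 + n_2} ⋯ a_{m-1}^{n_{m-2}+n_{m-1}} a_m^{n_{m-1}}
: n_1 ≥ 1, …, n_{m-1} ≥ 1 }`, encoded via a function `f : ℕ → ℕ` with `f 0 = 0`,
`f j = n_j ≥ 1` for `1 ≤ j ≤ m-1`, and `f m = 0`; the block of the letter `a_{i+1}`
(for `0 ≤ i ≤ m-1`) has length `f i + f (i+1)`. -/
def boundedSumLang {T : Type} (m : ℕ) (a : Fin m → T) : Language T :=
  { z | ∃ f : ℕ → ℕ, f 0 = 0 ∧ (∀ j : ℕ, 1 ≤ j → j ≤ m - 1 → 1 ≤ f j) ∧ f m = 0 ∧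
      z = (List.ofFn fun i : Fin m =>
            List.replicate (f i.val + f (i.val + 1)) (a i)).flatten }

/-- Whether a symbol is a nonterminal. -/
def Symbol.isNT {T N : Type} : Symbol T N → Bool
  | Symbol.nonterminal _ => true
  | Symbol.terminal _ => false

namespace RankProof

open ContextFreeGrammar

/-- terminal words as sentential forms -/
abbrev tm {T N : Type} (w : List T) : List (Symbol T N) := w.map Symbol.terminal

variable {T : Type}

open Classical in
/-- Parse forests: `Der g α w n U` says that `w` is derived from `α` by a forest with `n` inner nodes
whose labels form the set `U`. -/
inductive Der (g : ContextFreeGrammar T) :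
    List (Symbol T g.NT) → List T → ℕ → Finset g.NT → Prop
  | nil : Der g [] [] 0 ∅
  | term (t : T) {α w n U} : Der g α w n U → Der g (Symbol.terminal t :: α) (t :: w) n U
  | nt (r : ContextFreeRule T g.NT) (hr : r ∈ g.rules) {u n₁ U₁ α w n₂ U₂} :
      Der g r.output u n₁ U₁ → Der g α w n₂ U₂ →
      Der g (Symbol.nonterminal r.input :: α) (u ++ w) (n₁ + n₂ + 1) (insert r.input (U₁ ∪ U₂))

variable {g : ContextFreeGrammar T}

lemma ctx {α β : List (Symbol T g.NT)} (h : g.Derives α β) (p q : List (Symbol T g.NT)) :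
    g.Derives (p ++ α ++ q) (p ++ β ++ q) := (h.append_left p).append_right q

lemma app {α β γ δ : List (Symbol T g.NT)} (h : g.Derives α β) (h' : g.Derives γ δ) :
    g.Derives (α ++ γ) (β ++ δ) := (h.append_right γ).trans (h'.append_left β)

lemma rule {r : ContextFreeRule T g.NT} (hr : r ∈ g.rules) :
    g.Derives [Symbol.nonterminal r.input] r.output :=
  Produces.single ⟨r, hr, ContextFreeRule.Rewrites.input_output⟩

lemma Der.derives {α w n U} (h : Der g α w n U) : g.Derives α (tm w) := by
  induction h with
  | nil => exact Derives.refl _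
  | term t _ ih => exact ih.append_left [Symbol.terminal t]
  | nt r hr _ _ ih1 ih2 =>
    have := app ((rule hr).trans ih1) ih2
    simpa [tm] using this

lemma Der.split {α β : List (Symbol T g.NT)} : ∀ {w n U}, Der g (α ++ β) w n U →
    ∃ w₁ n₁ U₁ w₂ n₂ U₂, Der g α w₁ n₁ U₁ ∧ Der g β w₂ n₂ U₂ ∧ w = w₁ ++ w₂ := by
  induction α with
  | nil => intro w n U h; exact ⟨[], 0, ∅, w, n, U, Der.nil, h, rfl⟩
  | cons x α ih =>
    intro w n U h
    rw [List.cons_append] at h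
    cases h with
    | term t h =>
      obtain ⟨w₁, n₁, U₁, w₂, n₂, U₂, h1, h2, rfl⟩ := ih h
      exact ⟨_, _, _, _, _, _, h1.term t, h2, rfl⟩
    | nt r hr h0 h =>
      obtain ⟨w₁, n₁, U₁, w₂, n₂, U₂, h1, h2, rfl⟩ := ih h
      exact ⟨_, _, _, _, _, _, Der.nt r hr h0 h1, h2, by simp⟩

lemma Der.unrewrite {r : ContextFreeRule T g.NT} (hr : r ∈ g.rules) {α β} (h : r.Rewrites α β) :
    ∀ {w n U}, Der g β w n U → ∃ n' U', Der g α w n' U' := by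
  induction h with
  | head s =>
    intro w n U h
    obtain ⟨w₁, n₁, U₁, w₂, n₂, U₂, h1, h2, rfl⟩ := h.split
    exact ⟨_, _, Der.nt r hr h1 h2⟩
  | cons x _ ih =>
    intro w n U h
    cases h with
    | term t h =>
      obtain ⟨_, _, h1⟩ := ih h
      exact ⟨_, _, h1.term t⟩
    | nt r hr h0 h =>
      obtain ⟨_, _, h1⟩ := ih h
      exact ⟨_, _, Der.nt r hr h0 h1⟩

lemma Der.ofTerm (w : List T) : Der g (tm w) w 0 ∅ := by
  induction w with
  | nil => exact Der.nil
  | cons t w ih => exact ih.term t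

lemma Der.ofDerives {α : List (Symbol T g.NT)} {w : List T} (h : g.Derives α (tm w)) :
    ∃ n U, Der g α w n U := by
  induction h using Relation.ReflTransGen.head_induction_on with
  | refl => exact ⟨_, _, Der.ofTerm w⟩
  | head h _ ih =>
    obtain ⟨r, hr, h⟩ := h
    obtain ⟨n, U, ih⟩ := ih
    exact Der.unrewrite hr h ih

/-- a node with label `A` can be located in the forest -/
lemma Der.locate {α w n U} (h : Der g α w n U) {A : g.NT} (hA : A ∈ U) :
    ∃ x y z r n' U', r ∈ g.rules ∧ r.input = A ∧ Der g r.output y n' U' ∧ n' < n ∧ U' ⊆ U ∧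
      w = x ++ y ++ z ∧ g.Derives α (tm x ++ [Symbol.nonterminal A] ++ tm z) := by
  classical
  induction h with
  | nil => simp at hA
  | term t _ ih =>
    obtain ⟨x, y, z, r, n', U', hr, hi, hd, hn, hU, rfl, hder⟩ := ih hA
    refine ⟨t :: x, y, z, r, n', U', hr, hi, hd, hn, hU, by simp, ?_⟩
    simpa [tm] using hder.append_left [Symbol.terminal t]
  | @nt r₀ hr₀ u n₁ U₁ α w n₂ U₂ h1 h2 ih1 ih2 =>
    rw [Finset.mem_insert, Finset.mem_union] at hA
    rcases hA with rfl | hA | hA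
    · refine ⟨[], u, w, r₀, n₁, U₁, hr₀, rfl, h1, by omega, ?_, by simp, ?_⟩
      · intro x hx; simp [hx]
      · simpa [tm] using h2.derives.append_left [Symbol.nonterminal r₀.input]
    · obtain ⟨x, y, z, r, n', U', hr, hi, hd, hn, hU, rfl, hder⟩ := ih1 hA
      refine ⟨x, y, z ++ w, r, n', U', hr, hi, hd, by omega, ?_, by simp, ?_⟩
      · intro x hx; simp [hU hx]
      · simpa [tm] using app ((rule hr₀).trans hder) h2.derives
    · obtain ⟨x, y, z, r, n', U', hr, hi, hd, hn, hU, rfl, hder⟩ := ih2 hA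
      refine ⟨u ++ x, y, z, r, n', U', hr, hi, hd, by omega, ?_, by simp, ?_⟩
      · intro x hx; simp [hU hx]
      · simpa [tm] using app ((rule hr₀).trans h1.derives) hder

lemma Der.card_le {α w n U} (h : Der g α w n U) : U.card ≤ g.rules.card := by
  classical
  have : U ⊆ g.rules.image (fun r => r.input) := by
    induction h with
    | nil => simp
    | term t _ ih => exact ih
    | nt r hr _ _ ih1 ih2 =>
      exact Finset.insert_subset (Finset.mem_image_of_mem _ hr) (Finset.union_subset ih1 ih2)
  exact (Finset.card_le_card this).trans Finset.card_image_le

/-- either the forest contains a pump, or its yield is short -/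
lemma Der.pump_or_short {M : ℕ} (hM1 : 1 ≤ M) (hM : ∀ r ∈ g.rules, r.output.length ≤ M)
    {α w n U} (h : Der g α w n U) :
    (∃ x u y v z C n' U', w = x ++ u ++ y ++ v ++ z ∧
      g.Derives α (tm x ++ [Symbol.nonterminal C] ++ tm z) ∧
      g.Derives [Symbol.nonterminal C] (tm u ++ [Symbol.nonterminal C] ++ tm v) ∧
      g.Derives [Symbol.nonterminal C] (tm y) ∧
      Der g α (x ++ y ++ z) n' U' ∧ n' < n ∧ U' ⊆ U ∧ C ∈ U) ∨
    w.length ≤ α.length * M ^ U.card := by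
  classical
  induction h with
  | nil => right; simp
  | @term t α w n U _ ih =>
    rcases ih with ⟨x, u, y, v, z, C, n', U', rfl, h1, h2, h3, h4, hn, hU, hC⟩ | ih
    · left
      refine ⟨t :: x, u, y, v, z, C, n', U', by simp, ?_, h2, h3, h4.term t, hn, hU, hC⟩
      simpa [tm] using h1.append_left [Symbol.terminal t]
    · right
      have : 1 ≤ M ^ U.card := Nat.one_le_pow _ _ hM1
      simp only [List.length_cons, add_mul, one_mul]
      omega
  | @nt r₀ hr₀ w₁ n₁ U₁ α w n₂ U₂ d1 d2 ih1 ih2 =>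
    rcases ih1 with ⟨x, u, y, v, z, C, n', U', rfl, h1, h2, h3, h4, hn, hU, hC⟩ | ih1
    · left
      refine ⟨x, u, y, v, z ++ w, C, n' + n₂ + 1, insert r₀.input (U' ∪ U₂), by simp, ?_, h2, h3,
        ?_, by omega, ?_, by simp [hC]⟩
      · simpa [tm] using app ((rule hr₀).trans h1) d2.derives
      · simpa using Der.nt r₀ hr₀ h4 d2
      · exact Finset.insert_subset_insert _ (Finset.union_subset_union_left hU)
    rcases ih2 with ⟨x, u, y, v, z, C, n', U', rfl, h1, h2, h3, h4, hn, hU, hC⟩ | ih2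
    · left
      refine ⟨w₁ ++ x, u, y, v, z, C, n₁ + n' + 1, insert r₀.input (U₁ ∪ U'), by simp, ?_, h2, h3,
        ?_, by omega, ?_, by simp [hC]⟩
      · simpa [tm] using app ((rule hr₀).trans d1.derives) h1
      · simpa using Der.nt r₀ hr₀ d1 h4
      · exact Finset.insert_subset_insert _ (Finset.union_subset_union_right hU)
    by_cases hA : r₀.input ∈ U₁
    · left
      obtain ⟨x, y, z, r, n', U', hr, hi, hd, hn, hU, rfl, hder⟩ := d1.locate hA
      refine ⟨[], x, y, z, w, r₀.input, n' + n₂ + 1, insert r₀.input (U' ∪ U₂), by simp, ?_,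
        (rule hr₀).trans hder, ?_, ?_, by omega, ?_, by simp⟩
      · simpa [tm] using d2.derives.append_left [Symbol.nonterminal r₀.input]
      · rw [← hi]; exact (rule hr).trans hd.derives
      · rw [← hi]; simpa using Der.nt r hr hd d2
      · exact Finset.insert_subset_insert _ (Finset.union_subset_union_left hU)
    · right
      have c1 : U₁.card + 1 ≤ (insert r₀.input (U₁ ∪ U₂)).card := by
        rw [← Finset.card_insert_of_notMem hA]
        exact Finset.card_le_card (Finset.insert_subset_insert _ Finset.subset_union_left)
      have c2 : U₂.card ≤ (insert r₀.input (U₁ ∪ U₂)).card :=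
        Finset.card_le_card (Finset.subset_union_right.trans (Finset.subset_insert _ _))
      have e1 : w₁.length ≤ M ^ (insert r₀.input (U₁ ∪ U₂)).card := calc
        w₁.length ≤ r₀.output.length * M ^ U₁.card := ih1
        _ ≤ M * M ^ U₁.card := Nat.mul_le_mul_right _ (hM _ hr₀)
        _ = M ^ (U₁.card + 1) := by ring
        _ ≤ _ := Nat.pow_le_pow_right hM1 c1
      have e2 : w.length ≤ α.length * M ^ (insert r₀.input (U₁ ∪ U₂)).card :=
        ih2.trans (Nat.mul_le_mul_left _ (Nat.pow_le_pow_right hM1 c2))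
      simp only [List.length_cons, List.length_append, add_mul, one_mul]
      omega

/-! ### The language -/

variable {m : ℕ}

open Classical in
/-- number of occurrences of the `j`-th letter -/
noncomputable def cnt (a : Fin m → T) (j : ℕ) (w : List T) : ℕ :=
  if h : j < m then w.count (a ⟨j, h⟩) else 0

/-- the parameter `n_j` of a word, as a linear functional of the letter counts -/
noncomputable def FF (a : Fin m → T) : ℕ → List T → ℤ
  | 0, _ => 0
  | j + 1, w => (cnt a j w : ℤ) - FF a j w

lemma cnt_append (a : Fin m → T) (j : ℕ) (u v : List T) :
    cnt a j (u ++ v) = cnt a j u + cnt a j v := by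
  unfold cnt; split <;> simp

lemma FF_append (a : Fin m → T) (j : ℕ) (u v : List T) :
    FF a j (u ++ v) = FF a j u + FF a j v := by
  induction j with
  | zero => simp [FF]
  | succ j ih => simp only [FF, ih, cnt_append]; push_cast; ring

/-- the order on letters -/
def R (a : Fin m → T) (s t : T) : Prop := ∃ i j : Fin m, i ≤ j ∧ a i = s ∧ a j = t

lemma R_le {a : Fin m → T} (ha : Function.Injective a) {i j : Fin m} (h : R a (a i) (a j)) :
    i ≤ j := by
  obtain ⟨i', j', hij, h1, h2⟩ := h
  rw [← ha h1, ← ha h2]; exact hij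

lemma lang_sorted {a : Fin m → T} {w : List T} (h : w ∈ boundedSumLang m a) :
    w.Pairwise (R a) := by
  obtain ⟨f, -, -, -, rfl⟩ := h
  rw [List.pairwise_flatten, List.pairwise_ofFn]
  constructor
  · intro l hl
    obtain ⟨i, rfl⟩ := (List.mem_ofFn' _ _).1 hl
    rw [List.pairwise_replicate]
    right; exact ⟨i, i, le_rfl, rfl, rfl⟩
  · intro i j hij x hx y hy
    rw [List.mem_replicate] at hx hy
    exact ⟨i, j, hij.le, hx.2.symm, hy.2.symm⟩

lemma cnt_word {a : Fin m → T} (ha : Function.Injective a) (f : ℕ → ℕ) {j : ℕ} (hj : j < m) :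
    cnt a j (List.ofFn fun i : Fin m =>
            List.replicate (f i.val + f (i.val + 1)) (a i)).flatten = f j + f (j + 1) := by
  classical
  unfold cnt
  rw [dif_pos hj, List.count_flatten, List.map_ofFn, List.sum_ofFn,
    Finset.sum_eq_single (⟨j, hj⟩ : Fin m)]
  · simp
  · intro b _ hb
    simp only [Function.comp, List.count_replicate]
    rw [if_neg]
    simpa using fun h => hb (ha h)
  · simp

lemma FF_word {a : Fin m → T} (ha : Function.Injective a) (f : ℕ → ℕ) (h0 : f 0 = 0) {j : ℕ}
    (hj : j ≤ m) :
    FF a j (List.ofFn fun i : Fin m =>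
            List.replicate (f i.val + f (i.val + 1)) (a i)).flatten = f j := by
  induction j with
  | zero => simp [FF, h0]
  | succ j ih =>
    rw [FF, ih (by omega), cnt_word ha f (by omega)]; push_cast; ring

lemma FF_nonneg {a : Fin m → T} (ha : Function.Injective a) {w : List T}
    (h : w ∈ boundedSumLang m a) {j : ℕ} (hj : j ≤ m) : 0 ≤ FF a j w := by
  obtain ⟨f, h0, -, -, rfl⟩ := h
  rw [FF_word ha f h0 hj]; positivity

lemma FF_le {a : Fin m → T} (ha : Function.Injective a) {w : List T}
    (h : w ∈ boundedSumLang m a) {j : ℕ} (hj : j < m) : FF a (j + 1) w ≤ w.length := by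
  classical
  have h1 := FF_nonneg ha h hj.le
  have h2 : cnt a j w ≤ w.length := by
    unfold cnt; rw [dif_pos hj]; exact List.count_le_length
  rw [FF]; omega

lemma cnt_pos {a : Fin m → T} {j : ℕ} (hj : j < m) {u : List T} (h : 0 < cnt a j u) :
    a ⟨j, hj⟩ ∈ u := by
  classical
  unfold cnt at h; rw [dif_pos hj] at h
  exact List.count_pos_iff.1 h

/-- iterated pumps -/
lemma iter (a : Fin m → T) {C : g.NT} {u v : List T}
    (h : g.Derives [Symbol.nonterminal C] (tm u ++ [Symbol.nonterminal C] ++ tm v)) (k : ℕ) :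
    ∃ P Q : List T, g.Derives [Symbol.nonterminal C] (tm P ++ [Symbol.nonterminal C] ++ tm Q) ∧
      ∀ j, FF a j P + FF a j Q = k * (FF a j u + FF a j v) := by
  induction k with
  | zero =>
    refine ⟨[], [], Derives.refl _, fun j => ?_⟩
    have := FF_append a j [] []
    simp at this
    simp [this]
  | succ k ih =>
    obtain ⟨P, Q, hd, hj⟩ := ih
    refine ⟨P ++ u, v ++ Q, ?_, fun j => ?_⟩
    · have := hd.trans (ctx h (tm P) (tm Q))
      simpa [tm] using this
    · rw [FF_append, FF_append]; push_cast; linarith [hj j]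

/-- the fundamental property of pumps -/
lemma pump_type {a : Fin m → T} (ha : Function.Injective a) (hg : g.language = boundedSumLang m a)
    {x u y v z : List T} {C : g.NT}
    (h1 : g.Derives [Symbol.nonterminal g.initial] (tm x ++ [Symbol.nonterminal C] ++ tm z))
    (h2 : g.Derives [Symbol.nonterminal C] (tm u ++ [Symbol.nonterminal C] ++ tm v))
    (h3 : g.Derives [Symbol.nonterminal C] (tm y)) {i : ℕ} (hi : i + 1 < m)
    (hne : FF a (i + 1) u + FF a (i + 1) v ≠ 0) :
    a ⟨i, by omega⟩ ∈ u ∧ a ⟨i + 1, hi⟩ ∈ v := by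
  have key : ∀ P Q, g.Derives [Symbol.nonterminal C] (tm P ++ [Symbol.nonterminal C] ++ tm Q) →
      x ++ (P ++ y ++ Q) ++ z ∈ boundedSumLang m a := by
    intro P Q h
    rw [← hg, mem_language_iff]
    have := h1.trans (ctx (h.trans (ctx h3 _ _)) (tm x) (tm z))
    simpa [tm] using this
  have D : ∀ j ≤ m, 0 ≤ FF a j u + FF a j v := by
    intro j hj
    by_contra hneg
    obtain ⟨P, Q, hd, hPQ⟩ := iter a h2 ((FF a j x + FF a j y + FF a j z).toNat + 1)
    have h := FF_nonneg ha (key P Q hd) hj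
    simp only [FF_append] at h
    have h' := hPQ j
    have : FF a j x + FF a j y + FF a j z ≤ (FF a j x + FF a j y + FF a j z).toNat :=
      Int.self_le_toNat _
    push_cast at h'
    nlinarith
  have hs := lang_sorted (key (u ++ u) (v ++ v) (by
    have := h2.trans (ctx h2 (tm u) (tm v))
    simpa [tm] using this))
  simp only [List.pairwise_append, List.mem_append] at hs
  have d1 := D i (by omega)
  have d2 := D (i + 1) (by omega)
  have d3 := D (i + 2) (by omega)
  have e1 : FF a (i + 1) u = cnt a i u - FF a i u := rfl
  have e2 : FF a (i + 1) v = cnt a i v - FF a i v := rfl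
  have e3 : FF a (i + 2) u = cnt a (i + 1) u - FF a (i + 1) u := rfl
  have e4 : FF a (i + 2) v = cnt a (i + 1) v - FF a (i + 1) v := rfl
  have uu : ∀ s ∈ u, ∀ t ∈ u, R a s t := by tauto
  have vv : ∀ s ∈ v, ∀ t ∈ v, R a s t := by tauto
  have uv : ∀ s ∈ u, ∀ t ∈ v, R a s t := by
    intro s hs' t ht; exact hs.1.2.1.2.2 s (Or.inl (Or.inl hs')) t (Or.inl ht)
  have bad : ¬ R a (a ⟨i + 1, hi⟩) (a ⟨i, by omega⟩) := by
    intro h; have := R_le ha h; simp at this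
  have f1 : a ⟨i, by omega⟩ ∈ u ∨ a ⟨i, by omega⟩ ∈ v := by
    by_cases h : 0 < cnt a i u
    · exact Or.inl (cnt_pos _ h)
    · exact Or.inr (cnt_pos _ (by omega))
  have f2 : a ⟨i + 1, hi⟩ ∈ u ∨ a ⟨i + 1, hi⟩ ∈ v := by
    by_cases h : 0 < cnt a (i + 1) u
    · exact Or.inl (cnt_pos _ h)
    · exact Or.inr (cnt_pos _ (by omega))
  rcases f1 with f1 | f1 <;> rcases f2 with f2 | f2
  · exact absurd (uu _ f2 _ f1) bad
  · exact ⟨f1, f2⟩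
  · exact absurd (uv _ f2 _ f1) bad
  · exact absurd (vv _ f2 _ f1) bad

/-- nonterminals that pump the `i`-th parameter -/
def X (g : ContextFreeGrammar T) (a : Fin m → T) (i : Fin (m - 1)) (C : g.NT) : Prop :=
  ∃ u v : List T, g.Derives [Symbol.nonterminal C] (tm u ++ [Symbol.nonterminal C] ++ tm v) ∧
    a ⟨i, by omega⟩ ∈ u ∧ a ⟨i + 1, by omega⟩ ∈ v

lemma bounded {a : Fin m → T} (ha : Function.Injective a) (hg : g.language = boundedSumLang m a)
    {M : ℕ} (hM1 : 1 ≤ M) (hM : ∀ r ∈ g.rules, r.output.length ≤ M) (i : Fin (m - 1)) (n : ℕ) :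
    ∀ w U, Der g [Symbol.nonterminal g.initial] w n U → (∀ C ∈ U, ¬ X g a i C) →
      FF a (i + 1) w ≤ (M ^ g.rules.card : ℕ) := by
  induction n using Nat.strong_induction_on with
  | _ n ih =>
    intro w U h hU
    have hw : w ∈ boundedSumLang m a := by rw [← hg]; exact h.derives
    rcases h.pump_or_short hM1 hM with
      ⟨x, u, y, v, z, C, n', U', rfl, h1, h2, h3, h4, hn, hUU, hC⟩ | hl
    · have hlt := ih n' hn _ _ h4 (fun C hC => hU C (hUU hC))
      have hz : FF a (i + 1) u + FF a (i + 1) v = 0 := by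
        by_contra hne
        obtain ⟨q1, q2⟩ := pump_type ha hg h1 h2 h3 (i := i) (by omega) hne
        exact hU C hC ⟨u, v, h2, q1, q2⟩
      simp only [FF_append] at hlt ⊢
      linarith
    · refine (FF_le ha hw (by omega)).trans ?_
      have := Nat.pow_le_pow_right hM1 h.card_le
      simp only [List.length_singleton, one_mul] at hl
      exact_mod_cast hl.trans this

/-- nodes of different types are incomparable -/
lemma incomparable {a : Fin m → T} (ha : Function.Injective a)
    (hg : g.language = boundedSumLang m a) {x y c y' z : List T} {A C : g.NT} {i j : Fin (m - 1)}
    (h1 : g.Derives [Symbol.nonterminal g.initial] (tm x ++ [Symbol.nonterminal A] ++ tm z))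
    (h2 : g.Derives [Symbol.nonterminal A] (tm y ++ [Symbol.nonterminal C] ++ tm y'))
    (h3 : g.Derives [Symbol.nonterminal C] (tm c)) (hA : X g a i A) (hC : X g a j C) : i = j := by
  obtain ⟨u, v, hd, hu, hv⟩ := hA
  obtain ⟨u', v', hd', hu', hv'⟩ := hC
  have key : x ++ (u ++ (y ++ (u' ++ c ++ v') ++ y') ++ v) ++ z ∈ boundedSumLang m a := by
    rw [← hg, mem_language_iff]
    have := h1.trans (ctx (hd.trans (ctx (h2.trans (ctx (hd'.trans (ctx h3 _ _)) _ _)) _ _))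
      (tm x) (tm z))
    simpa [tm] using this
  have hs := lang_sorted key
  simp only [List.pairwise_append, List.mem_append] at hs
  have r1 := hs.1.2.1.1.2.2 _ hu _ (Or.inl (Or.inr (Or.inl (Or.inl hu'))))
  have r2 := hs.1.2.1.2.2 _ (Or.inr (Or.inl (Or.inr (Or.inr hv')))) _ hv
  have r1 := R_le ha r1
  have r2 := R_le ha r2
  simp only [Fin.mk_le_mk] at r1 r2
  apply Fin.ext; omega

open Classical in
lemma antichain {a : Fin m → T} (ha : Function.Injective a)
    (hg : g.language = boundedSumLang m a) {α w n U} (h : Der g α w n U) :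
    ∀ x z : List T, g.Derives [Symbol.nonterminal g.initial] (tm x ++ α ++ tm z) →
    ∃ β, g.Derives α β ∧
      (Finset.univ.filter (fun i : Fin (m - 1) => ∃ C ∈ U, X g a i C)).card
        ≤ β.countP Symbol.isNT := by
  induction h with
  | nil => intro x z _; exact ⟨[], Derives.refl _, by simp⟩
  | @term t α w n U _ ih =>
    intro x z hS
    obtain ⟨β, hβ, hc⟩ := ih (x ++ [t]) z (by simpa [tm] using hS)
    refine ⟨_, hβ.append_left [Symbol.terminal t], ?_⟩
    simpa [List.countP_cons, Symbol.isNT] using hc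
  | @nt r hr u n₁ U₁ α w n₂ U₂ d1 d2 ih1 ih2 =>
    intro x z hS
    have s1 : g.Derives [Symbol.nonterminal g.initial]
        (tm x ++ [Symbol.nonterminal r.input] ++ tm (w ++ z)) := by
      have := hS.trans (ctx (d2.derives.append_left [Symbol.nonterminal r.input]) (tm x) (tm z))
      simpa [tm] using this
    obtain ⟨β₂, hβ₂, hc₂⟩ := ih2 (x ++ u) z (by
      have := hS.trans (ctx (((rule hr).trans d1.derives).append_right α) (tm x) (tm z))
      simpa [tm] using this)
    have main : ∃ β₁, g.Derives [Symbol.nonterminal r.input] β₁ ∧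
        (Finset.univ.filter
          (fun i : Fin (m - 1) => ∃ C ∈ insert r.input U₁, X g a i C)).card
          ≤ β₁.countP Symbol.isNT := by
      by_cases hX : ∃ i, X g a i r.input
      · obtain ⟨i, hi⟩ := hX
        refine ⟨_, Derives.refl _, ?_⟩
        have : (Finset.univ.filter
          (fun i : Fin (m - 1) => ∃ C ∈ insert r.input U₁, X g a i C)) ⊆ {i} := by
          intro j hj
          simp only [Finset.mem_filter, Finset.mem_univ, true_and] at hj
          obtain ⟨C, hC, hj⟩ := hj
          rw [Finset.mem_singleton]
          symm
          rcases Finset.mem_insert.1 hC with rfl | hC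
          · exact incomparable ha hg (y := []) (y' := []) s1 (Derives.refl _)
              ((rule hr).trans d1.derives) hi hj
          · obtain ⟨p, y, q, r', n', U', hr', rfl, hd, -, -, -, hder⟩ := d1.locate hC
            exact incomparable ha hg s1 ((rule hr).trans hder) ((rule hr').trans hd.derives) hi hj
        simpa [Symbol.isNT] using Finset.card_le_card this
      · push Not at hX
        obtain ⟨β₁, hβ₁, hc₁⟩ := ih1 x (w ++ z) (s1.trans (ctx (rule hr) _ _))
        refine ⟨β₁, (rule hr).trans hβ₁, le_trans (Finset.card_le_card ?_) hc₁⟩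
        intro j hj
        simp only [Finset.mem_filter, Finset.mem_univ, true_and] at hj ⊢
        obtain ⟨C, hC, hj⟩ := hj
        rcases Finset.mem_insert.1 hC with rfl | hC
        · exact absurd hj (hX j)
        · exact ⟨C, hC, hj⟩
    obtain ⟨β₁, hβ₁, hc₁⟩ := main
    refine ⟨β₁ ++ β₂, app hβ₁ hβ₂, ?_⟩
    rw [List.countP_append]
    refine le_trans (le_trans (Finset.card_le_card ?_) (Finset.card_union_le _ _))
      (Nat.add_le_add hc₁ hc₂)
    intro j hj
    simp only [Finset.mem_union, Finset.mem_filter, Finset.mem_univ, true_and,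
      Finset.mem_insert] at hj ⊢
    obtain ⟨C, hC, hj⟩ := hj
    rcases hC with hC | hC | hC
    · exact Or.inl ⟨C, Or.inl hC, hj⟩
    · exact Or.inl ⟨C, Or.inr hC, hj⟩
    · exact Or.inr ⟨C, hC, hj⟩

end RankProof

open RankProof in
theorem stmt_8 {T : Type} {m : ℕ} (hm : 2 ≤ m) (a : Fin m → T) (ha : Function.Injective a)
    (g : ContextFreeGrammar T) (hg : g.language = boundedSumLang m a) :
    ∃ α : List (Symbol T g.NT),
      g.Derives [Symbol.nonterminal g.initial] α ∧
      m - 1 ≤ α.countP Symbol.isNT := by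
  classical
  let M := g.rules.sup (fun r => r.output.length) + 1
  have hM1 : 1 ≤ M := by omega
  have hM : ∀ r ∈ g.rules, r.output.length ≤ M := fun r hr =>
    (Finset.le_sup (f := fun r => r.output.length) hr).trans (Nat.le_succ _)
  let f : ℕ → ℕ := fun j => if 1 ≤ j ∧ j ≤ m - 1 then M ^ g.rules.card + 1 else 0
  have h0 : f 0 = 0 := by simp [f]
  let w := (List.ofFn fun i : Fin m => List.replicate (f i.val + f (i.val + 1)) (a i)).flatten
  have hw : w ∈ boundedSumLang m a := by
    refine ⟨f, h0, ?_, ?_, rfl⟩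
    · intro j h1 h2; simp [f, h1, h2]
    · simp only [f]; rw [if_neg]; omega
  have hw' := hw
  rw [← hg, ContextFreeGrammar.mem_language_iff] at hw'
  obtain ⟨n, U, hd⟩ := Der.ofDerives hw'
  obtain ⟨β, hβ, hc⟩ := antichain ha hg hd [] [] (ContextFreeGrammar.Derives.refl _)
  refine ⟨β, hβ, le_trans ?_ hc⟩
  rw [Finset.filter_true_of_mem, Finset.card_univ, Fintype.card_fin]
  intro i _
  by_contra hno
  push Not at hno
  have hb := bounded ha hg hM1 hM i n w U hd hno
  have hi := i.isLt
  rw [FF_word ha f h0 (by omega)] at hb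
  have : f (i + 1) = M ^ g.rules.card + 1 := by
    simp only [f]; rw [if_pos]; omega
  rw [this] at hb
  have := Int.ofNat_le.1 hb
  omega
end

section
/- For every integer n ≥ 2, every nondeterministic finite automaton accepting exactly the unary language L'_n = { a^t : t ≥ 0, t ≡ 0 (mod n), and t ≡ 0 (mod n+1) } has at least n^2 + n states. -/
theorem stmt_9 (n : ℕ) (hn : 2 ≤ n) (σ : Type) [Fintype σ] (M : NFA Unit σ)
    (hM : M.accepts = {w : List Unit | n ∣ w.length ∧ (n + 1) ∣ w.length}) :
    n ^ 2 + n ≤ Fintype.card σ := by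
  have hacc : ∀ w : List Unit, (∃ S ∈ M.accept, S ∈ M.evalFrom M.start w) ↔
      (n ∣ w.length ∧ (n + 1) ∣ w.length) := by
    intro w
    have h : w ∈ M.accepts ↔ w ∈ {w : List Unit | n ∣ w.length ∧ (n + 1) ∣ w.length} := by
      rw [hM]; exact Iff.rfl
    exact h
  have hN : n ^ 2 + n = n * (n + 1) := by ring
  have key : ∀ i : Fin (n ^ 2 + n), ∃ q, q ∈ M.evalFrom M.start (List.replicate i.1 ()) ∧
      ∃ s ∈ M.accept, s ∈ M.evalFrom {q} (List.replicate (n ^ 2 + n - i.1) ()) := by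
    intro i
    obtain ⟨s, hs, h⟩ := (hacc (List.replicate i.1 () ++
      List.replicate (n ^ 2 + n - i.1) ())).2 (by
        have : i.1 + (n ^ 2 + n - i.1) = n * (n + 1) := by have := i.2; omega
        simp only [List.length_append, List.length_replicate, this]
        exact ⟨dvd_mul_right _ _, dvd_mul_left _ _⟩)
    rw [NFA.evalFrom_append, NFA.mem_evalFrom_iff_exists] at h
    obtain ⟨q, hq, h⟩ := h
    exact ⟨q, hq, s, hs, h⟩
  choose f hf1 hf2 using key
  have inj : Function.Injective f := by
    intro i j hij
    obtain ⟨s, hs, h⟩ := hf2 j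
    have h2 := (hacc (List.replicate i.1 () ++ List.replicate (n ^ 2 + n - j.1) ())).1
      ⟨s, hs, by
        rw [NFA.evalFrom_append, NFA.mem_evalFrom_iff_exists]
        exact ⟨f i, hf1 i, hij ▸ h⟩⟩
    simp only [List.length_append, List.length_replicate] at h2
    have hc : Nat.Coprime n (n + 1) := by simp
    have h3 := hc.mul_dvd_of_dvd_of_dvd h2.1 h2.2
    rw [← hN] at h3
    obtain ⟨k, hk⟩ := h3
    have hi := i.2
    have hj := j.2
    have k1 : k = 1 := by
      have : k < 2 := by
        by_contra hh
        have := Nat.mul_le_mul_left (n ^ 2 + n) (not_lt.1 hh)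
        omega
      have : k ≠ 0 := by
        rintro rfl
        omega
      omega
    subst k1
    apply Fin.ext
    omega
  simpa using Fintype.card_le_of_injective f inj
end

section
/- Fix an integer m ≥ 1, nonempty words w_1, …, w_m over an alphabet Σ, pairwise distinct symbols a_1, …, a_m, and let φ : {a_1, …, a_m}^* → Σ^* be the monoid homomorphism determined by φ(a_i) = w_i for i = 1, …, m. Then there exists a constant C (depending only on w_1, …, w_m) such that for every context-free grammar G in Chomsky normal form over Σ with L(G) ⊆ w_1^* w_2^* ⋯ w_m^*, there exists a context-free grammar Ĝ over the alphabet {a_1, …, a_m} with L(Ĝ) = φ^{-1}(L(G)) — in particular, for all integers k_1, …, k_m ≥ 0, a_1^{k_1} ⋯ a_m^{k_m} ∈ L(Ĝ) if and only if w_1^{k_1} ⋯ w_m^{k_m} ∈ L(G) — and with Symb(Ĝ) ≤ C · Symb(G). -/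
/-- The number of symbols of a context-free grammar:
`Symb(G) = Σ_{(A→α) ∈ P} (2 + |α|)`. -/
def ContextFreeGrammar.symb {T : Type} (g : ContextFreeGrammar T) : ℕ :=
  ∑ r ∈ g.rules, (2 + r.output.length)

/-- The word-bounded language `w_1^* w_2^* ⋯ w_m^*`. -/
def wordBounded {T : Type} {m : ℕ} (w : Fin m → List T) : Language T :=
  { z | ∃ k : Fin m → ℕ,
      z = (List.ofFn fun i : Fin m => (List.replicate (k i) (w i)).flatten).flatten }

/-- The monoid homomorphism `φ : {a_1, …, a_m}^* → Σ^*` determined by `φ(a_i) = w_i`,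
where the letters `a_1, …, a_m` are the (pairwise distinct) elements of `Fin m`. -/
def phiHom {T : Type} {m : ℕ} (w : Fin m → List T) (x : List (Fin m)) : List T :=
  x.flatMap w

namespace InvHom

open ContextFreeGrammar

/-- Derivation trees of grammars with rules `A → BC` or `A → u` (`u` a terminal word). -/
inductive Tree {T : Type} (g : ContextFreeGrammar T) : g.NT → List T → Prop
  | leaf (A : g.NT) (u : List T) (h : ⟨A, u.map Symbol.terminal⟩ ∈ g.rules) : Tree g A u
  | bin (A B C : g.NT) (u v : List T)
      (h : ⟨A, [Symbol.nonterminal B, Symbol.nonterminal C]⟩ ∈ g.rules)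
      (hB : Tree g B u) (hC : Tree g C v) : Tree g A (u ++ v)

/-- Words produced from a sentential form by trees. -/
def Yield {T : Type} (g : ContextFreeGrammar T) : List (Symbol T g.NT) → List T → Prop
  | [], u => u = []
  | Symbol.terminal t :: s, u => ∃ v, u = t :: v ∧ Yield g s v
  | Symbol.nonterminal A :: s, u => ∃ v v', u = v ++ v' ∧ Tree g A v ∧ Yield g s v'

theorem yield_append {T : Type} (g : ContextFreeGrammar T) (s s' : List (Symbol T g.NT)) :
    ∀ u : List T, Yield g (s ++ s') u ↔ ∃ v v', u = v ++ v' ∧ Yield g s v ∧ Yield g s' v' := by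
  induction s with
  | nil => intro u; simp [Yield]
  | cons a s ih =>
    intro u
    cases a with
    | terminal t =>
      simp only [List.cons_append, Yield, ih]
      constructor
      · rintro ⟨v, rfl, a, b, rfl, h1, h2⟩
        exact ⟨t :: a, b, by simp, ⟨a, rfl, h1⟩, h2⟩
      · rintro ⟨_, b, rfl, ⟨a, rfl, h1⟩, h2⟩
        exact ⟨a ++ b, by simp, a, b, rfl, h1, h2⟩
    | nonterminal A =>
      simp only [List.cons_append, Yield, ih]
      constructor
      · rintro ⟨v, _, rfl, hA, a, b, rfl, h1, h2⟩
        exact ⟨v ++ a, b, by simp, ⟨v, a, rfl, hA, h1⟩, h2⟩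
      · rintro ⟨_, b, rfl, ⟨v, a, rfl, hA, h1⟩, h2⟩
        exact ⟨v, a ++ b, by simp, hA, a, b, rfl, h1, h2⟩

theorem yield_terminal {T : Type} (g : ContextFreeGrammar T) (u : List T) :
    ∀ v : List T, Yield g (u.map Symbol.terminal) v ↔ v = u := by
  induction u with
  | nil => intro v; simp [Yield]
  | cons a u ih => intro v; simp [Yield, ih]

/-- Rules are binary or have a terminal word on the right. -/
def Weak {T : Type} (g : ContextFreeGrammar T) : Prop :=
  ∀ r ∈ g.rules,
    (∃ B C : g.NT, r.output = [Symbol.nonterminal B, Symbol.nonterminal C]) ∨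
    (∃ u : List T, r.output = u.map Symbol.terminal)

theorem tree_of_yield {T : Type} {g : ContextFreeGrammar T} (hg : Weak g)
    (r : ContextFreeRule T g.NT) (hr : r ∈ g.rules) (u : List T) (h : Yield g r.output u) :
    Tree g r.input u := by
  rcases hg r hr with ⟨B, C, h'⟩ | ⟨v, h'⟩
  · rw [h'] at h
    simp only [Yield] at h
    obtain ⟨v, _, rfl, hB, v', _, rfl, hC, rfl⟩ := h
    rw [List.append_nil]
    exact Tree.bin _ B C _ _ (by rw [← h']; exact hr) hB hC
  · rw [h', yield_terminal] at h
    subst h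
    exact Tree.leaf _ _ (by rw [← h']; exact hr)

theorem yield_of_derives {T : Type} {g : ContextFreeGrammar T} (hg : Weak g)
    (s : List (Symbol T g.NT)) (u : List T) (h : g.Derives s (u.map Symbol.terminal)) :
    Yield g s u := by
  induction h using Relation.ReflTransGen.head_induction_on with
  | refl => rw [yield_terminal]
  | head h1 _ ih =>
    obtain ⟨r, hr, h2⟩ := h1
    obtain ⟨p, q, rfl, rfl⟩ := h2.exists_parts
    rw [yield_append, ] at ih ⊢
    obtain ⟨v, v', rfl, h3, h4⟩ := ih
    rw [yield_append] at h3
    obtain ⟨a, b, rfl, h5, h6⟩ := h3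
    refine ⟨a ++ b, v', rfl, ?_, h4⟩
    rw [yield_append]
    refine ⟨a, b, rfl, h5, ?_⟩
    exact ⟨b, [], by simp, tree_of_yield hg r hr b h6, rfl⟩

theorem derives_of_tree {T : Type} {g : ContextFreeGrammar T} (A : g.NT) (u : List T)
    (h : Tree g A u) : g.Derives [Symbol.nonterminal A] (u.map Symbol.terminal) := by
  induction h with
  | leaf A u h =>
    exact Produces.single ⟨_, h, ContextFreeRule.Rewrites.input_output⟩
  | bin A B C u v h _ _ ihB ihC =>
    refine Produces.trans_derives ⟨_, h, ContextFreeRule.Rewrites.input_output⟩ ?_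
    rw [List.map_append]
    exact (ihB.append_right [Symbol.nonterminal C]).trans (ihC.append_left _)

theorem mem_language_iff_tree {T : Type} {g : ContextFreeGrammar T} (hg : Weak g) (u : List T) :
    u ∈ g.language ↔ Tree g g.initial u := by
  rw [mem_language_iff]
  constructor
  · intro h
    obtain ⟨v, _, rfl, h', rfl⟩ := yield_of_derives hg _ _ h
    rw [List.append_nil]
    exact h'
  · exact derives_of_tree _ _

/-- One step of the transducer; the state is the suffix still to be read. -/
def Step {T : Type} {m : ℕ} (w : Fin m → List T) (p : List T) (t : T) (o : List (Fin m))
    (q : List T) : Prop :=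
  (p = t :: q ∧ o = []) ∨ (p = [] ∧ ∃ i, w i = t :: q ∧ o = [i])

/-- Runs of the transducer. -/
inductive Run {T : Type} {m : ℕ} (w : Fin m → List T) :
    List T → List T → List (Fin m) → List T → Prop
  | nil (p : List T) : Run w p [] [] p
  | cons (p r q : List T) (t : T) (u : List T) (o x : List (Fin m)) (h : Step w p t o r)
      (h' : Run w r u x q) : Run w p (t :: u) (o ++ x) q

theorem run_append {T : Type} {m : ℕ} (w : Fin m → List T) {p r q u v : List T}
    {x y : List (Fin m)} (h : Run w p u x r) (h' : Run w r v y q) :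
    Run w p (u ++ v) (x ++ y) q := by
  induction h with
  | nil p => exact h'
  | cons p r q t u o x h _ ih =>
    rw [List.append_assoc]
    exact Run.cons _ _ _ _ _ _ _ h (ih h')

theorem run_self {T : Type} {m : ℕ} (w : Fin m → List T) (p : List T) : Run w p p [] [] := by
  induction p with
  | nil => exact Run.nil _
  | cons t p ih => exact Run.cons _ p _ t p [] [] (Or.inl ⟨rfl, rfl⟩) ih

theorem run_phi {T : Type} {m : ℕ} (w : Fin m → List T) (hw : ∀ i, w i ≠ [])
    (x : List (Fin m)) : Run w [] (phiHom w x) x [] := by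
  induction x with
  | nil => exact Run.nil _
  | cons i x ih =>
    have h : Run w [] (w i) [i] [] := by
      cases hi : w i with
      | nil => exact absurd hi (hw i)
      | cons t q => exact Run.cons _ q _ t q [i] [] (Or.inr ⟨rfl, i, hi, rfl⟩) (run_self w q)
    exact run_append w h ih

/-- The set of states. -/
def IsState {T : Type} {m : ℕ} (w : Fin m → List T) (p : List T) : Prop :=
  p = [] ∨ ∃ i, p <:+ w i

theorem step_state {T : Type} {m : ℕ} (w : Fin m → List T) {p q : List T} {t : T}
    {o : List (Fin m)} (h : Step w p t o q) (hp : IsState w p) : IsState w q := by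
  rcases h with ⟨rfl, _⟩ | ⟨_, i, hi, _⟩
  · rcases hp with h | ⟨i, hi⟩
    · simp at h
    · exact Or.inr ⟨i, (List.suffix_cons t q).trans hi⟩
  · exact Or.inr ⟨i, hi ▸ List.suffix_cons t q⟩

theorem run_split {T : Type} {m : ℕ} (w : Fin m → List T) (u v : List T) :
    ∀ {p q : List T} {x : List (Fin m)}, IsState w p → Run w p (u ++ v) x q →
      ∃ r y z, IsState w r ∧ Run w p u y r ∧ Run w r v z q ∧ x = y ++ z := by
  induction u with
  | nil => intro p q x hp h; exact ⟨p, [], x, hp, Run.nil _, h, rfl⟩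
  | cons t u ih =>
    intro p q x hp h
    rw [List.cons_append] at h
    cases h with
    | cons _ r _ _ _ o x hs h' =>
      obtain ⟨r', y, z, h1, h2, h3, rfl⟩ := ih (step_state w hs hp) h'
      exact ⟨r', o ++ y, z, h1, Run.cons _ _ _ _ _ _ _ hs h2, h3, by simp⟩

theorem states_finite {T : Type} {m : ℕ} (w : Fin m → List T) : {p | IsState w p}.Finite := by
  have : {p | IsState w p} = {[]} ∪ ⋃ i, {p | p ∈ (w i).tails} := by
    ext p; simp [IsState]
  rw [this]
  exact (Set.finite_singleton _).union (Set.finite_iUnion fun i => List.finite_toSet _)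

/-- The finite set of states. -/
noncomputable def states {T : Type} {m : ℕ} (w : Fin m → List T) : Finset (List T) :=
  (states_finite w).toFinset

/-- Possible outputs of a step. -/
def outs (m : ℕ) : Finset (List (Fin m)) := insert [] (Finset.univ.image fun i => [i])

theorem step_outs {T : Type} {m : ℕ} (w : Fin m → List T) {p q : List T} {t : T}
    {o : List (Fin m)} (h : Step w p t o q) : o ∈ outs m := by
  rcases h with ⟨_, rfl⟩ | ⟨_, i, _, rfl⟩ <;> simp [outs]

open Classical in
/-- New rules for an old rule. -/
noncomputable def newRules {T N : Type} {m : ℕ} (w : Fin m → List T) (A : N) :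
    List (Symbol T N) → Finset (ContextFreeRule (Fin m) (N × List T × List T))
  | [Symbol.nonterminal B, Symbol.nonterminal C] =>
    (states w ×ˢ states w ×ˢ states w).image fun a =>
      ⟨(A, a.1, a.2.2), [Symbol.nonterminal (B, a.1, a.2.1), Symbol.nonterminal (C, a.2.1, a.2.2)]⟩
  | [Symbol.terminal t] =>
    ((states w ×ˢ outs m ×ˢ states w).filter fun a => Step w a.1 t a.2.1 a.2.2).image fun a =>
      ⟨(A, a.1, a.2.2), a.2.1.map Symbol.terminal⟩
  | _ => ∅

open Classical in
/-- The grammar of the preimage. -/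
noncomputable def newG {T : Type} {m : ℕ} (w : Fin m → List T) (g : ContextFreeGrammar T) :
    ContextFreeGrammar (Fin m) where
  NT := g.NT × List T × List T
  initial := (g.initial, [], [])
  rules := g.rules.biUnion fun r => newRules w r.input r.output

theorem mem_newG {T : Type} {m : ℕ} (w : Fin m → List T) (g : ContextFreeGrammar T)
    (hg : g.IsCNF) (r : ContextFreeRule (Fin m) (g.NT × List T × List T)) :
    r ∈ (newG w g).rules ↔
      (∃ A B C p s q, (⟨A, [Symbol.nonterminal B, Symbol.nonterminal C]⟩ : ContextFreeRule T g.NT)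
        ∈ g.rules ∧ IsState w p ∧ IsState w s ∧ IsState w q ∧
        r = ⟨(A, p, q), [Symbol.nonterminal (B, p, s), Symbol.nonterminal (C, s, q)]⟩) ∨
      (∃ A t p o q, (⟨A, [Symbol.terminal t]⟩ : ContextFreeRule T g.NT)
        ∈ g.rules ∧ IsState w p ∧ IsState w q ∧ Step w p t o q ∧
        r = ⟨(A, p, q), o.map Symbol.terminal⟩) := by
  classical
  change r ∈ (g.rules.biUnion fun r => newRules w r.input r.output) ↔ _
  rw [Finset.mem_biUnion]
  constructor
  · rintro ⟨⟨A, out⟩, hr, h⟩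
    rcases hg _ hr with ⟨B, C, h'⟩ | ⟨t, h'⟩
    · dsimp only at h'; subst h'
      simp only [newRules, Finset.mem_image, Finset.mem_product, states, Set.Finite.mem_toFinset,
        Set.mem_ofPred_eq] at h
      obtain ⟨⟨p, s, q⟩, ⟨h1, h2, h3⟩, rfl⟩ := h
      exact Or.inl ⟨A, B, C, p, s, q, hr, h1, h2, h3, rfl⟩
    · dsimp only at h'; subst h'
      simp only [newRules, Finset.mem_image, Finset.mem_filter, Finset.mem_product, states,
        Set.Finite.mem_toFinset, Set.mem_ofPred_eq] at h
      obtain ⟨⟨p, s, q⟩, ⟨⟨h1, h2, h3⟩, h4⟩, rfl⟩ := h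
      exact Or.inr ⟨A, t, p, s, q, hr, h1, h3, h4, rfl⟩
  · rintro (⟨A, B, C, p, s, q, hr, h1, h2, h3, rfl⟩ | ⟨A, t, p, o, q, hr, h1, h3, h4, rfl⟩)
    · refine ⟨_, hr, ?_⟩
      simp only [newRules, Finset.mem_image, Finset.mem_product, states, Set.Finite.mem_toFinset,
        Set.mem_ofPred_eq]
      exact ⟨(p, s, q), ⟨h1, h2, h3⟩, rfl⟩
    · refine ⟨_, hr, ?_⟩
      simp only [newRules, Finset.mem_image, Finset.mem_filter, Finset.mem_product, states,
        Set.Finite.mem_toFinset, Set.mem_ofPred_eq]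
      exact ⟨(p, o, q), ⟨⟨h1, step_outs w h4, h3⟩, h4⟩, rfl⟩

theorem weak_newG {T : Type} {m : ℕ} (w : Fin m → List T) (g : ContextFreeGrammar T)
    (hg : g.IsCNF) : Weak (newG w g) := by
  intro r hr
  rcases (mem_newG w g hg r).1 hr with
    ⟨A, B, C, p, s, q, _, _, _, _, rfl⟩ | ⟨A, t, p, o, q, _, _, _, _, rfl⟩
  · exact Or.inl ⟨_, _, rfl⟩
  · exact Or.inr ⟨o, rfl⟩

theorem weak_cnf {T : Type} (g : ContextFreeGrammar T) (hg : g.IsCNF) : Weak g := by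
  intro r hr
  rcases hg r hr with h | ⟨t, h⟩
  · exact Or.inl h
  · exact Or.inr ⟨[t], by simpa using h⟩

theorem sound {T : Type} {m : ℕ} (w : Fin m → List T) (g : ContextFreeGrammar T)
    (hg : g.IsCNF) (A : (newG w g).NT) (x : List (Fin m)) (h : Tree (newG w g) A x) :
    ∃ u, Tree g A.1 u ∧ A.2.1 ++ phiHom w x = u ++ A.2.2 := by
  induction h with
  | leaf A x h =>
    rcases (mem_newG w g hg _).1 h with
      ⟨A, B, C, p, s, q, _, _, _, _, h'⟩ | ⟨A, t, p, o, q, hr, _, _, hs, h'⟩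
    · injection h' with hA hO
      cases x with
      | nil => simp at hO
      | cons a x => injection hO with h1 _; injection h1
    · injection h' with hA h'
      subst hA
      have : x = o := List.map_injective_iff.2 (fun a b hab => by simpa using hab) h'
      subst this
      refine ⟨[t], Tree.leaf _ _ (by simpa using hr), ?_⟩
      rcases hs with ⟨rfl, rfl⟩ | ⟨rfl, i, hi, rfl⟩
      · simp [phiHom]
      · simp [phiHom, hi]
  | bin A B C x y h _ _ ihB ihC =>
    rcases (mem_newG w g hg _).1 h with
      ⟨A, B, C, p, s, q, hr, _, _, _, h'⟩ | ⟨A, t, p, o, q, hr, _, _, hs, h'⟩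
    · injection h' with hA h'
      injection h' with hB h'
      injection h' with hC h'
      injection hB with hB
      injection hC with hC
      subst hA hB hC
      obtain ⟨u, hu, h1⟩ := ihB
      obtain ⟨v, hv, h2⟩ := ihC
      refine ⟨u ++ v, Tree.bin _ _ _ _ _ hr hu hv, ?_⟩
      have : phiHom w (x ++ y) = phiHom w x ++ phiHom w y := by simp [phiHom]
      dsimp only at h1 h2 ⊢
      rw [this, ← List.append_assoc, h1, List.append_assoc, h2, List.append_assoc]
    · injection h' with hA h'
      cases o with
      | nil => simp at h'
      | cons a x => injection h' with h1 _; injection h1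

theorem complete {T : Type} {m : ℕ} (w : Fin m → List T) (g : ContextFreeGrammar T)
    (hg : g.IsCNF) (A : g.NT) (u : List T) (h : Tree g A u) :
    ∀ p q x, IsState w p → IsState w q → Run w p u x q → Tree (newG w g) (A, p, q) x := by
  induction h with
  | leaf A u h =>
    intro p q x hp hq hrun
    rcases hg _ h with ⟨B, C, h'⟩ | ⟨t, h'⟩
    · rcases u with _ | ⟨a, u⟩ <;> simp at h'
    · have : u = [t] := by
        rcases u with _ | ⟨a, _ | ⟨b, u⟩⟩ <;> simp at h' ⊢
        exact h'
      subst this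
      cases hrun with
      | cons _ r _ _ _ o x hs h' =>
        cases h'
        rw [List.append_nil]
        exact Tree.leaf _ _ ((mem_newG w g hg _).2
          (Or.inr ⟨A, t, p, o, q, by simpa using h, hp, hq, hs, rfl⟩))
  | bin A B C u v h _ _ ihB ihC =>
    intro p q x hp hq hrun
    obtain ⟨r, y, z, hr, h1, h2, rfl⟩ := run_split w u v hp hrun
    exact Tree.bin (g := newG w g) (A, p, q) (B, p, r) (C, r, q) y z ((mem_newG w g hg _).2
      (Or.inl ⟨A, B, C, p, r, q, h, hp, hr, hq, rfl⟩)) (ihB _ _ _ hp hr h1) (ihC _ _ _ hr hq h2)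

theorem language_newG {T : Type} {m : ℕ} (w : Fin m → List T) (hw : ∀ i, w i ≠ [])
    (g : ContextFreeGrammar T) (hg : g.IsCNF) (x : List (Fin m)) :
    x ∈ (newG w g).language ↔ phiHom w x ∈ g.language := by
  rw [mem_language_iff_tree (weak_newG w g hg), mem_language_iff_tree (weak_cnf g hg)]
  constructor
  · intro h
    obtain ⟨u, hu, h'⟩ := sound w g hg _ _ h
    simp only [newG, List.nil_append, List.append_nil] at h' hu
    rw [h']; exact hu
  · intro h
    exact complete w g hg _ _ h [] [] x (Or.inl rfl) (Or.inl rfl) (run_phi w hw x)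

/-- The constant. -/
noncomputable def const {T : Type} {m : ℕ} (w : Fin m → List T) : ℕ :=
  (states w ×ˢ states w ×ˢ states w).card + (states w ×ˢ outs m ×ˢ states w).card

theorem symb_rule {T : Type} {m : ℕ} (w : Fin m → List T) (g : ContextFreeGrammar T)
    (hg : g.IsCNF) (r : ContextFreeRule T g.NT) (hr : r ∈ g.rules) :
    ∑ r' ∈ newRules w r.input r.output, (2 + r'.output.length) ≤
      const w * (2 + r.output.length) := by
  classical
  rw [← smul_eq_mul]
  have key : (newRules w r.input r.output).card ≤ const w ∧
      ∀ r' ∈ newRules w r.input r.output, 2 + r'.output.length ≤ 2 + r.output.length := by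
    rcases hg _ hr with ⟨B, C, h⟩ | ⟨t, h⟩
    · rw [h]
      constructor
      · exact Finset.card_image_le.trans (Nat.le_add_right _ _)
      · intro r' hr'
        simp only [newRules, Finset.mem_image] at hr'
        obtain ⟨a, _, rfl⟩ := hr'
        simp
    · rw [h]
      constructor
      · exact Finset.card_image_le.trans ((Finset.card_filter_le _ _).trans (Nat.le_add_left _ _))
      · intro r' hr'
        simp only [newRules, Finset.mem_image, Finset.mem_filter, Finset.mem_product] at hr'
        obtain ⟨a, ⟨_, hs⟩, rfl⟩ := hr'
        rcases hs with ⟨_, h⟩ | ⟨_, i, _, h⟩ <;> simp [h]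
  refine (Finset.sum_le_card_nsmul _ _ _ key.2).trans ?_
  exact Nat.mul_le_mul_right _ key.1

theorem sum_biUnion_le' {α β : Type} [DecidableEq β] (s : Finset α) (t : α → Finset β)
    (f : β → ℕ) : ∑ b ∈ s.biUnion t, f b ≤ ∑ a ∈ s, ∑ b ∈ t a, f b := by
  classical
  induction s using Finset.induction_on with
  | empty => simp
  | insert a s ha ih =>
    rw [Finset.biUnion_insert, Finset.sum_insert ha]
    have := Finset.sum_union_inter (s₁ := t a) (s₂ := s.biUnion t) (f := f)
    omega

theorem symb_newG {T : Type} {m : ℕ} (w : Fin m → List T) (g : ContextFreeGrammar T)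
    (hg : g.IsCNF) : (newG w g).symb ≤ const w * g.symb := by
  classical
  unfold ContextFreeGrammar.symb
  rw [Finset.mul_sum]
  change ∑ r' ∈ (g.rules.biUnion fun r => newRules w r.input r.output),
    (2 + r'.output.length) ≤ _
  refine (sum_biUnion_le' _ _ _).trans ?_
  exact Finset.sum_le_sum fun r hr => symb_rule w g hg r hr

theorem phi_bounded {T : Type} {m : ℕ} (w : Fin m → List T) (k : Fin m → ℕ) :
    phiHom w (List.ofFn fun i : Fin m => List.replicate (k i) i).flatten =
      (List.ofFn fun i : Fin m => (List.replicate (k i) (w i)).flatten).flatten := by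
  unfold phiHom
  rw [List.flatMap_def, List.map_flatten, List.flatten_flatten, List.map_map, List.map_ofFn]
  congr 2
  funext i
  simp

end InvHom

theorem stmt_10 {T : Type} {m : ℕ} (hm : 1 ≤ m) (w : Fin m → List T)
    (hw : ∀ i : Fin m, w i ≠ []) :
    ∃ C : ℕ, ∀ g : ContextFreeGrammar T, g.IsCNF → g.language ≤ wordBounded w →
      ∃ gh : ContextFreeGrammar (Fin m),
        gh.language = { x | phiHom w x ∈ g.language } ∧
        (∀ k : Fin m → ℕ,
          ((List.ofFn fun i : Fin m => List.replicate (k i) i).flatten ∈ gh.language ↔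
           (List.ofFn fun i : Fin m =>
              (List.replicate (k i) (w i)).flatten).flatten ∈ g.language)) ∧
        gh.symb ≤ C * g.symb := by
  refine ⟨InvHom.const w, fun g hg _ => ⟨InvHom.newG w g, ?_, ?_, InvHom.symb_newG w g hg⟩⟩
  · ext x
    exact InvHom.language_newG w hw g hg x
  · intro k
    rw [InvHom.language_newG w hw g hg, InvHom.phi_bounded]
end

section
/- Let m ≥ 2 and let a_1, …, a_m be pairwise distinct symbols. Every context-free language L ⊆ a_1^* a_2^* ⋯ a_m^* with ε ∉ L is generated by some context-free grammar G such that every sentential form derivable from the start symbol of G contains at most m − 1 occurrences of nonterminals (i.e., L is ultralinear of rank at most m − 1). -/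
namespace Ultra

/-- Big-step derivation of a word from a sentential form. -/
inductive Der {T N : Type} (R : Finset (ContextFreeRule T N)) : List (Symbol T N) → List T → Prop
  | nil : Der R [] []
  | term {α w} (t : T) : Der R α w → Der R (Symbol.terminal t :: α) (t :: w)
  | nt {α u v} (r : ContextFreeRule T N) : r ∈ R → Der R r.output u → Der R α v →
      Der R (Symbol.nonterminal r.input :: α) (u ++ v)

/-- Big-step derivation of the word `t^n` from a sentential form. -/
inductive U {T N : Type} (t : T) (R : Finset (ContextFreeRule T N)) : List (Symbol T N) → ℕ → Prop
  | nil : U t R [] 0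
  | term {α n} : U t R α n → U t R (Symbol.terminal t :: α) (n + 1)
  | nt {α n k} (r : ContextFreeRule T N) : r ∈ R → U t R r.output n → U t R α k →
      U t R (Symbol.nonterminal r.input :: α) (n + k)

variable {T N : Type}

lemma U.der {t : T} {R : Finset (ContextFreeRule T N)} {α n} (h : U t R α n) :
    Der R α (List.replicate n t) := by
  induction h with
  | nil => exact .nil
  | term _ ih => exact .term t ih
  | nt r hr _ _ ih1 ih2 => rw [List.replicate_add]; exact .nt r hr ih1 ih2

lemma U.of_der {t : T} {R : Finset (ContextFreeRule T N)} {α w} (h : Der R α w) :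
    ∀ n, w = List.replicate n t → U t R α n := by
  induction h with
  | nil => intro n hn; cases n with
    | zero => exact .nil
    | succ n => simp [List.replicate_succ] at hn
  | term s _ ih => intro n hn; cases n with
    | zero => simp at hn
    | succ n =>
      simp only [List.replicate_succ, List.cons.injEq] at hn
      obtain ⟨rfl, hn⟩ := hn
      exact .term (ih n hn)
  | @nt α u v r hr _ _ ih1 ih2 =>
    intro n hn
    have hn' := hn.symm
    rw [List.replicate_eq_append_iff] at hn'
    obtain ⟨hl, h1, h2⟩ := hn'
    rw [← hl]
    exact .nt r hr (ih1 _ h1) (ih2 _ h2)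

lemma U.single {t : T} {R : Finset (ContextFreeRule T N)} {A : N} {n : ℕ} :
    U t R [Symbol.nonterminal A] n ↔ ∃ r ∈ R, r.input = A ∧ U t R r.output n := by
  constructor
  · intro h
    cases h with
    | nt r hr h1 h2 => cases h2; exact ⟨r, hr, rfl, h1⟩
  · rintro ⟨r, hr, rfl, h⟩
    exact U.nt r hr h .nil

lemma U.cons_nt {t : T} {R : Finset (ContextFreeRule T N)} {A : N} {α} {n k : ℕ}
    (h : U t R [Symbol.nonterminal A] n) (h' : U t R α k) :
    U t R (Symbol.nonterminal A :: α) (n + k) := by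
  obtain ⟨r, hr, rfl, h1⟩ := U.single.1 h
  exact .nt r hr h1 h'

lemma U.mono {t : T} {R R' : Finset (ContextFreeRule T N)} (hR : R ⊆ R') {α n} (h : U t R α n) :
    U t R' α n := by
  induction h with
  | nil => exact .nil
  | term _ ih => exact .term ih
  | nt r hr _ _ ih1 ih2 => exact .nt r (hR hr) ih1 ih2

open Classical in
/-- Find an innermost occurrence of `A`. -/
lemma U.cut {t : T} {R R' : Finset (ContextFreeRule T N)} (hR : R' ⊆ R) (A : N) {α n}
    (h : U t R' α n) :
    U t (R'.filter (fun r => r.input ≠ A)) α n ∨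
    ∃ n1 n2, n = n1 + n2 ∧ (∀ k, U t R [Symbol.nonterminal A] k → U t R α (n1 + k)) ∧
      ∃ r ∈ R', r.input = A ∧ U t (R'.filter (fun r => r.input ≠ A)) r.output n2 := by
  induction h with
  | nil => exact .inl .nil
  | term _ ih =>
    rcases ih with ih | ⟨n1, n2, rfl, h1, h2⟩
    · exact .inl (.term ih)
    · refine .inr ⟨n1 + 1, n2, by omega, fun k hk => ?_, h2⟩
      have := U.term (h1 k hk)
      rwa [show n1 + 1 + k = n1 + k + 1 by omega]
  | @nt α n m r hr hd1 hd2 ih1 ih2 =>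
    rcases ih1 with ih1 | ⟨n1, n2, rfl, h1, h2⟩
    · rcases ih2 with ih2 | ⟨n1, n2, rfl, h1, h2⟩
      · by_cases hA : r.input = A
        · refine .inr ⟨m, n, by omega, fun k hk => ?_, r, hr, hA, ih1⟩
          rw [hA, add_comm]
          exact U.cons_nt hk (hd2.mono hR)
        · exact .inl (.nt r (by simp [hr, hA]) ih1 ih2)
      · refine .inr ⟨n + n1, n2, by omega, fun k hk => ?_, h2⟩
        rw [add_assoc]
        exact U.nt r (hR hr) (hd1.mono hR) (h1 k hk)
    · refine .inr ⟨n1 + m, n2, by omega, fun k hk => ?_, h2⟩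
      rw [show n1 + m + k = n1 + k + m by omega]
      exact U.nt r (hR hr) (h1 k hk) (hd2.mono hR)

/-- `A` can be pumped by `d`. -/
def Pump (t : T) (R : Finset (ContextFreeRule T N)) (A : N) (d : ℕ) : Prop :=
  ∀ k, U t R [Symbol.nonterminal A] k → U t R [Symbol.nonterminal A] (d + k)

lemma finite_of_no_pump (t : T) (R : Finset (ContextFreeRule T N)) (R' : Finset (ContextFreeRule T N)) :
    R' ⊆ R → (∀ r ∈ R', ∀ d, Pump t R r.input d → d = 0) → ∀ α, {n | U t R' α n}.Finite := by
  classical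
  induction R' using Finset.strongInduction with
  | H R' ih =>
    intro hR hp α
    induction α with
    | nil =>
      refine (Set.finite_singleton 0).subset ?_
      intro n hn
      cases hn; rfl
    | cons x α iha =>
      cases x with
      | terminal s =>
        refine (iha.image (· + 1)).subset ?_
        intro n hn
        cases hn with
        | term h => exact ⟨_, h, rfl⟩
      | nonterminal A =>
        have hA : {n | U t R' [Symbol.nonterminal A] n}.Finite := by
          have : (⋃ r ∈ {r | r ∈ R' ∧ r.input = A},
            {n | U t (R'.filter (fun r => r.input ≠ A)) r.output n}).Finite := by
            refine Set.Finite.biUnion (R'.finite_toSet.subset (fun r hr => hr.1)) ?_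
            rintro r ⟨hr, hrA⟩
            refine ih _ ?_ ((Finset.filter_subset _ _).trans hR)
              (fun r hr => hp r (Finset.mem_filter.1 hr).1) _
            refine Finset.filter_ssubset.2 ⟨r, hr, by simpa using hrA⟩
          refine this.subset ?_
          intro n hn
          rcases U.cut hR A hn with h | ⟨n1, n2, rfl, h1, r, hr, hrA, h2⟩
          · obtain ⟨r, hr, hrA, _⟩ := U.single.1 h
            exact absurd hrA (Finset.mem_filter.1 hr).2
          · have : n1 = 0 := hp r hr n1 (by rw [hrA]; exact h1)
            subst this
            simp only [Set.mem_iUnion]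
            exact ⟨r, ⟨hr, hrA⟩, by simpa using h2⟩
        refine (hA.image2 (· + ·) iha).subset ?_
        intro n hn
        cases hn with
        | nt r hr h1 h2 => exact ⟨_, U.single.2 ⟨r, hr, rfl, h1⟩, _, h2, rfl⟩

lemma Pump.mul {t : T} {R : Finset (ContextFreeRule T N)} {A : N} {d : ℕ} (h : Pump t R A d) (c : ℕ) :
    Pump t R A (c * d) := by
  induction c with
  | zero => intro k hk; simpa using hk
  | succ c ih =>
    intro k hk
    have := h _ (ih k hk)
    rwa [show (c+1)*d + k = d + (c * d + k) by ring]

lemma exists_period (t : T) (R : Finset (ContextFreeRule T N)) :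
    ∃ D > 0, ∀ α, ∃ E : Set ℕ, E.Finite ∧ ∀ n, U t R α n → n ∈ E ∨ U t R α (n + D) := by
  classical
  have hd : ∀ A : N, ∃ d > 0, (∃ d > 0, Pump t R A d) → Pump t R A d := by
    intro A
    by_cases h : ∃ d > 0, Pump t R A d
    · obtain ⟨d, hd, h⟩ := h
      exact ⟨d, hd, fun _ => h⟩
    · exact ⟨1, one_pos, fun h' => absurd h' h⟩
  choose d hd hp using hd
  refine ⟨∏ r ∈ R, d r.input, Finset.prod_pos (fun r _ => hd _), fun α => ?_⟩
  set R1 := R.filter (fun r => ¬ ∃ d > 0, Pump t R r.input d) with hR1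
  refine ⟨{n | U t R1 α n}, finite_of_no_pump t R R1 (Finset.filter_subset _ _) ?_ α, ?_⟩
  · intro r hr d hd
    by_contra h
    exact (Finset.mem_filter.1 hr).2 ⟨d, Nat.pos_of_ne_zero h, hd⟩
  intro n h
  induction h with
  | nil => exact .inl .nil
  | @term α n _ ih =>
    rcases ih with ih | ih
    · exact .inl (.term ih)
    · right
      rw [add_right_comm]
      exact .term ih
  | @nt α n k r hr h1 h2 ih1 ih2 =>
    rcases ih1 with ih1 | ih1
    · rcases ih2 with ih2 | ih2
      · by_cases hA : ∃ d > 0, Pump t R r.input d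
        · right
          have := hp _ hA
          obtain ⟨c, hc⟩ := Finset.dvd_prod_of_mem (fun r => d r.input) hr
          have h3 := this.mul c n (U.single.2 ⟨r, hr, rfl, h1⟩)
          rw [hc, show n + k + d r.input * c = c * d r.input + n + k by ring]
          exact U.cons_nt h3 h2
        · exact .inl (.nt r (Finset.mem_filter.2 ⟨hr, hA⟩) ih1 ih2)
      · right
        rw [add_assoc]
        exact .nt r hr h1 ih2
    · right
      rw [add_right_comm]
      exact .nt r hr ih1 h2

lemma periodic_bound (S : Set ℕ) (D : ℕ) (hD : 0 < D) (E : Set ℕ) (hE : E.Finite)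
    (h : ∀ n ∈ S, n ∈ E ∨ n + D ∈ S) :
    ∃ B, ∀ n ∈ S, ∃ f ≤ B, ∃ d ≤ B, ∃ k, n = f + k * d ∧ ∀ k', f + k' * d ∈ S := by
  classical
  obtain ⟨p, hp⟩ := hE.bddAbove
  let P : ℕ → ℕ → Prop := fun r n => n ∈ S ∧ p < n ∧ n % D = r
  let b : ℕ → ℕ := fun r => if h : ∃ n, P r n then Nat.find h else 0
  refine ⟨p + D + (Finset.range D).sup b, fun n hn => ?_⟩
  by_cases hnp : n ≤ p
  · exact ⟨n, by omega, 0, by omega, 0, by simp, by simpa using hn⟩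
  have hex : ∃ n', P (n % D) n' := ⟨n, hn, by omega, rfl⟩
  have hb : b (n % D) = Nat.find hex := dif_pos hex
  have hle : b (n % D) ≤ (Finset.range D).sup b :=
    Finset.le_sup (Finset.mem_range.2 (Nat.mod_lt _ hD))
  have hmin : b (n % D) ≤ n := by
    rw [hb]; exact Nat.find_min' hex ⟨hn, by omega, rfl⟩
  obtain ⟨h1, h2, h3⟩ : P (n % D) (b (n % D)) := by rw [hb]; exact Nat.find_spec hex
  generalize b (n % D) = f at *
  have hdvd : D ∣ n - f := (Nat.modEq_iff_dvd' hmin).1 h3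
  obtain ⟨k, hk⟩ := hdvd
  refine ⟨f, by omega, D, by omega, k, by rw [mul_comm]; omega, fun k' => ?_⟩
  induction k' with
  | zero => simpa using h1
  | succ k' ih =>
    rcases h _ ih with h' | h'
    · have := hp h'
      have : f ≤ f + k' * D := Nat.le_add_right _ _
      omega
    · rwa [add_mul, one_mul, ← add_assoc]

lemma unary_bound (t : T) (R : Finset (ContextFreeRule T N)) (α : List (Symbol T N)) :
    ∃ B, ∀ n, Der R α (List.replicate n t) → ∃ f ≤ B, ∃ d ≤ B, ∃ k, n = f + k * d ∧
      ∀ k', Der R α (List.replicate (f + k' * d) t) := by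
  obtain ⟨D, hD, h⟩ := exists_period t R
  obtain ⟨E, hE, h⟩ := h α
  obtain ⟨B, hB⟩ := periodic_bound {n | U t R α n} D hD E hE h
  refine ⟨B, fun n hn => ?_⟩
  obtain ⟨f, hf, d, hd, k, hk, h'⟩ := hB n (U.of_der hn n rfl)
  exact ⟨f, hf, d, hd, k, hk, fun k' => (h' k').der⟩

/-! ### Relation between `Der` and `Derives` -/

lemma Der.append_inv {R : Finset (ContextFreeRule T N)} {α β : List (Symbol T N)} {w}
    (h : Der R (α ++ β) w) : ∃ u v, w = u ++ v ∧ Der R α u ∧ Der R β v := by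
  induction α generalizing w with
  | nil => exact ⟨[], w, rfl, .nil, h⟩
  | cons x α ih =>
    cases h with
    | term t h =>
      obtain ⟨u, v, rfl, h1, h2⟩ := ih h
      exact ⟨t :: u, v, rfl, .term t h1, h2⟩
    | nt r hr h' h =>
      obtain ⟨u, v, rfl, h1, h2⟩ := ih h
      exact ⟨_ ++ u, v, by simp, .nt r hr h' h1, h2⟩

lemma Der.terminals {R : Finset (ContextFreeRule T N)} (w : List T) :
    Der R (w.map Symbol.terminal) w := by
  induction w with
  | nil => exact .nil
  | cons t w ih => exact .term t ih

lemma Der.of_rewrites {R : Finset (ContextFreeRule T N)} {r} (hr : r ∈ R) {α β}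
    (h : r.Rewrites α β) : ∀ {w}, Der R β w → Der R α w := by
  induction h with
  | head s =>
    intro w hw
    obtain ⟨u, v, rfl, h1, h2⟩ := hw.append_inv
    exact .nt r hr h1 h2
  | cons x _ ih =>
    intro w hw
    cases hw with
    | term t h => exact .term t (ih h)
    | nt r' hr' h' h => exact .nt r' hr' h' (ih h)

lemma Der.of_derives (g : ContextFreeGrammar T) {α} {w : List T}
    (h : g.Derives α (w.map Symbol.terminal)) : Der g.rules α w := by
  induction h using Relation.ReflTransGen.head_induction_on with
  | refl => exact .terminals w
  | head h _ ih =>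
    obtain ⟨r, hr, h⟩ := h
    exact .of_rewrites hr h ih

lemma Der.derives (g : ContextFreeGrammar T) {α} {w : List T}
    (h : Der g.rules α w) : g.Derives α (w.map Symbol.terminal) := by
  induction h with
  | nil => rfl
  | term t _ ih => exact ih.append_left [Symbol.terminal t]
  | @nt α u v r hr _ _ ih1 ih2 =>
    rw [List.map_append]
    have h1 : g.Produces (Symbol.nonterminal r.input :: α) (r.output ++ α) := ⟨r, hr, .head _⟩
    exact h1.single.trans ((ih1.append_right α).trans (ih2.append_left _))


/-! ### Grammars consisting of all sound rules of bounded size -/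

/-- Semantics of a symbol. -/
def sem : Symbol T (ℕ × Language T) → Language T
  | Symbol.terminal t => {[t]}
  | Symbol.nonterminal x => x.2

/-- Weight of a symbol. -/
def wt : Symbol T (ℕ × Language T) → ℕ
  | Symbol.terminal _ => 0
  | Symbol.nonterminal x => x.1 + 1

/-- Allowed symbols. -/
def syms (Q : Set (ℕ × Language T)) (τ : Set T) : Set (Symbol T (ℕ × Language T)) :=
  Symbol.terminal '' τ ∪ Symbol.nonterminal '' Q

/-- Sound rules of bounded size which do not increase weight. -/
def goodRules (Q : Set (ℕ × Language T)) (τ : Set T) (B : ℕ) :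
    Set (ContextFreeRule T (ℕ × Language T)) :=
  {r | r.input ∈ Q ∧ (r.output.length ≤ B ∧ ∀ s ∈ r.output, s ∈ syms Q τ) ∧
    (r.output.map sem).prod ≤ r.input.2 ∧ (r.output.map wt).sum ≤ r.input.1 + 1}

lemma finite_lists {S : Type} (X : Set S) (hX : X.Finite) (B : ℕ) :
    {l : List S | l.length ≤ B ∧ ∀ s ∈ l, s ∈ X}.Finite := by
  have : Finite X := hX
  refine ((List.finite_length_le X B).image (List.map Subtype.val)).subset ?_
  rintro l ⟨hl, h⟩
  refine ⟨l.attach.map (fun s => ⟨s.1, h s.1 s.2⟩), by simpa using hl, ?_⟩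
  simp

lemma finite_goodRules {Q : Set (ℕ × Language T)} (hQ : Q.Finite) {τ : Set T} (hτ : τ.Finite)
    (B : ℕ) : (goodRules Q τ B).Finite := by
  have hX : (syms Q τ).Finite := (hτ.image _).union (hQ.image _)
  refine ((hQ.prod (finite_lists _ hX B)).image (fun x => ⟨x.1, x.2⟩)).subset ?_
  rintro r ⟨h1, h2, -⟩
  exact ⟨(r.input, r.output), ⟨h1, h2⟩, rfl⟩

/-- The grammar of all good rules. -/
noncomputable def semG (Q : Set (ℕ × Language T)) (hQ : Q.Finite) (τ : Set T) (hτ : τ.Finite)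
    (B : ℕ) (x : ℕ × Language T) : ContextFreeGrammar T where
  NT := ℕ × Language T
  initial := x
  rules := (finite_goodRules hQ hτ B).toFinset

/-- One step with good rules. -/
def Step (Q : Set (ℕ × Language T)) (τ : Set T) (B : ℕ)
    (u v : List (Symbol T (ℕ × Language T))) : Prop :=
  ∃ r ∈ goodRules Q τ B, r.Rewrites u v

/-- Many steps with good rules. -/
abbrev Steps (Q : Set (ℕ × Language T)) (τ : Set T) (B : ℕ) :
    List (Symbol T (ℕ × Language T)) → List (Symbol T (ℕ × Language T)) → Prop :=
  Relation.ReflTransGen (Step Q τ B)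

lemma semG_derives_iff (Q : Set (ℕ × Language T)) (hQ : Q.Finite) (τ : Set T) (hτ : τ.Finite)
    (B : ℕ) (x : ℕ × Language T) (u v : List (Symbol T (ℕ × Language T))) :
    (semG Q hQ τ hτ B x).Derives u v ↔ Steps Q τ B u v := by
  have : (semG Q hQ τ hτ B x).Produces = Step Q τ B := by
    funext u v
    apply propext
    constructor
    · rintro ⟨r, hr, h⟩
      exact ⟨r, (finite_goodRules hQ hτ B).mem_toFinset.1 hr, h⟩
    · rintro ⟨r, hr, h⟩
      exact ⟨r, (finite_goodRules hQ hτ B).mem_toFinset.2 hr, h⟩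
  unfold ContextFreeGrammar.Derives
  rw [this]
  exact Iff.rfl

lemma Steps.append_left {Q : Set (ℕ × Language T)} {τ : Set T} {B : ℕ}
    {u v : List (Symbol T (ℕ × Language T))} (h : Steps Q τ B u v) (p) :
    Steps Q τ B (p ++ u) (p ++ v) := by
  induction h with
  | refl => exact .refl
  | tail _ h ih =>
    obtain ⟨r, hr, h⟩ := h
    exact ih.tail ⟨r, hr, h.append_left p⟩

lemma Steps.append_right {Q : Set (ℕ × Language T)} {τ : Set T} {B : ℕ}
    {u v : List (Symbol T (ℕ × Language T))} (h : Steps Q τ B u v) (p) :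
    Steps Q τ B (u ++ p) (v ++ p) := by
  induction h with
  | refl => exact .refl
  | tail _ h ih =>
    obtain ⟨r, hr, h⟩ := h
    exact ih.tail ⟨r, hr, h.append_right p⟩

lemma prod_terminals (w : List T) :
    ((w.map Symbol.terminal).map (sem (T := T))).prod = ({w} : Set (List T)) := by
  induction w with
  | nil => rfl
  | cons t w ih =>
    rw [List.map_cons, List.map_cons, List.prod_cons, ih]
    ext x
    change x ∈ (({[t]} : Language T) * ({w} : Language T)) ↔ _
    rw [Language.mem_mul]
    constructor
    · rintro ⟨a, rfl, b, rfl, rfl⟩; rfl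
    · rintro rfl; exact ⟨[t], rfl, w, rfl, rfl⟩

section
variable {Q : Set (ℕ × Language T)} {τ : Set T} {B : ℕ}

lemma semG_sound {α β : List (Symbol T (ℕ × Language T))}
    (h : Steps Q τ B α β) :
    (β.map sem).prod ≤ (α.map sem).prod ∧ (β.map wt).sum ≤ (α.map wt).sum := by
  induction h with
  | refl => exact ⟨le_rfl, le_rfl⟩
  | tail _ h ih =>
    obtain ⟨r, hr, h⟩ := h
    obtain ⟨p, q, rfl, rfl⟩ := h.exists_parts
    obtain ⟨-, -, h1, h2⟩ := hr
    constructor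
    · refine le_trans ?_ ih.1
      simp only [List.map_append, List.prod_append, List.map_cons, List.map_nil, List.prod_cons,
        List.prod_nil, mul_one]
      exact mul_le_mul' (mul_le_mul' le_rfl h1) le_rfl
    · refine le_trans ?_ ih.2
      simp only [List.map_append, List.sum_append, List.map_cons, List.map_nil, List.sum_cons,
        List.sum_nil, wt]
      omega

lemma count_le_wt (α : List (Symbol T (ℕ × Language T))) :
    α.countP Symbol.isNT ≤ (α.map wt).sum := by
  induction α with
  | nil => simp
  | cons s α ih =>
    cases s with
    | terminal t => simpa [Symbol.isNT, wt] using ih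
    | nonterminal y => rw [List.countP_cons_of_pos rfl]; simp [wt]; omega

lemma semG_produces {y : ℕ × Language T} {out : List (Symbol T (ℕ × Language T))}
    (h : (⟨y, out⟩ : ContextFreeRule T (ℕ × Language T)) ∈ goodRules Q τ B) :
    Steps Q τ B [Symbol.nonterminal y] out := by
  refine Relation.ReflTransGen.single ⟨⟨y, out⟩, h, ?_⟩
  exact ContextFreeRule.Rewrites.input_output (r := ⟨y, out⟩)

/-- The grammar derives `w` from the nonterminal `y`. -/
def Gen (Q : Set (ℕ × Language T)) (τ : Set T) (B : ℕ) (y : ℕ × Language T) (w : List T) : Prop :=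
  Steps Q τ B [Symbol.nonterminal y] (w.map Symbol.terminal)

lemma gen_nil {y : ℕ × Language T} (hy : y ∈ Q) (h : [] ∈ y.2) :
    Gen Q τ B y [] := by
  refine semG_produces ⟨hy, ⟨by simp, by simp⟩, ?_, by simp⟩
  intro w hw
  have : w = [] := (Language.mem_one w).1 hw
  rw [this]; exact h

lemma gen_lin {y z : ℕ × Language T} (p q : List T) (hy : y ∈ Q) (hz : z ∈ Q) (hyz : z.1 ≤ y.1)
    (hp : ∀ t ∈ p, t ∈ τ) (hq : ∀ t ∈ q, t ∈ τ) (hB : p.length + q.length + 1 ≤ B)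
    (h : ∀ u ∈ z.2, p ++ u ++ q ∈ y.2) {w : List T} (hw : Gen Q τ B z w) :
    Gen Q τ B y (p ++ w ++ q) := by
  have key : Steps Q τ B [Symbol.nonterminal y]
      (p.map Symbol.terminal ++ [Symbol.nonterminal z] ++ q.map Symbol.terminal) := by
    refine semG_produces ⟨hy, ⟨by simp; omega, ?_⟩, ?_, ?_⟩
    · intro s hs
      simp only [List.mem_append, List.mem_map, List.mem_singleton] at hs
      rcases hs with (⟨t, ht, rfl⟩ | rfl) | ⟨t, ht, rfl⟩
      · exact .inl ⟨t, hp t ht, rfl⟩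
      · exact .inr ⟨z, hz, rfl⟩
      · exact .inl ⟨t, hq t ht, rfl⟩
    · intro w hw
      rw [List.map_append, List.map_append, List.prod_append, List.prod_append, prod_terminals,
        prod_terminals] at hw
      obtain ⟨a, ha, b, rfl, rfl⟩ := Language.mem_mul.1 hw
      obtain ⟨c, rfl, d, hd, rfl⟩ := Language.mem_mul.1 ha
      exact h d (by simpa [sem] using hd)
    · have h0 : ∀ p : List T, ((p.map Symbol.terminal).map (wt (T := T))).sum = 0 := by
        intro p; induction p with
        | nil => rfl
        | cons t p ih => simpa [wt] using ih
      rw [List.map_append, List.map_append, List.sum_append, List.sum_append, h0, h0]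
      simpa [wt] using hyz
  unfold Gen
  rw [List.map_append, List.map_append]
  exact key.trans (Steps.append_right (Steps.append_left hw _) _)

lemma gen_split {y z z' : ℕ × Language T} (hy : y ∈ Q) (hz : z ∈ Q) (hz' : z' ∈ Q)
    (hyz : z.1 + 1 + z'.1 ≤ y.1) (hB : 2 ≤ B)
    (h : ∀ u ∈ z.2, ∀ v ∈ z'.2, u ++ v ∈ y.2) {w w' : List T} (hw : Gen Q τ B z w)
    (hw' : Gen Q τ B z' w') :
    Gen Q τ B y (w ++ w') := by
  have key : Steps Q τ B [Symbol.nonterminal y]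
      ([Symbol.nonterminal z] ++ [Symbol.nonterminal z']) := by
    refine semG_produces ⟨hy, ⟨by simpa using hB, ?_⟩, ?_, ?_⟩
    · intro s hs
      simp only [List.mem_append, List.mem_singleton] at hs
      rcases hs with rfl | rfl
      · exact .inr ⟨z, hz, rfl⟩
      · exact .inr ⟨z', hz', rfl⟩
    · intro w hw
      rw [List.map_append, List.prod_append] at hw
      obtain ⟨a, ha, b, hb, rfl⟩ := Language.mem_mul.1 hw
      exact h a (by simpa [sem] using ha) b (by simpa [sem] using hb)
    · simp [wt]; omega
  unfold Gen
  rw [List.map_append]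
  exact key.trans ((Steps.append_right hw _).trans (Steps.append_left hw' _))

end

/-! ### Blocks -/

/-- Words in `a_i^* ⋯ a_j^*`. -/
def Block {m : ℕ} (a : Fin m → T) (i j : Fin m) (w : List T) : Prop :=
  ∃ l : List (Fin m), l.Pairwise (· ≤ ·) ∧ (∀ x ∈ l, i ≤ x ∧ x ≤ j) ∧ w = l.map a

section
variable {m : ℕ} {a : Fin m → T}

lemma Block.append {i k j : Fin m} (hik : i ≤ k) (hkj : k ≤ j) {u v : List T}
    (hu : Block a i k u) (hv : Block a k j v) : Block a i j (u ++ v) := by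
  obtain ⟨l, h1, h2, rfl⟩ := hu
  obtain ⟨l', h1', h2', rfl⟩ := hv
  refine ⟨l ++ l', ?_, ?_, by simp⟩
  · rw [List.pairwise_append]
    exact ⟨h1, h1', fun x hx y hy => (h2 x hx).2.trans (h2' y hy).1⟩
  · intro x hx
    rcases List.mem_append.1 hx with hx | hx
    · exact ⟨(h2 x hx).1, (h2 x hx).2.trans hkj⟩
    · exact ⟨hik.trans (h2' x hx).1, (h2' x hx).2⟩

lemma Block.split {i j : Fin m} (hij : i ≤ j) {u v : List T} (h : Block a i j (u ++ v)) :
    ∃ k, i ≤ k ∧ k ≤ j ∧ Block a i k u ∧ Block a k j v := by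
  obtain ⟨l, h1, h2, h3⟩ := h
  obtain ⟨l1, l2, rfl, rfl, rfl⟩ := List.append_eq_map_iff.1 h3
  rw [List.pairwise_append] at h1
  obtain ⟨p1, p2, p3⟩ := h1
  cases l2 with
  | nil =>
    exact ⟨j, hij, le_rfl, ⟨l1, p1, fun x hx => h2 x (by simp [hx]), rfl⟩,
      ⟨[], by simp, by simp, rfl⟩⟩
  | cons k l2 =>
    have hk := h2 k (by simp)
    refine ⟨k, hk.1, hk.2, ⟨l1, p1, fun x hx => ⟨(h2 x (by simp [hx])).1, p3 x hx k (by simp)⟩, rfl⟩,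
      ⟨k :: l2, p2, fun x hx => ⟨?_, (h2 x (List.mem_append_right _ hx)).2⟩, rfl⟩⟩
    rcases List.mem_cons.1 hx with rfl | hx
    · exact le_rfl
    · exact (List.pairwise_cons.1 p2).1 x hx

lemma Block.replicate (i : Fin m) (n : ℕ) : Block a i i (List.replicate n (a i)) :=
  ⟨List.replicate n i, by simp [List.pairwise_replicate], by
    intro x hx; rw [List.eq_of_mem_replicate hx]; simp, by simp⟩

lemma Block.eq_replicate {i : Fin m} {w : List T} (h : Block a i i w) :
    ∃ n, w = List.replicate n (a i) := by
  obtain ⟨l, -, h, rfl⟩ := h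
  refine ⟨l.length, ?_⟩
  rw [← List.map_replicate]
  congr 1
  exact List.eq_replicate_iff.2 ⟨rfl, fun x hx => le_antisymm (h x hx).2 (h x hx).1⟩

lemma Block.nil (i j : Fin m) : Block a i j [] := ⟨[], by simp, by simp, rfl⟩

lemma Block.of_letterBounded {w : List T} (h : w ∈ letterBounded a) (i j : Fin m)
    (hi : ∀ x, i ≤ x) (hj : ∀ x, x ≤ j) : Block a i j w := by
  obtain ⟨k, rfl⟩ := h
  refine ⟨(List.ofFn fun i : Fin m => List.replicate (k i) i).flatten, ?_, 
    fun x _ => ⟨hi x, hj x⟩, ?_⟩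
  · rw [List.pairwise_flatten]
    constructor
    · intro l hl
      obtain ⟨i, rfl⟩ := List.mem_ofFn.1 hl
      simp [List.pairwise_replicate]
    · rw [List.pairwise_ofFn]
      intro i j hij x hx y hy
      rw [List.eq_of_mem_replicate hx, List.eq_of_mem_replicate hy]
      exact hij.le
  · rw [List.map_flatten, List.map_ofFn]
    congr 2
    ext i : 1
    simp

/-! ### The nonterminals -/

/-- Core nonterminal. -/
def nN (a : Fin m → T) (R : Finset (ContextFreeRule T N)) (i j : Fin m) (α : List (Symbol T N)) :
    ℕ × Language T :=
  (j.val - i.val - 1, {w | Der R α w ∧ Block a i j w})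

/-- Left pumping nonterminal. -/
def nL (a : Fin m → T) (R : Finset (ContextFreeRule T N)) (i j : Fin m) (α : List (Symbol T N))
    (d : ℕ) : ℕ × Language T :=
  (j.val - i.val - 1, {w | ∃ k u, w = List.replicate (k * d) (a i) ++ u ∧ Der R α u ∧ Block a i j u})

/-- Right pumping nonterminal. -/
def nR (a : Fin m → T) (R : Finset (ContextFreeRule T N)) (i j : Fin m) (α : List (Symbol T N))
    (d : ℕ) : ℕ × Language T :=
  (j.val - i.val - 1, {w | ∃ k u, w = u ++ List.replicate (k * d) (a j) ∧ Der R α u ∧ Block a i j u})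

/-- All nonterminals used. -/
def nQ (a : Fin m → T) (R : Finset (ContextFreeRule T N)) (F : Set (List (Symbol T N))) (B : ℕ) :
    Set (ℕ × Language T) :=
  {y | ∃ i j, ∃ α ∈ F, ∃ d ≤ B, y = nN a R i j α ∨ y = nL a R i j α d ∨ y = nR a R i j α d}

lemma finite_nQ (a : Fin m → T) (R : Finset (ContextFreeRule T N)) {F : Set (List (Symbol T N))}
    (hF : F.Finite) (B : ℕ) : (nQ a R F B).Finite := by
  have h : ((Set.univ : Set (Fin m × Fin m)) ×ˢ F ×ˢ Set.Iic B).Finite :=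
    Set.finite_univ.prod (hF.prod (Set.finite_Iic B))
  refine (((h.image fun x => nN a R x.1.1 x.1.2 x.2.1).union
    (h.image fun x => nL a R x.1.1 x.1.2 x.2.1 x.2.2)).union
    (h.image fun x => nR a R x.1.1 x.1.2 x.2.1 x.2.2)).subset ?_
  rintro y ⟨i, j, α, hα, d, hd, rfl | rfl | rfl⟩
  · exact .inl (.inl ⟨((i, j), α, d), ⟨trivial, hα, hd⟩, rfl⟩)
  · exact .inl (.inr ⟨((i, j), α, d), ⟨trivial, hα, hd⟩, rfl⟩)
  · exact .inr ⟨((i, j), α, d), ⟨trivial, hα, hd⟩, rfl⟩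

section
variable {R : Finset (ContextFreeRule T N)} {F : Set (List (Symbol T N))} {B : ℕ}

lemma gen_nR {i j : Fin m} {α} (hα : α ∈ F) {d : ℕ} (hd : d ≤ B) {w : List T}
    (h : Gen (nQ a R F B) (Set.range a) (B + 2) (nN a R i j α) w) (k : ℕ) :
    Gen (nQ a R F B) (Set.range a) (B + 2) (nR a R i j α d)
      (w ++ List.replicate (k * d) (a j)) := by
  have hmem : nR a R i j α d ∈ nQ a R F B := ⟨i, j, α, hα, d, hd, by simp⟩
  induction k with
  | zero =>
    have := gen_lin (y := nR a R i j α d) (z := nN a R i j α) (B := B + 2) (τ := Set.range a) [] [] hmem ⟨i, j, α, hα, d, hd, by simp⟩ le_rfl (by simp)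
      (by simp) (by simp) (fun u hu => ⟨0, u, by simp, hu⟩) h
    simpa using this
  | succ k ih =>
    have := gen_lin (y := nR a R i j α d) [] (List.replicate d (a j)) hmem hmem le_rfl (by simp)
      (by intro t ht; exact ⟨j, (List.eq_of_mem_replicate ht).symm⟩) (by simp; omega)
      (by
        rintro u ⟨k, u, rfl, h⟩
        exact ⟨k + 1, u, by rw [add_mul, one_mul, List.replicate_add]; simp only [List.nil_append, List.append_assoc], h⟩) ih
    rw [add_mul, one_mul, List.replicate_add]
    simpa only [List.nil_append, List.append_assoc] using this

lemma gen_nL {i j : Fin m} {α} (hα : α ∈ F) {d : ℕ} (hd : d ≤ B) {w : List T}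
    (h : Gen (nQ a R F B) (Set.range a) (B + 2) (nN a R i j α) w) (k : ℕ) :
    Gen (nQ a R F B) (Set.range a) (B + 2) (nL a R i j α d)
      (List.replicate (k * d) (a i) ++ w) := by
  have hmem : nL a R i j α d ∈ nQ a R F B := ⟨i, j, α, hα, d, hd, by simp⟩
  induction k with
  | zero =>
    have := gen_lin (y := nL a R i j α d) (z := nN a R i j α) (B := B + 2) (τ := Set.range a) [] [] hmem ⟨i, j, α, hα, d, hd, by simp⟩ le_rfl (by simp)
      (by simp) (by simp) (fun u hu => ⟨0, u, by simp, hu⟩) h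
    simpa using this
  | succ k ih =>
    have := gen_lin (y := nL a R i j α d) (List.replicate d (a i)) [] hmem hmem le_rfl
      (by intro t ht; exact ⟨i, (List.eq_of_mem_replicate ht).symm⟩) (by simp) (by simp; omega)
      (by
        rintro u ⟨k, u, rfl, h⟩
        exact ⟨1 + k, u, by rw [add_mul, one_mul, List.replicate_add]; simp only [List.append_nil, List.append_assoc], h⟩) ih
    rw [add_comm k 1, add_mul, one_mul, List.replicate_add]
    simpa only [List.append_nil, List.append_assoc] using this

lemma complete (hF0 : [] ∈ F) (hFs : ∀ s α, s :: α ∈ F → α ∈ F) (hFr : ∀ r ∈ R, r.output ∈ F)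
    (hB : ∀ i, ∀ α ∈ F, ∀ n, Der R α (List.replicate n (a i)) → ∃ f ≤ B, ∃ d ≤ B, ∃ k,
      n = f + k * d ∧ ∀ k', Der R α (List.replicate (f + k' * d) (a i)))
    {α w} (h : Der R α w) : α ∈ F → ∀ i j : Fin m, i < j → Block a i j w →
      Gen (nQ a R F B) (Set.range a) (B + 2) (nN a R i j α) w := by
  have hN : ∀ {i j α}, α ∈ F → nN a R i j α ∈ nQ a R F B :=
    fun {i j α} hα => ⟨i, j, α, hα, 0, by omega, by simp⟩
  have hL : ∀ {i j α d}, α ∈ F → d ≤ B → nL a R i j α d ∈ nQ a R F B :=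
    fun {i j α d} hα hd => ⟨i, j, α, hα, d, hd, by simp⟩
  have hR : ∀ {i j α d}, α ∈ F → d ≤ B → nR a R i j α d ∈ nQ a R F B :=
    fun {i j α d} hα hd => ⟨i, j, α, hα, d, hd, by simp⟩
  have hrep : ∀ (i : Fin m) (f : ℕ), ∀ t ∈ List.replicate f (a i), t ∈ Set.range a :=
    fun i f t ht => ⟨i, (List.eq_of_mem_replicate ht).symm⟩
  have h0 : ∀ i j : Fin m, i < j →
      Gen (nQ a R F B) (Set.range a) (B + 2) (nN a R i j []) [] :=
    fun i j hij => gen_nil (hN hF0) ⟨.nil, Block.nil i j⟩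
  induction h with
  | nil => intro _ i j hij _; exact h0 i j hij
  | @term α w t hd ih =>
    intro hα i j hij hw
    obtain ⟨k, hik, hkj, hw1, hw2⟩ := Block.split (u := [t]) hij.le hw
    obtain ⟨l, hl1, hl2, hl3⟩ := hw
    cases l with
    | nil => simp at hl3
    | cons k l =>
      simp only [List.map_cons, List.cons.injEq] at hl3
      obtain ⟨rfl, rfl⟩ := hl3
      have hk := hl2 k (by simp)
      have hlk : ∀ y ∈ l, k ≤ y ∧ y ≤ j := fun y hy =>
        ⟨(List.pairwise_cons.1 hl1).1 y hy, (hl2 y (by simp [hy])).2⟩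
      have hb : Block a k j (l.map a) := ⟨l, (List.pairwise_cons.1 hl1).2, hlk, rfl⟩
      rcases hk.2.lt_or_eq with hkj | rfl
      · have := gen_lin (y := nN a R i j (Symbol.terminal (a k) :: α)) (z := nN a R k j α) [a k] []
          (hN hα) (hN (hFs _ _ hα)) (by
            have := hk.1
            simp only [nN]; omega) (by simp) (by simp) (by simp)
          (by
            rintro u ⟨hu1, hu2⟩
            rw [List.append_nil]
            refine ⟨.term _ hu1, Block.append hk.1 hk.2 ?_ hu2⟩
            exact ⟨[k], by simp, by simp [hk.1], rfl⟩) (ih (hFs _ _ hα) k j hkj hb)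
        simpa using this
      · obtain ⟨n, hn⟩ := hb.eq_replicate
        rw [hn] at hd ⊢
        have hd' := Der.term (a k) hd
        rw [← List.replicate_succ] at hd' ⊢
        obtain ⟨f, hf, d, hdB, c, hc, hall⟩ := hB k _ hα _ hd'
        have := gen_lin (y := nN a R i k (Symbol.terminal (a k) :: α)) (z := nR a R i k [] d) []
          (List.replicate f (a k)) (hN hα) (hR hF0 hdB) le_rfl (by simp) (hrep k f)
          (by simp; omega)
          (by
            rintro u ⟨c, u, rfl, hu, -⟩
            cases hu
            have := hall c
            rw [add_comm, List.replicate_add] at this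
            refine ⟨by simpa using this, ?_⟩
            simp only [List.nil_append, ← List.replicate_add]
            exact Block.append (u := []) hij.le le_rfl (Block.nil _ _) (Block.replicate _ _))
          (gen_nR hF0 hdB (h0 i k hij) c)
        rw [hc, add_comm f, List.replicate_add]
        simpa using this
  | @nt α u v r hr hd1 hd2 ih1 ih2 =>
    intro hα i j hij hw
    have hα' := hFs _ _ hα
    have hro := hFr r hr
    obtain ⟨k, hik, hkj, hw1, hw2⟩ := Block.split hij.le hw
    rcases hik.lt_or_eq with hik | rfl
    · rcases hkj.lt_or_eq with hkj | rfl
      · refine gen_split (hN hα) (hN hro) (hN hα') ?_ (by omega) ?_ (ih1 hro i k hik hw1)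
          (ih2 hα' k j hkj hw2)
        · simp only [nN]; omega
        · rintro u ⟨hu, hu'⟩ v ⟨hv, hv'⟩
          exact ⟨.nt r hr hu hv, hu'.append hik.le hkj.le hv'⟩
      · obtain ⟨n, rfl⟩ := hw2.eq_replicate
        obtain ⟨f, hf, d, hdB, c, hc, hall⟩ := hB k _ hα' _ hd2
        have := gen_lin (y := nN a R i k (Symbol.nonterminal r.input :: α))
          (z := nR a R i k r.output d) []
          (List.replicate f (a k)) (hN hα) (hR hro hdB) le_rfl (by simp) (hrep k f)
          (by simp; omega)
          (by
            rintro u ⟨c, u, rfl, hu, hu'⟩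
            have := hall c
            rw [add_comm] at this
            simp only [List.nil_append, List.append_assoc, ← List.replicate_add]
            exact ⟨.nt r hr hu this, hu'.append hij.le le_rfl (Block.replicate _ _)⟩)
          (gen_nR hro hdB (ih1 hro i k hij hw1) c)
        rw [hc, add_comm f, List.replicate_add]
        simpa using this
    · obtain ⟨n, rfl⟩ := hw1.eq_replicate
      obtain ⟨f, hf, d, hdB, c, hc, hall⟩ := hB i _ hro _ hd1
      have := gen_lin (y := nN a R i j (Symbol.nonterminal r.input :: α))
        (z := nL a R i j α d) (List.replicate f (a i)) [] (hN hα) (hL hα' hdB) le_rfl (hrep i f)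
        (by simp) (by simp; omega)
        (by
          rintro u ⟨c, u, rfl, hu, hu'⟩
          simp only [List.append_nil, ← List.append_assoc, ← List.replicate_add]
          exact ⟨.nt r hr (hall c) hu, (Block.replicate _ _).append le_rfl hij.le hu'⟩)
        (gen_nL hα' hdB (ih2 hα' i j hij hw2) c)
      rw [hc, List.replicate_add]
      simpa only [List.append_nil, List.append_assoc] using this

end
end
end Ultra

open Ultra in
theorem stmt_11 {T : Type} {m : ℕ} (hm : 2 ≤ m) (a : Fin m → T) (ha : Function.Injective a)
    (L : Language T) (hL : L.IsContextFree) (hsub : L ≤ letterBounded a) (hε : [] ∉ L) :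
    ∃ g : ContextFreeGrammar T,
      g.language = L ∧
      ∀ α : List (Symbol T g.NT),
        g.Derives [Symbol.nonterminal g.initial] α → α.countP Symbol.isNT ≤ m - 1 := by
  obtain ⟨g, rfl⟩ := hL
  let F : Set (List (Symbol T g.NT)) :=
    {α | α <:+ [Symbol.nonterminal g.initial]} ∪ ⋃ r ∈ g.rules, {α | α <:+ r.output}
  have hsuf : ∀ l : List (Symbol T g.NT), {α | α <:+ l}.Finite := fun l =>
    l.tails.finite_toSet.subset (fun α h => by simpa using h)
  have hF : F.Finite := (hsuf _).union (g.rules.finite_toSet.biUnion fun r _ => hsuf _)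
  have hF0 : [] ∈ F := .inl (by simp)
  have hFs : ∀ s α, s :: α ∈ F → α ∈ F := by
    rintro s α (h | h)
    · exact .inl ((List.suffix_cons s α).trans h)
    · simp only [Set.mem_iUnion] at h
      obtain ⟨r, hr, h⟩ := h
      refine .inr ?_
      simp only [Set.mem_iUnion]
      exact ⟨r, hr, (List.suffix_cons s α).trans h⟩
  have hFr : ∀ r ∈ g.rules, r.output ∈ F := by
    intro r hr
    refine .inr ?_
    simp only [Set.mem_iUnion]
    exact ⟨r, hr, List.suffix_rfl⟩
  have hFi : [Symbol.nonterminal g.initial] ∈ F := .inl List.suffix_rfl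
  obtain ⟨B, hB⟩ : ∃ B, ∀ i, ∀ α ∈ F, ∀ n, Der g.rules α (List.replicate n (a i)) →
      ∃ f ≤ B, ∃ d ≤ B, ∃ k,
      n = f + k * d ∧ ∀ k', Der g.rules α (List.replicate (f + k' * d) (a i)) := by
    choose b hb using fun (i : Fin m) α => unary_bound (a i) g.rules α
    have hfin : ((Set.univ : Set (Fin m)) ×ˢ F).Finite := Set.finite_univ.prod hF
    obtain ⟨B, hB⟩ := (hfin.image (fun x => b x.1 x.2)).bddAbove
    refine ⟨B, fun i α hα n hn => ?_⟩
    have hle : b i α ≤ B := hB ⟨(i, α), ⟨trivial, hα⟩, rfl⟩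
    obtain ⟨f, hf, d, hd, h⟩ := hb i α n hn
    exact ⟨f, hf.trans hle, d, hd.trans hle, h⟩
  let i0 : Fin m := ⟨0, by omega⟩
  let j0 : Fin m := ⟨m - 1, by omega⟩
  let x := nN a g.rules i0 j0 [Symbol.nonterminal g.initial]
  refine ⟨semG (nQ a g.rules F B) (finite_nQ a g.rules hF B) (Set.range a) (Set.finite_range a)
    (B + 2) x, ?_, ?_⟩
  · ext w
    constructor
    · intro h
      have h0 : Steps (nQ a g.rules F B) (Set.range a) (B + 2) [Symbol.nonterminal x]
        (w.map Symbol.terminal) := (semG_derives_iff ..).1 h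
      have h1 := (semG_sound h0).1
      rw [prod_terminals] at h1
      have h2 : w ∈ ([Symbol.nonterminal x].map sem).prod :=
        h1 (show w ∈ ({w} : Set (List T)) from rfl)
      have h3 : w ∈ x.2 := by simpa [sem] using h2
      exact h3.1.derives
    · intro h
      have hb : Block a i0 j0 w := Block.of_letterBounded (hsub h) _ _
        (fun y => Nat.zero_le _) (fun y => by
          have := y.2
          change y.val ≤ m - 1
          omega)
      exact (semG_derives_iff ..).2 <| complete hF0 hFs hFr hB (Der.of_derives g h) hFi i0 j0
        (show 0 < m - 1 by omega) hb
  · intro α h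
    have h0 : Steps (nQ a g.rules F B) (Set.range a) (B + 2) [Symbol.nonterminal x] α :=
      (semG_derives_iff ..).1 h
    refine (count_le_wt α).trans ((semG_sound h0).2.trans ?_)
    simp [wt, x, nN, i0, j0]
    omega
end
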